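/- Scaling law with periodic boundary conditions (Theorem 6.1): (i) there is a constant C > 0 such that for every ε ∈ (0,1/2) and δ ∈ (0,1) there exists u ∈ S₀^{per}(ε) with E_{ε,δ}(u) ≤ C · min{δ², ε·δ^{3/2}·(|ln(ε/δ^{1/2})| + 1), ε·δ^{1/2}}; (ii) there exist δ̄ ∈ (0,1) and c > 0 such that for all ε ∈ (0,1/2) and δ ∈ [δ̄,1) every u ∈ S₀^{per}(ε) satisfies E_{ε,δ}(u) ≥ c·ε·δ^{1/2}, and for all δ ∈ (0,δ̄) and ε ∈ [δ,1/2) every u ∈ S₀^{per}(ε) satisfies E_{ε,δ}(u) ≥ c · min{δ², ε·δ^{3/2}·(|ln(ε/δ^{1/2})| + 1)}. -/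

import Mathlib

open Real Finset

noncomputable section

/-- `Kof ε` is the largest integer `K` with `K * ε < 1`. -/
def Kof (ε : ℝ) : ℤ := ⌈1 / ε⌉ - 1

/-- Index set of the lattice `[0,1)² ∩ εℤ²`. -/
def Idx (ε : ℝ) : Finset (ℤ × ℤ) :=
  Finset.Icc 0 (Kof ε) ×ˢ Finset.Icc 0 (Kof ε)

/-- Indices `(i,j)` with `i + 2 ≤ K`. -/
def IdxH (ε : ℝ) : Finset (ℤ × ℤ) :=
  Finset.Icc 0 (Kof ε - 2) ×ˢ Finset.Icc 0 (Kof ε)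

/-- Indices `(i,j)` with `j + 2 ≤ K`. -/
def IdxV (ε : ℝ) : Finset (ℤ × ℤ) :=
  Finset.Icc 0 (Kof ε) ×ˢ Finset.Icc 0 (Kof ε - 2)

/-- Squared Euclidean norm on `ℝ × ℝ`. -/
def sqnorm (v : ℝ × ℝ) : ℝ := v.1 ^ 2 + v.2 ^ 2

/-- Euclidean scalar product on `ℝ × ℝ`. -/
def dotp (a b : ℝ × ℝ) : ℝ := a.1 * b.1 + a.2 * b.2

/-- Cross product `a × b = a₁b₂ − a₂b₁`. -/
def crossp (a b : ℝ × ℝ) : ℝ := a.1 * b.2 - a.2 * b.1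

/-- sign with convention `sign 0 = -1`. -/
def sgn (x : ℝ) : ℝ := if 0 < x then 1 else -1

/-- A spin field: unit vectors on the lattice. -/
def IsSpin (ε : ℝ) (u : ℤ × ℤ → ℝ × ℝ) : Prop :=
  ∀ p ∈ Idx ε, sqnorm (u p) = 1

/-- Spin fields with ferromagnetic Dirichlet boundary condition on the left boundary. -/
def InS0 (ε : ℝ) (u : ℤ × ℤ → ℝ × ℝ) : Prop :=
  IsSpin ε u ∧ ∀ j ∈ Finset.Icc (0 : ℤ) (Kof ε), u (0, j) = (0, 1)

/-- Horizontal part of the energy. -/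
def Ehor (ε δ : ℝ) (u : ℤ × ℤ → ℝ × ℝ) : ℝ :=
  ε ^ 2 / 2 * ∑ p ∈ IdxH ε,
    sqnorm (u p - (2 * (1 - δ)) • u (p.1 + 1, p.2) + u (p.1 + 2, p.2))

/-- Vertical part of the energy. -/
def Ever (ε δ : ℝ) (u : ℤ × ℤ → ℝ × ℝ) : ℝ :=
  ε ^ 2 / 2 * ∑ p ∈ IdxV ε,
    sqnorm (u p - (2 * (1 - δ)) • u (p.1, p.2 + 1) + u (p.1, p.2 + 2))

/-- The total energy `E_{ε,δ}`. -/
def E (ε δ : ℝ) (u : ℤ × ℤ → ℝ × ℝ) : ℝ := Ehor ε δ u + Ever ε δ u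

/-- The scaling function `s(ε,δ)`. -/
def sfun (ε δ : ℝ) : ℝ :=
  min (δ ^ 2)
    (min (ε * (δ * Real.sqrt δ) * (|Real.log (ε / Real.sqrt δ)| + 1)) (ε * Real.sqrt δ))

/-- Horizontal angular velocity of a spin field. -/
def thetaH (u : ℤ × ℤ → ℝ × ℝ) (p : ℤ × ℤ) : ℝ :=
  sgn (crossp (u p) (u (p.1 + 1, p.2))) * Real.arccos (dotp (u p) (u (p.1 + 1, p.2)))

/-- Vertical angular velocity of a spin field. -/
def thetaV (u : ℤ × ℤ → ℝ × ℝ) (p : ℤ × ℤ) : ℝ :=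
  sgn (crossp (u p) (u (p.1, p.2 + 1))) * Real.arccos (dotp (u p) (u (p.1, p.2 + 1)))

/-- The function `p` of Lemma 3.1. -/
def pfun (θ₁ θ₂ : ℝ) : ℝ :=
  if θ₁ = θ₂ then 1
  else (Real.sin θ₁ ^ 2 + Real.sin θ₂ ^ 2 - (1 - Real.cos (θ₁ + θ₂))) /
    (2 * (Real.sin (θ₂ / 2) - Real.sin (θ₁ / 2)) ^ 2)

end

/-- The periodic class `S₀^{per}(ε)`. -/
def InS0per (ε : ℝ) (u : ℤ × ℤ → ℝ × ℝ) : Prop :=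
  InS0 ε u ∧ ∀ k ∈ Finset.Icc (0 : ℤ) (Kof ε),
    dotp (u (0, k)) (u (1, k)) = dotp (u (Kof ε - 1, k)) (u (Kof ε, k)) ∧
    dotp (u (k, 0)) (u (k, 1)) = dotp (u (k, Kof ε - 1)) (u (k, Kof ε))

/-!
Three consecutive spins cost no energy exactly when they rotate by a fixed angle `±θ`, where
`θ = arccos (1 - δ) ≈ √(2δ)`; the boundary condition forbids this along the column `i = 0`.

*Upper bound.* The constant field costs about `δ ^ 2`. Interpolating from the boundary value to a
vertical helix over a layer of `1 / √δ` columns creates about `√δ / ε` vortices, of energy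
`O(ε ^ 2)` each, and costs about `ε √δ`. Otherwise the phase of the field is `θ` times a piecewise
affine function of slopes `±1` in both directions, whose zigzag in `y` refines dyadically towards
the boundary; averaging it over windows of width about `1 / √δ` makes its creases cost `O(δ ^ 2)`
per site. At distance `x` from the boundary the creases fill a fraction `1 / (√δ x)` of a column,
so the sum over the columns is `ε δ ^ (3 / 2)` times a harmonic sum, hence logarithmic. The fields
are reflected in the midlines of the square, which makes them periodic.

*Lower bound.* For `δ` bounded below, the column `i = 0` alone has enough energy. For small `δ` and
small energy all neighbouring spins are nearly parallel, so signed angles are curl-free. Let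
`N = 21 i`. If most rows have small energy, then between two rows at vertical distance about `N`
the column `i` rotates by at most about `i √δ`, less than a helix does over the distance `N`, and
this costs it an energy of order `min (N δ ^ 2) (δ √δ)`. Stacking such windows gives an energy of
order `min (δ ^ 2) (δ √δ / i) / ε` in the column, and summing `1 / i` over the columns between
`√(ε / √δ)` and a fixed fraction of the square yields the logarithm.
-/

/-! ### Discrete spin fields and their line energies -/

lemma exists_natCast_eq_Kof {ε : ℝ} (hε : 0 < ε) (hε' : ε < 1 / 2) :
    ∃ k : ℕ, Kof ε = k ∧ 2 ≤ k ∧ k * ε < 1 ∧ 1 ≤ (k + 1) * ε := by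
  have two_lt : (2 : ℝ) < 1 / ε := by rw [lt_div_iff₀ hε]; linarith
  have two_lt_ceil : (2 : ℤ) < ⌈1 / ε⌉ := Int.lt_ceil.2 (by exact_mod_cast two_lt)
  obtain ⟨k, hk⟩ := Int.eq_ofNat_of_zero_le (show 0 ≤ Kof ε by unfold Kof; omega)
  have ceil_eq : (⌈1 / ε⌉ : ℤ) = (k : ℤ) + 1 := by rw [← hk, Kof]; ring
  have ceil_eq_real : ((⌈1 / ε⌉ : ℤ) : ℝ) = k + 1 := by rw [ceil_eq]; push_cast; rfl
  have lt_inv : (k : ℝ) < 1 / ε := by linarith [Int.ceil_lt_add_one (1 / ε)]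
  have inv_le : 1 / ε ≤ (k : ℝ) + 1 := by linarith [Int.le_ceil (1 / ε)]
  exact ⟨k, hk, by omega, (lt_div_iff₀ hε).1 lt_inv, (div_le_iff₀ hε).1 inv_le⟩

/-- The energy density `|a - 2(1-δ)b + c|²` of three consecutive spins `a`, `b`, `c`. -/
noncomputable def stencilEnergy (δ : ℝ) (a b c : ℝ × ℝ) : ℝ :=
  sqnorm (a - (2 * (1 - δ)) • b + c)

/-- The energy of the first `n` stencils along the sequence of spins `w`, used for the rows and the
columns of a field. -/
noncomputable def lineEnergy (δ : ℝ) (n : ℕ) (w : ℕ → ℝ × ℝ) : ℝ :=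
  ∑ l ∈ range n, stencilEnergy δ (w l) (w (l + 1)) (w (l + 2))

lemma stencilEnergy_nonneg (δ : ℝ) (a b c : ℝ × ℝ) : 0 ≤ stencilEnergy δ a b c := by
  unfold stencilEnergy sqnorm; positivity

lemma lineEnergy_nonneg (δ : ℝ) (n : ℕ) (w : ℕ → ℝ × ℝ) : 0 ≤ lineEnergy δ n w :=
  sum_nonneg fun _ _ => stencilEnergy_nonneg ..

lemma stencilEnergy_eq {δ : ℝ} {a b c : ℝ × ℝ} (hb : sqnorm b = 1) :
    stencilEnergy δ a b c =
      (dotp a b + dotp b c - 2 * (1 - δ)) ^ 2 + (crossp b c - crossp a b) ^ 2 := by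
  obtain ⟨a₁, a₂⟩ := a
  obtain ⟨b₁, b₂⟩ := b
  obtain ⟨c₁, c₂⟩ := c
  simp only [stencilEnergy, sqnorm, dotp, crossp, Prod.mk_sub_mk, Prod.smul_mk, Prod.mk_add_mk,
    smul_eq_mul] at *
  linear_combination (4 * (1 - δ) ^ 2 - (a₁ + c₁) ^ 2 - (a₂ + c₂) ^ 2) * hb

lemma stencilEnergy_self {a : ℝ × ℝ} (ha : sqnorm a = 1) (δ : ℝ) :
    stencilEnergy δ a a a = 4 * δ ^ 2 := by
  have dotp_self : dotp a a = 1 := by rw [← ha, dotp, sqnorm]; ring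
  rw [stencilEnergy_eq ha, dotp_self]
  ring

lemma sum_Icc_zero_natCast (n : ℕ) (f : ℤ → ℝ) :
    ∑ i ∈ Icc (0 : ℤ) n, f i = ∑ i ∈ range (n + 1), f i := by
  refine (sum_bij (fun (i : ℕ) _ => (i : ℤ)) ?_ ?_ ?_ fun _ _ => rfl).symm
  · intro i hi
    simp only [mem_range, mem_Icc] at hi ⊢
    omega
  · exact fun _ _ _ _ h => Int.ofNat_inj.1 h
  · intro b hb
    simp only [mem_Icc] at hb
    exact ⟨b.toNat, by simp only [mem_range]; omega, by omega⟩

section Energy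

variable {ε δ : ℝ} {k : ℕ}

lemma Ehor_eq_sum_lineEnergy (hk : Kof ε = k) (hk2 : 2 ≤ k) (u : ℤ × ℤ → ℝ × ℝ) :
    Ehor ε δ u =
      ε ^ 2 / 2 * ∑ j ∈ range (k + 1), lineEnergy δ (k - 1) (fun i => u (i, j)) := by
  have last_start : (k : ℤ) - 2 = ((k - 2 : ℕ) : ℤ) := by omega
  have card_starts : k - 2 + 1 = k - 1 := by omega
  simp only [Ehor, IdxH, sum_product_right, hk, last_start, sum_Icc_zero_natCast, card_starts,
    lineEnergy, stencilEnergy, Nat.cast_add, Nat.cast_one, Nat.cast_ofNat]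

lemma Ever_eq_sum_lineEnergy (hk : Kof ε = k) (hk2 : 2 ≤ k) (u : ℤ × ℤ → ℝ × ℝ) :
    Ever ε δ u =
      ε ^ 2 / 2 * ∑ i ∈ range (k + 1), lineEnergy δ (k - 1) (fun j => u (i, j)) := by
  have last_start : (k : ℤ) - 2 = ((k - 2 : ℕ) : ℤ) := by omega
  have card_starts : k - 2 + 1 = k - 1 := by omega
  simp only [Ever, IdxV, hk, sum_product, last_start, sum_Icc_zero_natCast, card_starts,
    lineEnergy, stencilEnergy, Nat.cast_add, Nat.cast_one, Nat.cast_ofNat]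

end Energy

/-! ### Reflected fields and their energy -/

lemma sum_range_add_one_le {f : ℕ → ℝ} (hf : ∀ i, 0 ≤ f i) (n : ℕ) :
    ∑ i ∈ range n, f (i + 1) ≤ ∑ i ∈ range (n + 2), f i := by
  rw [sum_range_succ, sum_range_succ']
  linarith [hf 0, hf (n + 1)]

lemma lineEnergy_le_sum {δ : ℝ} {n : ℕ} {w : ℤ → ℝ × ℝ} {b : ℕ → ℝ} (hb : ∀ l, 0 ≤ b l)
    (h : ∀ l : ℕ, 0 < l → l ≤ n → stencilEnergy δ (w (l - 1)) (w l) (w (l + 1)) ≤ b l) :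
    lineEnergy δ n (fun l => w l) ≤ ∑ l ∈ range (n + 2), b l := by
  refine (sum_le_sum fun l hl => ?_).trans (sum_range_add_one_le hb n)
  have center := h (l + 1) l.succ_pos (mem_range.1 hl)
  push_cast at center ⊢
  rwa [add_sub_cancel_right, add_assoc] at center

lemma E_le_sum_of_stencilEnergy_le {ε δ : ℝ} {k : ℕ} (hk : Kof ε = k) (hk2 : 2 ≤ k)
    {u : ℤ × ℤ → ℝ × ℝ} {b : ℕ → ℕ → ℝ} (hb : ∀ i j, 0 ≤ b i j)
    (hH : ∀ i j : ℕ, 0 < i → i < k → j ≤ k →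
      stencilEnergy δ (u (i - 1, j)) (u (i, j)) (u (i + 1, j)) ≤ b i j)
    (hV : ∀ i j : ℕ, i ≤ k → 0 < j → j < k →
      stencilEnergy δ (u (i, j - 1)) (u (i, j)) (u (i, j + 1)) ≤ b i j) :
    E ε δ u ≤ ε ^ 2 * ∑ i ∈ range (k + 1), ∑ j ∈ range (k + 1), b i j := by
  have line_card : k + 1 = k - 1 + 2 := by omega
  have rows : ∑ j ∈ range (k + 1), lineEnergy δ (k - 1) (fun i => u (i, j)) ≤
      ∑ i ∈ range (k + 1), ∑ j ∈ range (k + 1), b i j := by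
    rw [sum_comm (s := range (k + 1)) (t := range (k + 1))]
    refine sum_le_sum fun j hj => ?_
    rw [line_card]
    exact lineEnergy_le_sum (w := fun i => u (i, j)) (fun i => hb i j) fun i hi hik =>
      hH i j hi (by omega) (Nat.lt_succ_iff.1 (mem_range.1 hj))
  have columns : ∑ i ∈ range (k + 1), lineEnergy δ (k - 1) (fun j => u (i, j)) ≤
      ∑ i ∈ range (k + 1), ∑ j ∈ range (k + 1), b i j := by
    refine sum_le_sum fun i hi => ?_
    rw [line_card]
    exact lineEnergy_le_sum (w := fun j => u (i, j)) (hb i) fun j hj hjk =>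
      hV i j (Nat.lt_succ_iff.1 (mem_range.1 hi)) hj (by omega)
  rw [E, Ehor_eq_sum_lineEnergy hk hk2, Ever_eq_sum_lineEnergy hk hk2]
  have prefactor_nonneg : 0 ≤ ε ^ 2 / 2 := by positivity
  linarith [mul_le_mul_of_nonneg_left rows prefactor_nonneg,
    mul_le_mul_of_nonneg_left columns prefactor_nonneg]

lemma dotp_comm (a b : ℝ × ℝ) : dotp a b = dotp b a := by
  unfold dotp; ring

lemma InS0.inS0per_of_reflect {ε : ℝ} {u : ℤ × ℤ → ℝ × ℝ} (hu : InS0 ε u)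
    (reflect_fst : ∀ i j, u (Kof ε - i, j) = u (i, j))
    (reflect_snd : ∀ i j, u (i, Kof ε - j) = u (i, j)) : InS0per ε u := by
  refine ⟨hu, fun l _ => ⟨?_, ?_⟩⟩
  · rw [reflect_fst, ← reflect_fst 0 l, sub_zero, dotp_comm]
  · rw [reflect_snd, ← reflect_snd l 0, sub_zero, dotp_comm]

/-- The reflection `i ↦ min i (k - i)`, which folds `[0, k]` onto its left half. -/
def foldHalf (k i : ℤ) : ℤ := min i (k - i)

lemma foldHalf_sub (k i : ℤ) : foldHalf k (k - i) = foldHalf k i := by unfold foldHalf; omega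

lemma foldHalf_natCast {k i : ℕ} (hi : i ≤ k) : foldHalf k i = (min i (k - i) : ℕ) := by
  unfold foldHalf; omega

lemma abs_foldHalf_sub_one_sub_le (k i : ℤ) : |foldHalf k (i - 1) - foldHalf k i| ≤ 1 := by
  simp only [foldHalf, abs_le]; omega

lemma abs_foldHalf_add_one_sub_le (k i : ℤ) : |foldHalf k (i + 1) - foldHalf k i| ≤ 1 := by
  simp only [foldHalf, abs_le]; omega

lemma foldHalf_neighbours (k i : ℤ) :
    |2 * i - k| ≤ 2 ∨
      (foldHalf k (i - 1) = foldHalf k i - 1 ∧ foldHalf k (i + 1) = foldHalf k i + 1) ∨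
      (foldHalf k (i - 1) = foldHalf k i + 1 ∧ foldHalf k (i + 1) = foldHalf k i - 1) := by
  simp only [foldHalf, abs_le]; omega

lemma sum_fold_le {f : ℕ → ℝ} (hf : ∀ x, 0 ≤ f x) (k : ℕ) :
    ∑ i ∈ range (k + 1), f (min i (k - i)) ≤ 2 * ∑ i ∈ range (k + 1), f i := by
  calc ∑ i ∈ range (k + 1), f (min i (k - i))
      ≤ ∑ i ∈ range (k + 1), (f i + f (k - i)) := by
        refine sum_le_sum fun i _ => ?_
        rcases min_choice i (k - i) with h | h <;> rw [h] <;> linarith [hf i, hf (k - i)]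
    _ = 2 * ∑ i ∈ range (k + 1), f i := by
        rw [sum_add_distrib, ← sum_range_reflect f (k + 1)]
        simp only [Nat.add_sub_cancel]
        ring

lemma sum_sum_fold_le {f : ℕ → ℕ → ℝ} (hf : ∀ x y, 0 ≤ f x y) (k : ℕ) :
    ∑ i ∈ range (k + 1), ∑ j ∈ range (k + 1), f (min i (k - i)) (min j (k - j)) ≤
      4 * ∑ i ∈ range (k + 1), ∑ j ∈ range (k + 1), f i j := by
  have fold_fst := sum_fold_le (f := fun x => ∑ j ∈ range (k + 1), f x (min j (k - j)))
    (fun x => sum_nonneg fun j _ => hf _ _) k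
  have fold_snd := sum_le_sum fun x (_ : x ∈ range (k + 1)) => sum_fold_le (hf x) k
  rw [← mul_sum] at fold_snd
  linarith

/-- The indicator of the indices at distance at most `w` from the fold line `i = k / 2`. -/
noncomputable def midIndicator (k w i : ℕ) : ℝ := if |2 * (i : ℤ) - k| ≤ 2 * w then 1 else 0

lemma midIndicator_nonneg (k w i : ℕ) : 0 ≤ midIndicator k w i := by
  unfold midIndicator; split_ifs <;> norm_num

lemma midIndicator_eq_one {k w i : ℕ} (h : |2 * (i : ℤ) - k| ≤ 2 * w) : midIndicator k w i = 1 :=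
  if_pos h

lemma sum_midIndicator_le (k w : ℕ) : ∑ i ∈ range (k + 1), midIndicator k w i ≤ 2 * w + 1 := by
  have card_le : #((range (k + 1)).filter fun i : ℕ => |2 * (i : ℤ) - k| ≤ 2 * w) ≤
      #(Icc (((k : ℤ) + 1) / 2 - w) ((k : ℤ) / 2 + w)) := by
    refine card_le_card_of_injOn (fun i : ℕ => (i : ℤ)) ?_ Nat.cast_injective.injOn
    intro i hi
    simp only [coe_filter, mem_range, Set.mem_ofPred_eq, abs_le] at hi
    simp only [coe_Icc, Set.mem_Icc]
    omega
  rw [Int.card_Icc] at card_le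
  simp only [midIndicator]
  rw [sum_boole]
  have card_le' : #((range (k + 1)).filter fun i : ℕ => |2 * (i : ℤ) - k| ≤ 2 * w) ≤ 2 * w + 1 :=
    card_le.trans (by omega)
  exact (Nat.cast_le.2 card_le').trans_eq (by push_cast; rfl)

lemma norm_sub_le_of_abs_sub_le_one {V : Type*} [SeminormedAddCommGroup V] {f : ℤ → V} {L : ℝ}
    (hf : ∀ x, ‖f (x + 1) - f x‖ ≤ L) {x x' : ℤ} (h : |x' - x| ≤ 1) : ‖f x' - f x‖ ≤ L := by
  rw [abs_le] at h
  obtain rfl | rfl | rfl : x' = x ∨ x' = x + 1 ∨ x = x' + 1 := by omega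
  · simpa using (norm_nonneg _).trans (hf x')
  · exact hf x
  · rw [norm_sub_rev]
    exact hf x'

/-! ### The helical angle and the transition length -/

lemma stencilEnergy_comm (δ : ℝ) (a b c : ℝ × ℝ) :
    stencilEnergy δ a b c = stencilEnergy δ c b a := by
  simp only [stencilEnergy, sqnorm, Prod.fst_add, Prod.fst_sub, Prod.snd_add, Prod.snd_sub]
  ring

lemma stencilEnergy_foldHalf (δ : ℝ) (w : ℤ → ℝ × ℝ) (k i : ℤ) :
    |2 * i - k| ≤ 2 ∨
      stencilEnergy δ (w (foldHalf k (i - 1))) (w (foldHalf k i)) (w (foldHalf k (i + 1))) =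
        stencilEnergy δ (w (foldHalf k i - 1)) (w (foldHalf k i)) (w (foldHalf k i + 1)) := by
  rcases foldHalf_neighbours k i with h | ⟨left, right⟩ | ⟨left, right⟩
  · exact .inl h
  · exact .inr (by rw [left, right])
  · exact .inr (by rw [left, right, stencilEnergy_comm])

lemma two_div_pi_sq_ge : 1 / 5 ≤ 2 / π ^ 2 := by
  rw [div_le_div_iff₀ (by norm_num) (by positivity)]
  nlinarith [pi_lt_d2, pi_pos]

/-- The scales attached to `δ`: helices rotating by the angle `θ` per lattice step have zero energy,
and transitions between helices take `m ≈ 1 / √δ` steps. -/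
structure IsHelicalScale (δ θ : ℝ) (m : ℕ) : Prop where
  pos : 0 < δ
  lt_one : δ < 1
  angle_pos : 0 < θ
  cos_angle : cos θ = 1 - δ
  two_mul_le_sq : 2 * δ ≤ θ ^ 2
  sq_le_five_mul : θ ^ 2 ≤ 5 * δ
  one_le_mul_sqrt : 1 ≤ m * √δ
  mul_sqrt_le_two : m * √δ ≤ 2

lemma exists_isHelicalScale {δ : ℝ} (hδ : 0 < δ) (hδ' : δ < 1) :
    ∃ (θ : ℝ) (m : ℕ), IsHelicalScale δ θ m := by
  have cos_angle : cos (arccos (1 - δ)) = 1 - δ := cos_arccos (by linarith) (by linarith)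
  have angle_pos : 0 < arccos (1 - δ) := arccos_pos.2 (by linarith)
  have sqrt_pos : 0 < √δ := Real.sqrt_pos.2 hδ
  refine ⟨arccos (1 - δ), ⌈1 / √δ⌉₊, hδ, hδ', angle_pos, cos_angle, ?_, ?_,
    (div_le_iff₀ sqrt_pos).1 (Nat.le_ceil _), ?_⟩
  · linarith [one_sub_sq_div_two_le_cos (x := arccos (1 - δ))]
  · have cos_le := cos_le_one_sub_mul_cos_sq ((abs_of_pos angle_pos).trans_le (arccos_le_pi _))
    linarith [mul_le_mul_of_nonneg_right two_div_pi_sq_ge (sq_nonneg (arccos (1 - δ)))]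
  · have ceil_lt := Nat.ceil_lt_add_one (show 0 ≤ 1 / √δ by positivity)
    calc ⌈1 / √δ⌉₊ * √δ ≤ (1 / √δ + 1) * √δ := by gcongr
      _ = 1 + √δ := by field_simp
      _ ≤ 2 := by linarith [sqrt_le_one.2 hδ'.le]

namespace IsHelicalScale

variable {δ θ : ℝ} {m : ℕ}

lemma sqrt_pos (h : IsHelicalScale δ θ m) : 0 < √δ := Real.sqrt_pos.2 h.pos

lemma sqrt_sq (h : IsHelicalScale δ θ m) : √δ ^ 2 = δ := Real.sq_sqrt h.pos.le

lemma sqrt_lt_one (h : IsHelicalScale δ θ m) : √δ < 1 :=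
  (Real.sqrt_lt' one_pos).2 (by simpa using h.lt_one)

lemma one_le (h : IsHelicalScale δ θ m) : 1 ≤ m := by
  refine Nat.one_le_iff_ne_zero.2 ?_
  rintro rfl
  have := h.one_le_mul_sqrt
  norm_num at this

lemma natCast_pos (h : IsHelicalScale δ θ m) : (0 : ℝ) < m := Nat.cast_pos.2 h.one_le

lemma abs_angle_le (h : IsHelicalScale δ θ m) : |θ| ≤ 3 * √δ := by
  refine abs_le_of_sq_le_sq ?_ (by positivity)
  rw [mul_pow, h.sqrt_sq]
  linarith [h.sq_le_five_mul, h.pos]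

lemma mul_le_of_ratio_lt (h : IsHelicalScale δ θ m) {ε : ℝ} {k : ℕ} (hkε : 1 / 2 ≤ k * ε)
    (ratio_lt : ε / √δ < 1 / 100) : 25 * m ≤ k := by
  have ε_le : ε ≤ 1 / 100 * √δ := ((div_lt_iff₀ h.sqrt_pos).1 ratio_lt).le
  have scaled_le : (25 * m : ℝ) * √δ ≤ k * √δ := by
    calc (25 * m : ℝ) * √δ ≤ 100 * (k * ε) := by linarith [h.mul_sqrt_le_two]
      _ ≤ 100 * (k * (1 / 100 * √δ)) := by gcongr
      _ = k * √δ := by ring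
  exact_mod_cast le_of_mul_le_mul_right scaled_le h.sqrt_pos

end IsHelicalScale

/-! ### Normalised complex fields -/

/-- The normalisation `z ↦ z / ‖z‖`, with the convention `0 ↦ 1`. -/
noncomputable def unitize (z : ℂ) : ℂ := if z = 0 then 1 else z / (‖z‖ : ℂ)

lemma norm_unitize (z : ℂ) : ‖unitize z‖ = 1 := by
  unfold unitize
  split_ifs with h
  · exact norm_one
  · rw [norm_div, Complex.norm_real, norm_norm, div_self (norm_ne_zero_iff.2 h)]

lemma unitize_of_norm_eq_one {z : ℂ} (h : ‖z‖ = 1) : unitize z = z := by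
  rw [unitize, if_neg (norm_ne_zero_iff.1 (h ▸ one_ne_zero)), h, Complex.ofReal_one, div_one]

lemma unitize_mul {z w : ℂ} (hz : z ≠ 0) (hw : w ≠ 0) :
    unitize (z * w) = unitize z * unitize w := by
  rw [unitize, unitize, unitize, if_neg hz, if_neg hw, if_neg (mul_ne_zero hz hw), norm_mul,
    Complex.ofReal_mul, mul_div_mul_comm]

lemma half_le_norm_one_add {p : ℂ} (hp : ‖p‖ ≤ 1 / 2) : 1 / 2 ≤ ‖1 + p‖ := by
  have := norm_sub_norm_le (1 : ℂ) (-p)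
  rw [norm_one, norm_neg, sub_neg_eq_add] at this
  linarith

lemma one_add_ne_zero_of_norm_le_half {p : ℂ} (hp : ‖p‖ ≤ 1 / 2) : 1 + p ≠ 0 :=
  norm_pos_iff.1 (by linarith [half_le_norm_one_add hp])

lemma abs_one_add_re_sub_norm_le {p : ℂ} (hp : ‖p‖ ≤ 1 / 2) :
    |1 + p.re - ‖1 + p‖| ≤ ‖p‖ ^ 2 := by
  have half_le := half_le_norm_one_add hp
  have norm_sq : ‖1 + p‖ ^ 2 = (1 + p.re) ^ 2 + p.im ^ 2 := by
    rw [Complex.sq_norm, Complex.normSq_apply]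
    simp only [Complex.add_re, Complex.one_re, Complex.add_im, Complex.one_im]
    ring
  have re_ge := (abs_le.1 (Complex.abs_re_le_norm p)).1
  have im_sq : p.im ^ 2 ≤ ‖p‖ ^ 2 := sq_le_sq' (abs_le.1 (Complex.abs_im_le_norm p)).1
    (abs_le.1 (Complex.abs_im_le_norm p)).2
  rw [abs_le]
  constructor <;> nlinarith [sq_nonneg p.im]

lemma norm_unitize_one_add_sub_le {p : ℂ} (hp : ‖p‖ ≤ 1 / 2) :
    ‖unitize (1 + p) - 1 - p.im * Complex.I‖ ≤ 4 * ‖p‖ ^ 2 := by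
  have half_le := half_le_norm_one_add hp
  have norm_sub_one : |‖1 + p‖ - 1| ≤ ‖p‖ := by
    simpa using abs_norm_sub_norm_le (1 + p) 1
  have re_part := abs_one_add_re_sub_norm_le hp
  have ne_zero := one_add_ne_zero_of_norm_le_half hp
  set r := ‖1 + p‖ with r_def
  have r_pos : 0 < r := by linarith
  have remainder_eq : unitize (1 + p) - 1 - p.im * Complex.I =
      (((1 + p.re - r : ℝ) : ℂ) + ((p.im * (1 - r) : ℝ) : ℂ) * Complex.I) / (r : ℂ) := by
    have r_ne : (r : ℂ) ≠ 0 := by exact_mod_cast r_pos.ne'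
    rw [unitize, if_neg ne_zero, ← r_def]
    field_simp
    push_cast
    linear_combination -Complex.re_add_im p
  have im_part : |p.im * (1 - r)| ≤ ‖p‖ ^ 2 := by
    rw [abs_mul, abs_sub_comm, sq]
    gcongr
    exact Complex.abs_im_le_norm p
  have numerator : ‖((1 + p.re - r : ℝ) : ℂ) + ((p.im * (1 - r) : ℝ) : ℂ) * Complex.I‖ ≤
      |1 + p.re - r| + |p.im * (1 - r)| := by
    refine (norm_add_le _ _).trans_eq ?_
    rw [norm_mul, Complex.norm_I, mul_one, Complex.norm_real, Complex.norm_real, norm_eq_abs,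
      norm_eq_abs]
  rw [remainder_eq, norm_div, Complex.norm_real, norm_of_nonneg r_pos.le, div_le_iff₀ r_pos]
  nlinarith [sq_nonneg ‖p‖]

lemma norm_unitize_one_add_add_sub_two_le {p q : ℂ} (hp : ‖p‖ ≤ 1 / 2) (hq : ‖q‖ ≤ 1 / 2) :
    ‖unitize (1 + p) - 2 + unitize (1 + q)‖ ≤ ‖p + q‖ + 4 * (‖p‖ ^ 2 + ‖q‖ ^ 2) := by
  have expansion : unitize (1 + p) - 2 + unitize (1 + q) = (p + q).im * Complex.I +
      ((unitize (1 + p) - 1 - p.im * Complex.I) + (unitize (1 + q) - 1 - q.im * Complex.I)) := by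
    rw [Complex.add_im]
    push_cast
    ring
  have linear_part : ‖((p + q).im : ℂ) * Complex.I‖ ≤ ‖p + q‖ := by
    rw [norm_mul, Complex.norm_I, mul_one, Complex.norm_real]
    exact Complex.abs_im_le_norm _
  rw [expansion]
  refine (norm_add_le _ _).trans (add_le_add linear_part ((norm_add_le _ _).trans ?_))
  linarith [norm_unitize_one_add_sub_le hp, norm_unitize_one_add_sub_le hq]

lemma norm_unitize_second_diff_le_four (z v w : ℂ) :
    ‖unitize z - 2 * unitize v + unitize w‖ ≤ 4 := by
  have first := norm_add_le (unitize z - 2 * unitize v) (unitize w)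
  have second := norm_sub_le (unitize z) (2 * unitize v)
  rw [norm_mul, Complex.norm_ofNat, norm_unitize, norm_unitize] at second
  rw [norm_unitize] at first
  linarith

lemma norm_unitize_second_diff_le {v : ℂ} (hv : v ≠ 0) (z w : ℂ) :
    ‖unitize z - 2 * unitize v + unitize w‖ ≤ ‖z - 2 * v + w‖ / ‖v‖ +
      16 * (‖z - v‖ ^ 2 + ‖w - v‖ ^ 2) / ‖v‖ ^ 2 := by
  set p := (z - v) / v with p_def
  set q := (w - v) / v with q_def
  have z_eq : z = v * (1 + p) := by rw [p_def]; field_simp; ring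
  have w_eq : w = v * (1 + q) := by rw [q_def]; field_simp; ring
  have first_order : ‖z - 2 * v + w‖ / ‖v‖ = ‖p + q‖ := by
    rw [p_def, q_def, ← norm_div, ← add_div]
    congr 2
    ring
  have second_order :
      16 * (‖z - v‖ ^ 2 + ‖w - v‖ ^ 2) / ‖v‖ ^ 2 = 16 * (‖p‖ ^ 2 + ‖q‖ ^ 2) := by
    rw [p_def, q_def, norm_div, norm_div]
    ring
  rw [first_order, second_order]
  by_cases small : ‖p‖ ≤ 1 / 2 ∧ ‖q‖ ≤ 1 / 2
  · have factor : unitize z - 2 * unitize v + unitize w =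
        unitize v * (unitize (1 + p) - 2 + unitize (1 + q)) := by
      rw [z_eq, w_eq, unitize_mul hv (one_add_ne_zero_of_norm_le_half small.1),
        unitize_mul hv (one_add_ne_zero_of_norm_le_half small.2)]
      ring
    rw [factor, norm_mul, norm_unitize, one_mul]
    linarith [norm_unitize_one_add_add_sub_two_le small.1 small.2, sq_nonneg ‖p‖, sq_nonneg ‖q‖]
  · have quarter_le : 1 / 4 ≤ ‖p‖ ^ 2 + ‖q‖ ^ 2 := by
      rcases not_and_or.1 small with h | h <;> nlinarith [sq_nonneg ‖p‖, sq_nonneg ‖q‖, not_le.1 h]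
    linarith [norm_unitize_second_diff_le_four z v w, norm_nonneg (p + q)]

/-- The spin in the direction of `z`, the real axis of `ℂ` being the boundary value `(0, 1)`. -/
noncomputable def unitSpin (z : ℂ) : ℝ × ℝ := ((unitize z).im, (unitize z).re)

lemma sqnorm_unitSpin (z : ℂ) : sqnorm (unitSpin z) = 1 := by
  have h : ‖unitize z‖ ^ 2 = 1 := by rw [norm_unitize, one_pow]
  rw [Complex.sq_norm, Complex.normSq_apply] at h
  rw [sqnorm, unitSpin]
  linarith

lemma stencilEnergy_unitSpin (δ : ℝ) (z v w : ℂ) :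
    stencilEnergy δ (unitSpin z) (unitSpin v) (unitSpin w) =
      ‖unitize z - 2 * unitize v + unitize w + (2 * δ : ℝ) * unitize v‖ ^ 2 := by
  rw [Complex.sq_norm, Complex.normSq_apply]
  simp only [stencilEnergy, sqnorm, unitSpin, Prod.smul_mk, Prod.mk_sub_mk, Prod.mk_add_mk,
    smul_eq_mul, Complex.add_re, Complex.sub_re, Complex.add_im, Complex.sub_im,
    Complex.mul_re, Complex.mul_im, Complex.ofReal_re, Complex.ofReal_im, Complex.re_ofNat,
    Complex.im_ofNat]
  ring

lemma stencilEnergy_unitSpin_le {δ : ℝ} (hδ : 0 ≤ δ) {v : ℂ} (hv : v ≠ 0) (z w : ℂ) :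
    stencilEnergy δ (unitSpin z) (unitSpin v) (unitSpin w) ≤
      (‖z - 2 * v + w‖ / ‖v‖ + 16 * (‖z - v‖ ^ 2 + ‖w - v‖ ^ 2) / ‖v‖ ^ 2 + 2 * δ) ^ 2 := by
  rw [stencilEnergy_unitSpin]
  gcongr
  refine (norm_add_le _ _).trans (add_le_add (norm_unitize_second_diff_le hv z w) ?_)
  rw [norm_mul, norm_unitize, Complex.norm_real, mul_one, norm_of_nonneg (by positivity)]

lemma stencilEnergy_unitSpin_le_sixteen {δ : ℝ} (hδ : 0 ≤ δ) (hδ' : δ ≤ 1) (z v w : ℂ) :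
    stencilEnergy δ (unitSpin z) (unitSpin v) (unitSpin w) ≤ 16 := by
  have le_four :
      ‖unitize z - 2 * unitize v + unitize w + (2 * δ : ℝ) * unitize v‖ ≤ 4 := by
    have regroup : unitize z - 2 * unitize v + unitize w + (2 * δ : ℝ) * unitize v =
        unitize z + (((2 * δ - 2 : ℝ) : ℂ) * unitize v + unitize w) := by push_cast; ring
    have outer := norm_add_le (unitize z) (((2 * δ - 2 : ℝ) : ℂ) * unitize v + unitize w)
    have inner := norm_add_le (((2 * δ - 2 : ℝ) : ℂ) * unitize v) (unitize w)
    rw [norm_mul, norm_unitize, norm_unitize, Complex.norm_real, norm_eq_abs,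
      abs_of_nonpos (by linarith)] at inner
    rw [norm_unitize] at outer
    rw [regroup]
    linarith
  rw [stencilEnergy_unitSpin]
  calc _ ≤ (4 : ℝ) ^ 2 := by gcongr
    _ = 16 := by norm_num

lemma stencilEnergy_unitSpin_eq_zero {δ : ℝ} {z v w : ℂ} (hz : ‖z‖ = 1) (hv : ‖v‖ = 1)
    (hw : ‖w‖ = 1) (h : z - 2 * v + w + (2 * δ : ℝ) * v = 0) :
    stencilEnergy δ (unitSpin z) (unitSpin v) (unitSpin w) = 0 := by
  rw [stencilEnergy_unitSpin, unitize_of_norm_eq_one hz, unitize_of_norm_eq_one hv,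
    unitize_of_norm_eq_one hw, h, norm_zero, zero_pow two_ne_zero]

/-! ### Lorentzian sums -/

lemma inv_one_add_sq_le_sub (t : ℝ) : (1 + t ^ 2)⁻¹ ≤
    5 / 2 * ((t + 1 / 2) / (1 + |t + 1 / 2|) - (t - 1 / 2) / (1 + |t - 1 / 2|)) := by
  have denom_pos : 0 < 1 + t ^ 2 := by positivity
  rw [inv_eq_one_div]
  rcases le_total (1 / 2) t with h | h
  · rw [abs_of_nonneg (by linarith), abs_of_nonneg (by linarith),
      div_sub_div _ _ (by linarith) (by linarith), ← mul_div_assoc,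
      div_le_div_iff₀ denom_pos (by nlinarith)]
    nlinarith [sq_nonneg (t - 1)]
  rcases le_total t (-(1 / 2)) with h' | h'
  · rw [abs_of_nonpos (by linarith), abs_of_nonpos (by linarith),
      div_sub_div _ _ (by linarith) (by linarith), ← mul_div_assoc,
      div_le_div_iff₀ denom_pos (by nlinarith)]
    nlinarith [sq_nonneg (t + 1)]
  · rw [abs_of_nonneg (by linarith), abs_of_nonpos (by linarith),
      div_sub_div _ _ (by linarith) (by linarith), ← mul_div_assoc,
      div_le_div_iff₀ denom_pos (by nlinarith)]
    have sq_le : t ^ 2 ≤ 1 / 4 := by nlinarith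
    nlinarith [sq_nonneg t]

lemma abs_div_one_add_abs_le_one (t : ℝ) : |t / (1 + |t|)| ≤ 1 := by
  have denom_pos : 0 < 1 + |t| := by positivity
  rw [abs_div, abs_of_pos denom_pos, div_le_one denom_pos]
  linarith

lemma sum_inv_one_add_sub_sq_le (n : ℕ) (r : ℝ) :
    ∑ y ∈ range n, (1 + ((y : ℝ) - r) ^ 2)⁻¹ ≤ 5 := by
  let F : ℝ → ℝ := fun t => t / (1 + |t|)
  have termwise : ∑ y ∈ range n, (1 + ((y : ℝ) - r) ^ 2)⁻¹ ≤
      ∑ y ∈ range n, 5 / 2 * (F (((y + 1 : ℕ) : ℝ) - r - 1 / 2) - F ((y : ℝ) - r - 1 / 2)) := by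
    refine sum_le_sum fun y _ => ?_
    rw [show ((y + 1 : ℕ) : ℝ) - r - 1 / 2 = (y : ℝ) - r + 1 / 2 by push_cast; ring]
    exact inv_one_add_sq_le_sub _
  rw [← mul_sum, sum_range_sub (fun y : ℕ => F ((y : ℝ) - r - 1 / 2))] at termwise
  linarith [(abs_le.1 (abs_div_one_add_abs_le_one ((n : ℝ) - r - 1 / 2))).2,
    (abs_le.1 (abs_div_one_add_abs_le_one (((0 : ℕ) : ℝ) - r - 1 / 2))).1]

lemma inv_one_add_le_of_mul_sq_le {c t X : ℝ} (hc : 0 < c) (hc' : c ≤ 1) (h : c * t ^ 2 ≤ X) :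
    (1 + X)⁻¹ ≤ c⁻¹ * (1 + t ^ 2)⁻¹ := by
  rw [← mul_inv]
  exact inv_anti₀ (by positivity) (by linarith)

lemma abs_sub_odd_mul_pi_le {a : ℝ} (ha : 0 ≤ a) : |a - (2 * ⌊a / (2 * π)⌋₊ + 1) * π| ≤ π := by
  have lower := (le_div_iff₀ (by positivity)).1 (Nat.floor_le (show 0 ≤ a / (2 * π) by positivity))
  have upper := (div_lt_iff₀ (by positivity)).1 (Nat.lt_floor_add_one (a / (2 * π)))
  rw [abs_le]
  constructor <;> linarith

lemma sq_sub_odd_mul_pi_le_one_add_cos {a : ℝ} {l : ℕ} (h : |a - (2 * l + 1) * π| ≤ π) :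
    1 / 5 * (a - (2 * l + 1) * π) ^ 2 ≤ 1 + cos a := by
  set β := a - (2 * l + 1) * π with β_def
  have a_eq : a = β + π + l * (2 * π) := by rw [β_def]; ring
  rw [a_eq, cos_add_nat_mul_two_pi, cos_add_pi]
  linarith [cos_le_one_sub_mul_cos_sq h, mul_le_mul_of_nonneg_right two_div_pi_sq_ge (sq_nonneg β)]

lemma sum_inv_one_add_sq_one_sub_le {m : ℕ} (hm : 0 < m) :
    ∑ x ∈ range m, (1 + (m : ℝ) ^ 2 * (1 - 2 * ((x : ℝ) / m)) ^ 2 / 8)⁻¹ ≤ 10 := by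
  have termwise : ∀ x ∈ range m, (1 + (m : ℝ) ^ 2 * (1 - 2 * ((x : ℝ) / m)) ^ 2 / 8)⁻¹ ≤
      (1 / 2)⁻¹ * (1 + ((x : ℝ) - m / 2) ^ 2)⁻¹ := by
    refine fun x _ => inv_one_add_le_of_mul_sq_le (by norm_num) (by norm_num) (le_of_eq ?_)
    field_simp
    ring
  refine (sum_le_sum termwise).trans ?_
  rw [← mul_sum]
  linarith [sum_inv_one_add_sub_sq_le m (m / 2)]

lemma inv_one_add_cos_le {θ M : ℝ} (hθ : 0 < θ) (hM : 2 ≤ M ^ 2 * θ ^ 2) (y : ℕ) :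
    (1 + M ^ 2 * (1 + cos (θ * y)) / 8)⁻¹ ≤
      20 * (1 + ((y : ℝ) - (2 * ⌊θ * y / (2 * π)⌋₊ + 1) * π / θ) ^ 2)⁻¹ := by
  have dist_le := abs_sub_odd_mul_pi_le (show 0 ≤ θ * y by positivity)
  have cos_ge := sq_sub_odd_mul_pi_le_one_add_cos dist_le
  set t := (y : ℝ) - (2 * ⌊θ * y / (2 * π)⌋₊ + 1) * π / θ with t_def
  have dist_eq : θ * y - (2 * ⌊θ * y / (2 * π)⌋₊ + 1) * π = θ * t := by rw [t_def]; field_simp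
  rw [dist_eq, mul_pow] at cos_ge
  have lower : 1 / 20 * t ^ 2 ≤ M ^ 2 * (1 + cos (θ * y)) / 8 := by
    linarith [mul_le_mul_of_nonneg_left cos_ge (sq_nonneg M),
      mul_le_mul_of_nonneg_right hM (sq_nonneg t)]
  exact (inv_one_add_le_of_mul_sq_le (by norm_num) (by norm_num) lower).trans_eq (by norm_num)

lemma sum_inv_one_add_cos_le {θ M : ℝ} (hθ : 0 < θ) (hM : 2 ≤ M ^ 2 * θ ^ 2) (k : ℕ) :
    ∑ y ∈ range (k + 1), (1 + M ^ 2 * (1 + cos (θ * y)) / 8)⁻¹ ≤ 100 * (θ * k / 6 + 1) := by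
  set n := ⌊θ * k / (2 * π)⌋₊
  let lorentzian : ℕ → ℕ → ℝ := fun l y => 20 * (1 + ((y : ℝ) - (2 * l + 1) * π / θ) ^ 2)⁻¹
  have termwise : ∀ y ∈ range (k + 1), (1 + M ^ 2 * (1 + cos (θ * y)) / 8)⁻¹ ≤
      ∑ l ∈ range (n + 1), lorentzian l y := by
    intro y hy
    have y_le : (y : ℝ) ≤ k := by exact_mod_cast Nat.lt_succ_iff.1 (mem_range.1 hy)
    have floor_mem : ⌊θ * y / (2 * π)⌋₊ ∈ range (n + 1) :=
      mem_range.2 (Nat.lt_succ_of_le (Nat.floor_le_floor (by gcongr)))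
    exact (inv_one_add_cos_le hθ hM y).trans
      (single_le_sum (f := fun l => lorentzian l y) (fun l _ => by positivity) floor_mem)
  have per_line : ∀ l ∈ range (n + 1), ∑ y ∈ range (k + 1), lorentzian l y ≤ 100 := by
    intro l _
    rw [← mul_sum]
    linarith [sum_inv_one_add_sub_sq_le (k + 1) ((2 * l + 1) * π / θ)]
  have n_le : (n : ℝ) ≤ θ * k / 6 := by
    refine (Nat.floor_le (by positivity)).trans ?_
    gcongr
    linarith [pi_gt_three]
  refine (sum_le_sum termwise).trans ?_
  rw [sum_comm]
  refine (sum_le_sum per_line).trans ?_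
  rw [sum_const, card_range, nsmul_eq_mul]
  push_cast
  linarith

/-! ### The vortex field -/

/-- The unit complex number `exp (i a)`. -/
noncomputable def phase (a : ℝ) : ℂ := Complex.exp (Complex.I * a)

lemma norm_phase (a : ℝ) : ‖phase a‖ = 1 := by
  rw [phase, mul_comm, Complex.norm_exp_ofReal_mul_I]

lemma phase_add (a b : ℝ) : phase (a + b) = phase a * phase b := by
  rw [phase, Complex.ofReal_add, mul_add, Complex.exp_add, phase, phase]

lemma phase_re (a : ℝ) : (phase a).re = cos a := by
  rw [phase, mul_comm, Complex.exp_ofReal_mul_I_re]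

lemma phase_im (a : ℝ) : (phase a).im = sin a := by
  rw [phase, mul_comm, Complex.exp_ofReal_mul_I_im]

lemma norm_phase_add_sub_le (a b : ℝ) : ‖phase (a + b) - phase a‖ ≤ |b| := by
  have factor : phase (a + b) - phase a = phase a * (phase b - 1) := by rw [phase_add]; ring
  rw [factor, norm_mul, norm_phase, one_mul]
  exact norm_exp_I_mul_ofReal_sub_one_le

lemma phase_sub_add_phase_add (a θ : ℝ) :
    phase (a - θ) + phase (a + θ) = (2 * cos θ : ℝ) * phase a := by
  apply Complex.ext
  · rw [Complex.add_re, Complex.re_ofReal_mul, phase_re, phase_re, phase_re, cos_sub, cos_add]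
    ring
  · rw [Complex.add_im, Complex.im_ofReal_mul, phase_im, phase_im, phase_im, sin_sub, sin_add]
    ring

/-- The unnormalised vortex field: a helix of angle `θ` for `x ≥ m`, interpolated linearly with the
constant boundary value for `x ≤ m`. Its zeros are the vortices, and lie near `x = m / 2`. -/
noncomputable def vortexField (θ : ℝ) (m : ℕ) (x y : ℤ) : ℂ :=
  if x ≤ m then ((1 - (x : ℝ) / m : ℝ) : ℂ) + ((x : ℝ) / m : ℝ) * phase (θ * y)
  else phase (θ * (y + x - m))

lemma vortexField_of_le {θ : ℝ} {m : ℕ} {x : ℤ} (h : x ≤ m) (y : ℤ) :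
    vortexField θ m x y = ((1 - (x : ℝ) / m : ℝ) : ℂ) + ((x : ℝ) / m : ℝ) * phase (θ * y) :=
  if_pos h

lemma vortexField_of_ge {θ : ℝ} {m : ℕ} (hm : 0 < m) {x : ℤ} (h : (m : ℤ) ≤ x) (y : ℤ) :
    vortexField θ m x y = phase (θ * (y + x - m)) := by
  rcases h.lt_or_eq with h | rfl
  · exact if_neg (not_le.2 h)
  · have m_ne : (m : ℝ) ≠ 0 := Nat.cast_ne_zero.2 hm.ne'
    rw [vortexField_of_le le_rfl, Int.cast_natCast, div_self m_ne, sub_self, Complex.ofReal_zero,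
      zero_add, Complex.ofReal_one, one_mul, add_sub_cancel_right]

lemma norm_vortexField_of_ge {θ : ℝ} {m : ℕ} (hm : 0 < m) {x : ℤ} (h : (m : ℤ) ≤ x) (y : ℤ) :
    ‖vortexField θ m x y‖ = 1 := by
  rw [vortexField_of_ge hm h, norm_phase]

lemma vortexField_zero (θ : ℝ) (m : ℕ) (y : ℤ) : vortexField θ m 0 y = 1 := by
  rw [vortexField_of_le m.cast_nonneg]
  simp

lemma vortexField_second_diff_fst (θ : ℝ) {m : ℕ} {x : ℤ} (h : x < m) (y : ℤ) :
    vortexField θ m (x - 1) y - 2 * vortexField θ m x y + vortexField θ m (x + 1) y = 0 := by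
  rw [vortexField_of_le (by omega), vortexField_of_le (by omega), vortexField_of_le (by omega)]
  push_cast
  ring

lemma intCast_div_natCast_mem_Icc {x : ℤ} {m : ℕ} (hx : 0 ≤ x) (hxm : x ≤ m) :
    (x : ℝ) / m ∈ Set.Icc (0 : ℝ) 1 := by
  have x_le : (x : ℝ) ≤ m := by exact_mod_cast hxm
  exact ⟨by positivity, div_le_one_of_le₀ x_le m.cast_nonneg⟩

lemma norm_vortexField_le_one {θ : ℝ} {m : ℕ} {x : ℤ} (hx : 0 ≤ x) (h : x ≤ m) (y : ℤ) :
    ‖vortexField θ m x y‖ ≤ 1 := by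
  obtain ⟨t_nonneg, t_le⟩ := intCast_div_natCast_mem_Icc hx h
  rw [vortexField_of_le h]
  refine (norm_add_le _ _).trans ?_
  rw [norm_mul, norm_phase, Complex.norm_real, Complex.norm_real, norm_of_nonneg t_nonneg,
    norm_of_nonneg (by linarith)]
  linarith

lemma sq_norm_vortexField_ge {θ : ℝ} {m : ℕ} {x : ℤ} (hx : 0 ≤ x) (h : x ≤ m) (y : ℤ) :
    ((1 - 2 * ((x : ℝ) / m)) ^ 2 + (1 + cos (θ * y))) / 8 ≤ ‖vortexField θ m x y‖ ^ 2 := by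
  obtain ⟨t_nonneg, t_le⟩ := intCast_div_natCast_mem_Icc hx h
  rw [vortexField_of_le h, Complex.sq_norm, Complex.normSq_apply, Complex.add_re, Complex.add_im,
    Complex.re_ofReal_mul, Complex.im_ofReal_mul, phase_re, phase_im, Complex.ofReal_re,
    Complex.ofReal_im]
  set t : ℝ := (x : ℝ) / m
  set c := cos (θ * y)
  have norm_eq : (1 - t + t * c) * (1 - t + t * c) + (0 + t * sin (θ * y)) * (0 + t * sin (θ * y)) =
      1 - 4 * (t * (1 - t)) + 2 * (t * (1 - t)) * (1 + c) := by
    linear_combination t ^ 2 * cos_sq_add_sin_sq (θ * y)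
  have one_sub_sq : (1 - 2 * t) ^ 2 = 1 - 4 * (t * (1 - t)) := by ring
  have product_nonneg : 0 ≤ t * (1 - t) := mul_nonneg t_nonneg (sub_nonneg.2 t_le)
  have product_le : 4 * (t * (1 - t)) ≤ 1 := by linarith [sq_nonneg (1 - 2 * t)]
  rw [norm_eq, one_sub_sq]
  set p := t * (1 - t)
  nlinarith [mul_nonneg product_nonneg (show 0 ≤ 1 + c by linarith [neg_one_le_cos (θ * y)]),
    cos_le_one (θ * y)]

namespace IsHelicalScale

variable {δ θ : ℝ} {m : ℕ}

lemma norm_vortexField_add_one_fst_sub_le (h : IsHelicalScale δ θ m) (x y : ℤ) :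
    ‖vortexField θ m (x + 1) y - vortexField θ m x y‖ ≤ 3 * √δ := by
  by_cases hx : x + 1 ≤ m
  · have increment : vortexField θ m (x + 1) y - vortexField θ m x y =
        (1 / (m : ℝ) : ℝ) * (phase (θ * y) - 1) := by
      rw [vortexField_of_le hx, vortexField_of_le (by omega)]
      push_cast
      ring
    have diameter := norm_sub_le (phase (θ * y)) 1
    rw [norm_phase, norm_one] at diameter
    rw [increment, norm_mul, Complex.norm_real, norm_of_nonneg (by positivity),
      div_mul_eq_mul_div, div_le_iff₀ h.natCast_pos]
    linarith [h.one_le_mul_sqrt]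
  · rw [vortexField_of_ge h.one_le (by omega), vortexField_of_ge h.one_le (by omega),
      show θ * ((y : ℝ) + ((x + 1 : ℤ) : ℝ) - m) = θ * (y + x - m) + θ by push_cast; ring]
    exact (norm_phase_add_sub_le _ _).trans h.abs_angle_le

lemma norm_vortexField_add_one_snd_sub_le (h : IsHelicalScale δ θ m) {x : ℤ} (hx : 0 ≤ x) (y : ℤ) :
    ‖vortexField θ m x (y + 1) - vortexField θ m x y‖ ≤ 3 * √δ := by
  by_cases hxm : x ≤ m
  · obtain ⟨t_nonneg, t_le⟩ := intCast_div_natCast_mem_Icc hx hxm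
    rw [vortexField_of_le hxm, vortexField_of_le hxm, add_sub_add_left_eq_sub, ← mul_sub, norm_mul,
      Complex.norm_real, norm_of_nonneg t_nonneg,
      show θ * ((y + 1 : ℤ) : ℝ) = θ * y + θ by push_cast; ring]
    exact (mul_le_of_le_one_left (norm_nonneg _) t_le).trans
      ((norm_phase_add_sub_le _ _).trans h.abs_angle_le)
  · rw [vortexField_of_ge h.one_le (by omega), vortexField_of_ge h.one_le (by omega),
      show θ * (((y + 1 : ℤ) : ℝ) + x - m) = θ * (y + x - m) + θ by push_cast; ring]
    exact (norm_phase_add_sub_le _ _).trans h.abs_angle_le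

end IsHelicalScale

namespace IsHelicalScale

variable {δ θ : ℝ} {m : ℕ}

lemma norm_vortexField_second_diff_snd_le (h : IsHelicalScale δ θ m) {x : ℤ} (hx : 0 ≤ x)
    (hxm : x ≤ m) (y : ℤ) :
    ‖vortexField θ m x (y - 1) - 2 * vortexField θ m x y + vortexField θ m x (y + 1)‖ ≤
      2 * δ := by
  obtain ⟨t_nonneg, t_le⟩ := intCast_div_natCast_mem_Icc hx hxm
  have wave := phase_sub_add_phase_add (θ * y) θ
  rw [h.cos_angle, show θ * (y : ℝ) - θ = θ * ((y - 1 : ℤ) : ℝ) by push_cast; ring,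
    show θ * (y : ℝ) + θ = θ * ((y + 1 : ℤ) : ℝ) by push_cast; ring] at wave
  rw [vortexField_of_le hxm, vortexField_of_le hxm, vortexField_of_le hxm]
  set t : ℝ := (x : ℝ) / m
  have second_diff : ((1 - t : ℝ) : ℂ) + (t : ℂ) * phase (θ * ((y - 1 : ℤ) : ℝ)) -
      2 * (((1 - t : ℝ) : ℂ) + (t : ℂ) * phase (θ * y)) +
      (((1 - t : ℝ) : ℂ) + (t : ℂ) * phase (θ * ((y + 1 : ℤ) : ℝ))) =
        (-(2 * δ * t) : ℝ) * phase (θ * y) := by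
    push_cast at wave ⊢
    linear_combination (t : ℂ) * wave
  have δ_nonneg := h.pos.le
  rw [second_diff, norm_mul, norm_phase, Complex.norm_real, norm_neg,
    norm_of_nonneg (by positivity), mul_one]
  exact mul_le_of_le_one_right (by positivity) t_le

lemma vortexField_helix_fst (h : IsHelicalScale δ θ m) {x : ℤ} (hx : (m : ℤ) < x) (y : ℤ) :
    vortexField θ m (x - 1) y - 2 * vortexField θ m x y + vortexField θ m (x + 1) y +
      (2 * δ : ℝ) * vortexField θ m x y = 0 := by
  have wave := phase_sub_add_phase_add (θ * (y + x - m)) θ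
  rw [h.cos_angle,
    show θ * ((y : ℝ) + x - m) - θ = θ * (y + ((x - 1 : ℤ) : ℝ) - m) by push_cast; ring,
    show θ * ((y : ℝ) + x - m) + θ = θ * (y + ((x + 1 : ℤ) : ℝ) - m) by push_cast; ring] at wave
  rw [vortexField_of_ge h.one_le (by omega), vortexField_of_ge h.one_le (by omega),
    vortexField_of_ge h.one_le (by omega)]
  push_cast at wave ⊢
  linear_combination wave

lemma vortexField_helix_snd (h : IsHelicalScale δ θ m) {x : ℤ} (hx : (m : ℤ) ≤ x) (y : ℤ) :
    vortexField θ m x (y - 1) - 2 * vortexField θ m x y + vortexField θ m x (y + 1) +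
      (2 * δ : ℝ) * vortexField θ m x y = 0 := by
  have wave := phase_sub_add_phase_add (θ * (y + x - m)) θ
  rw [h.cos_angle,
    show θ * ((y : ℝ) + x - m) - θ = θ * (((y - 1 : ℤ) : ℝ) + x - m) by push_cast; ring,
    show θ * ((y : ℝ) + x - m) + θ = θ * (((y + 1 : ℤ) : ℝ) + x - m) by push_cast; ring] at wave
  rw [vortexField_of_ge h.one_le hx, vortexField_of_ge h.one_le hx, vortexField_of_ge h.one_le hx]
  push_cast at wave ⊢
  linear_combination wave

end IsHelicalScale

/-! ### Energy of the vortex field -/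

/-- The weight of the vortex cores, which concentrate where both `x = m / 2` and `θ y ∈ π + 2πℤ`. -/
noncomputable def coreWeight (θ : ℝ) (m x y : ℕ) : ℝ :=
  if x < m then (1 + (m : ℝ) ^ 2 * (1 - 2 * ((x : ℝ) / m)) ^ 2 / 8)⁻¹ *
    (1 + (m : ℝ) ^ 2 * (1 + cos (θ * y)) / 8)⁻¹ else 0

lemma one_add_cos_nonneg (a : ℝ) : 0 ≤ 1 + cos a := by linarith [neg_one_le_cos a]

lemma coreWeight_nonneg (θ : ℝ) (m x y : ℕ) : 0 ≤ coreWeight θ m x y := by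
  have := one_add_cos_nonneg (θ * y)
  unfold coreWeight
  split_ifs <;> positivity

lemma sum_coreWeight_le {θ : ℝ} {m k : ℕ} (hm : 0 < m) (hmk : m ≤ k) (hθ : 0 < θ)
    (hmθ : 2 ≤ (m : ℝ) ^ 2 * θ ^ 2) :
    ∑ x ∈ range (k + 1), ∑ y ∈ range (k + 1), coreWeight θ m x y ≤ 1000 * (θ * k / 6 + 1) := by
  have vanish : ∀ x ∈ range (k + 1), x ∉ range m →
      ∑ y ∈ range (k + 1), coreWeight θ m x y = 0 := fun x _ hx =>
    sum_eq_zero fun y _ => if_neg (by simpa using hx)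
  have product : ∑ x ∈ range m, ∑ y ∈ range (k + 1), coreWeight θ m x y =
      (∑ x ∈ range m, (1 + (m : ℝ) ^ 2 * (1 - 2 * ((x : ℝ) / m)) ^ 2 / 8)⁻¹) *
        ∑ y ∈ range (k + 1), (1 + (m : ℝ) ^ 2 * (1 + cos (θ * y)) / 8)⁻¹ := by
    rw [sum_mul_sum]
    exact sum_congr rfl fun x hx => sum_congr rfl fun y _ => if_pos (mem_range.1 hx)
  rw [← sum_subset (range_subset_range.2 (by omega)) vanish, product]
  calc _ ≤ 10 * (100 * (θ * k / 6 + 1)) := by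
        gcongr
        · exact sum_nonneg fun y _ => by have := one_add_cos_nonneg (θ * y); positivity
        · exact sum_inv_one_add_sq_one_sub_le hm
        · exact sum_inv_one_add_cos_le hθ hmθ k
    _ = 1000 * (θ * k / 6 + 1) := by ring

/-- A bound for the stencil energies of the vortex field before folding: cores for `x < m`, kinks
along the line `x = m`, and zero energy for `x > m`. -/
noncomputable def vortexWeight (δ θ : ℝ) (m x y : ℕ) : ℝ :=
  1172 ^ 2 * coreWeight θ m x y + 87616 * δ * (if x = m then 1 else 0)

/-- A bound for the stencil energies of the folded vortex field. -/
noncomputable def foldedVortexWeight (δ θ : ℝ) (m k i j : ℕ) : ℝ :=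
  vortexWeight δ θ m (min i (k - i)) (min j (k - j)) +
    16 * ((if min i (k - i) < m then 1 else 0) * midIndicator k 1 j) +
    87616 * δ * (midIndicator k 1 i + midIndicator k 1 j)

/-- The field obtained by reflecting the vortex field in the midlines of the square. -/
noncomputable def foldedVortexSpin (θ : ℝ) (m k : ℕ) (p : ℤ × ℤ) : ℝ × ℝ :=
  unitSpin (vortexField θ m (foldHalf k p.1) (foldHalf k p.2))

lemma foldedVortexSpin_inS0per {ε : ℝ} {k : ℕ} (hk : Kof ε = k) (θ : ℝ) (m : ℕ) :
    InS0per ε (foldedVortexSpin θ m k) := by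
  have left_boundary (j : ℤ) : foldedVortexSpin θ m k (0, j) = (0, 1) := by
    have fold_zero : foldHalf k 0 = 0 := by unfold foldHalf; omega
    rw [foldedVortexSpin, fold_zero, vortexField_zero, unitSpin,
      unitize_of_norm_eq_one norm_one, Complex.one_im, Complex.one_re]
  refine InS0.inS0per_of_reflect ⟨fun p _ => sqnorm_unitSpin _, fun j _ => left_boundary j⟩ ?_ ?_
  · intro i j
    simp only [foldedVortexSpin, hk, foldHalf_sub]
  · intro i j
    simp only [foldedVortexSpin, hk, foldHalf_sub]

namespace IsHelicalScale

variable {δ θ : ℝ} {m : ℕ}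

lemma vortexWeight_nonneg (h : IsHelicalScale δ θ m) (x y : ℕ) : 0 ≤ vortexWeight δ θ m x y := by
  have := h.pos
  have := coreWeight_nonneg θ m x y
  unfold vortexWeight
  split_ifs <;> positivity

lemma stencilEnergy_unitSpin_le_mul (h : IsHelicalScale δ θ m) {z v w : ℂ} (hv : ‖v‖ = 1)
    (hz : ‖z - v‖ ≤ 3 * √δ) (hw : ‖w - v‖ ≤ 3 * √δ) :
    stencilEnergy δ (unitSpin z) (unitSpin v) (unitSpin w) ≤ 87616 * δ := by
  have v_ne : v ≠ 0 := norm_ne_zero_iff.1 (hv ▸ one_ne_zero)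
  have second_diff : ‖z - 2 * v + w‖ ≤ 6 * √δ := by
    rw [show z - 2 * v + w = (z - v) + (w - v) by ring]
    exact (norm_add_le _ _).trans (by linarith)
  have sqrt_nonneg := h.sqrt_pos.le
  have δ_le : δ ≤ √δ := by nlinarith [h.sqrt_sq, h.sqrt_lt_one]
  have z_sq : ‖z - v‖ ^ 2 ≤ (3 * √δ) ^ 2 := by gcongr
  have w_sq : ‖w - v‖ ^ 2 ≤ (3 * √δ) ^ 2 := by gcongr
  have δ_nonneg := h.pos.le
  refine (stencilEnergy_unitSpin_le h.pos.le v_ne z w).trans ?_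
  have bound_eq : 87616 * δ = (296 * √δ) ^ 2 := by rw [mul_pow, h.sqrt_sq]; ring
  rw [hv, one_pow, div_one, div_one, bound_eq]
  refine pow_le_pow_left₀ (by positivity) ?_ 2
  rw [mul_pow, h.sqrt_sq] at z_sq w_sq
  linarith

lemma natCast_sq_mul_le_four (h : IsHelicalScale δ θ m) : (m : ℝ) ^ 2 * δ ≤ 4 := by
  have := pow_le_pow_left₀ (by positivity) h.mul_sqrt_le_two 2
  rw [mul_pow, h.sqrt_sq] at this
  linarith

lemma stencilEnergy_unitSpin_le_div_pow_four (h : IsHelicalScale δ θ m) {z v w : ℂ} (hv : v ≠ 0)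
    (hv' : ‖v‖ ≤ 1) (hz : ‖z - v‖ ≤ 3 * √δ) (hw : ‖w - v‖ ≤ 3 * √δ)
    (second_diff : ‖z - 2 * v + w‖ ≤ 2 * δ) :
    stencilEnergy δ (unitSpin z) (unitSpin v) (unitSpin w) ≤ (292 * δ / ‖v‖ ^ 2) ^ 2 := by
  have δ_nonneg := h.pos.le
  have norm_pos : 0 < ‖v‖ := norm_pos_iff.2 hv
  have sq_le : ‖v‖ ^ 2 ≤ ‖v‖ := pow_le_of_le_one norm_pos.le hv' two_ne_zero
  have z_sq : ‖z - v‖ ^ 2 ≤ (3 * √δ) ^ 2 := by gcongr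
  have w_sq : ‖w - v‖ ^ 2 ≤ (3 * √δ) ^ 2 := by gcongr
  rw [mul_pow, h.sqrt_sq] at z_sq w_sq
  have linear_term : ‖z - 2 * v + w‖ / ‖v‖ ≤ 2 * δ / ‖v‖ ^ 2 := by gcongr
  have quadratic_term :
      16 * (‖z - v‖ ^ 2 + ‖w - v‖ ^ 2) / ‖v‖ ^ 2 ≤ 288 * δ / ‖v‖ ^ 2 :=
    div_le_div_of_nonneg_right (by linarith) (by positivity)
  have constant_term : 2 * δ ≤ 2 * δ / ‖v‖ ^ 2 :=
    le_div_self (by positivity) (by positivity) (sq_le.trans hv')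
  refine (stencilEnergy_unitSpin_le h.pos.le hv z w).trans (pow_le_pow_left₀ (by positivity) ?_ 2)
  rw [show 292 * δ / ‖v‖ ^ 2 = 2 * δ / ‖v‖ ^ 2 + 288 * δ / ‖v‖ ^ 2 + 2 * δ / ‖v‖ ^ 2 by ring]
  linarith

lemma stencilEnergy_unitSpin_mul_sq_le (h : IsHelicalScale δ θ m) {z v w : ℂ}
    (hv : ‖v‖ ≤ 1) (hz : ‖z - v‖ ≤ 3 * √δ) (hw : ‖w - v‖ ≤ 3 * √δ)
    (second_diff : ‖z - 2 * v + w‖ ≤ 2 * δ) :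
    stencilEnergy δ (unitSpin z) (unitSpin v) (unitSpin w) * (1 + (m : ℝ) ^ 2 * ‖v‖ ^ 2) ^ 2 ≤
      1172 ^ 2 := by
  have le_sixteen := stencilEnergy_unitSpin_le_sixteen h.pos.le h.lt_one.le z v w
  have away_from_zero := h.stencilEnergy_unitSpin_le_div_pow_four (v := v) (z := z) (w := w)
  set T := stencilEnergy δ (unitSpin z) (unitSpin v) (unitSpin w) with T_def
  have T_nonneg : 0 ≤ T := stencilEnergy_nonneg ..
  have δ_nonneg := h.pos.le
  have sqrt_le_four : √T ≤ 4 := (sqrt_le_left (by norm_num)).2 (by linarith)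
  have sqrt_mul_le : √T * (m ^ 2 * ‖v‖ ^ 2) ≤ 1168 := by
    rcases eq_or_ne v 0 with rfl | v_ne
    · norm_num
    have sqrt_le : √T ≤ 292 * δ / ‖v‖ ^ 2 :=
      (sqrt_le_left (by positivity)).2 (away_from_zero v_ne hv hz hw second_diff)
    calc √T * (m ^ 2 * ‖v‖ ^ 2) ≤ 292 * δ / ‖v‖ ^ 2 * (m ^ 2 * ‖v‖ ^ 2) := by gcongr
      _ = 292 * (m ^ 2 * δ) := by field_simp
      _ ≤ 1168 := by linarith [h.natCast_sq_mul_le_four]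
  calc T * (1 + m ^ 2 * ‖v‖ ^ 2) ^ 2 = (√T * (1 + m ^ 2 * ‖v‖ ^ 2)) ^ 2 := by
        rw [mul_pow, Real.sq_sqrt T_nonneg]
    _ ≤ 1172 ^ 2 := by
        gcongr
        linarith

lemma stencilEnergy_unitSpin_le_coreWeight (h : IsHelicalScale δ θ m) {x y : ℕ} (hx : x < m)
    {z w : ℂ} (hz : ‖z - vortexField θ m x y‖ ≤ 3 * √δ) (hw : ‖w - vortexField θ m x y‖ ≤ 3 * √δ)
    (second_diff : ‖z - 2 * vortexField θ m x y + w‖ ≤ 2 * δ) :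
    stencilEnergy δ (unitSpin z) (unitSpin (vortexField θ m x y)) (unitSpin w) ≤
      1172 ^ 2 * coreWeight θ m x y := by
  have xm : (x : ℤ) ≤ m := by exact_mod_cast hx.le
  have energy_le := h.stencilEnergy_unitSpin_mul_sq_le
    (norm_vortexField_le_one x.cast_nonneg xm y) hz hw second_diff
  have norm_ge := sq_norm_vortexField_ge (θ := θ) x.cast_nonneg xm y
  set q := ‖vortexField θ m x y‖ ^ 2
  have cos_nonneg := one_add_cos_nonneg (θ * y)
  rw [coreWeight, if_pos hx, ← mul_inv, ← div_eq_mul_inv, le_div_iff₀ (by positivity)]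
  refine le_trans (mul_le_mul_of_nonneg_left ?_ (stencilEnergy_nonneg ..)) energy_le
  rw [Int.cast_natCast, Int.cast_natCast] at norm_ge
  set A := (m : ℝ) ^ 2 * (1 - 2 * ((x : ℝ) / m)) ^ 2 / 8 with A_def
  set B := (m : ℝ) ^ 2 * (1 + cos (θ * y)) / 8 with B_def
  have A_nonneg : 0 ≤ A := by positivity
  have B_nonneg : 0 ≤ B := by positivity
  have sum_le : A + B ≤ m ^ 2 * q := by
    linarith [mul_le_mul_of_nonneg_left norm_ge (sq_nonneg (m : ℝ))]
  calc (1 + A) * (1 + B) ≤ (1 + (A + B)) ^ 2 := by nlinarith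
    _ ≤ (1 + m ^ 2 * q) ^ 2 := by gcongr

lemma norm_vortexField_near_fst_le (h : IsHelicalScale δ θ m) {x x' : ℤ} (hx : |x' - x| ≤ 1)
    (y : ℤ) : ‖vortexField θ m x' y - vortexField θ m x y‖ ≤ 3 * √δ :=
  norm_sub_le_of_abs_sub_le_one (f := fun x => vortexField θ m x y)
    (fun x => h.norm_vortexField_add_one_fst_sub_le x y) hx

lemma norm_vortexField_near_snd_le (h : IsHelicalScale δ θ m) {x : ℤ} (hx : 0 ≤ x) {y y' : ℤ}
    (hy : |y' - y| ≤ 1) : ‖vortexField θ m x y' - vortexField θ m x y‖ ≤ 3 * √δ :=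
  norm_sub_le_of_abs_sub_le_one (h.norm_vortexField_add_one_snd_sub_le hx) hy

lemma stencilEnergy_vortexField_fst_le (h : IsHelicalScale δ θ m) (x y : ℕ) :
    stencilEnergy δ (unitSpin (vortexField θ m (x - 1) y)) (unitSpin (vortexField θ m x y))
      (unitSpin (vortexField θ m (x + 1) y)) ≤ vortexWeight δ θ m x y := by
  have left := h.norm_vortexField_near_fst_le (x := x) (x' := x - 1) (by simp) y
  have right := h.norm_vortexField_near_fst_le (x := x) (x' := x + 1) (by simp) y
  rcases lt_trichotomy x m with hx | rfl | hx
  · rw [vortexWeight, if_neg hx.ne, mul_zero, add_zero]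
    refine h.stencilEnergy_unitSpin_le_coreWeight hx left right ?_
    rw [vortexField_second_diff_fst θ (by exact_mod_cast hx), norm_zero]
    linarith [h.pos]
  · rw [vortexWeight, if_pos rfl, mul_one]
    have unit := norm_vortexField_of_ge (θ := θ) h.one_le le_rfl (y : ℤ)
    linarith [h.stencilEnergy_unitSpin_le_mul unit left right, coreWeight_nonneg θ x x y]
  · have hx' : (m : ℤ) < x := by exact_mod_cast hx
    rw [stencilEnergy_unitSpin_eq_zero (norm_vortexField_of_ge h.one_le (by omega) _)
      (norm_vortexField_of_ge h.one_le (by omega) _) (norm_vortexField_of_ge h.one_le (by omega) _)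
      (h.vortexField_helix_fst hx' y)]
    exact h.vortexWeight_nonneg x y

lemma stencilEnergy_vortexField_snd_le (h : IsHelicalScale δ θ m) (x y : ℕ) :
    stencilEnergy δ (unitSpin (vortexField θ m x (y - 1))) (unitSpin (vortexField θ m x y))
      (unitSpin (vortexField θ m x (y + 1))) ≤ vortexWeight δ θ m x y := by
  rcases lt_or_ge x m with hx | hx
  · rw [vortexWeight, if_neg hx.ne, mul_zero, add_zero]
    have x_nonneg : (0 : ℤ) ≤ x := x.cast_nonneg
    exact h.stencilEnergy_unitSpin_le_coreWeight hx
      (h.norm_vortexField_near_snd_le x_nonneg (by simp))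
      (h.norm_vortexField_near_snd_le x_nonneg (by simp))
      (h.norm_vortexField_second_diff_snd_le x_nonneg (by exact_mod_cast hx.le) y)
  · have hx' : (m : ℤ) ≤ x := by exact_mod_cast hx
    rw [stencilEnergy_unitSpin_eq_zero (norm_vortexField_of_ge h.one_le hx' _)
      (norm_vortexField_of_ge h.one_le hx' _) (norm_vortexField_of_ge h.one_le hx' _)
      (h.vortexField_helix_snd hx' y)]
    exact h.vortexWeight_nonneg x y

lemma stencilEnergy_foldedVortexSpin_fst_le (h : IsHelicalScale δ θ m) {k : ℕ} (hmk : 25 * m ≤ k)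
    {i j : ℕ} (hi : i ≤ k) (hj : j ≤ k) :
    stencilEnergy δ (foldedVortexSpin θ m k (i - 1, j)) (foldedVortexSpin θ m k (i, j))
      (foldedVortexSpin θ m k (i + 1, j)) ≤ foldedVortexWeight δ θ m k i j := by
  have δ_nonneg := h.pos.le
  have weight_nonneg := h.vortexWeight_nonneg (min i (k - i)) (min j (k - j))
  have core_nonneg : 0 ≤ (if min i (k - i) < m then (1 : ℝ) else 0) * midIndicator k 1 j :=
    mul_nonneg (by split_ifs <;> norm_num) (midIndicator_nonneg k 1 j)
  have mid_nonneg : 0 ≤ δ * midIndicator k 1 i := mul_nonneg δ_nonneg (midIndicator_nonneg k 1 i)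
  have mid_nonneg' : 0 ≤ δ * midIndicator k 1 j := mul_nonneg δ_nonneg (midIndicator_nonneg k 1 j)
  simp only [foldedVortexSpin, foldedVortexWeight]
  rcases stencilEnergy_foldHalf δ (fun x => unitSpin (vortexField θ m x (foldHalf k j))) k i with
    middle | unfolded
  · have one_le := h.one_le
    have beyond : (m : ℤ) ≤ foldHalf k i := by
      rw [abs_le] at middle
      unfold foldHalf
      omega
    have mid_eq : midIndicator k 1 i = 1 := midIndicator_eq_one (by simpa using middle)
    rw [mid_eq]
    refine (h.stencilEnergy_unitSpin_le_mul (norm_vortexField_of_ge h.one_le beyond _)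
      (h.norm_vortexField_near_fst_le (abs_foldHalf_sub_one_sub_le k i) _)
      (h.norm_vortexField_near_fst_le (abs_foldHalf_add_one_sub_le k i) _)).trans ?_
    linarith
  · refine unfolded.trans_le ?_
    rw [foldHalf_natCast hi, foldHalf_natCast hj]
    linarith [h.stencilEnergy_vortexField_fst_le (min i (k - i)) (min j (k - j))]

lemma stencilEnergy_foldedVortexSpin_snd_le (h : IsHelicalScale δ θ m) {k i j : ℕ} (hi : i ≤ k)
    (hj : j ≤ k) :
    stencilEnergy δ (foldedVortexSpin θ m k (i, j - 1)) (foldedVortexSpin θ m k (i, j))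
      (foldedVortexSpin θ m k (i, j + 1)) ≤ foldedVortexWeight δ θ m k i j := by
  have δ_nonneg := h.pos.le
  have weight_nonneg := h.vortexWeight_nonneg (min i (k - i)) (min j (k - j))
  have core_nonneg : 0 ≤ (if min i (k - i) < m then (1 : ℝ) else 0) * midIndicator k 1 j :=
    mul_nonneg (by split_ifs <;> norm_num) (midIndicator_nonneg k 1 j)
  have mid_nonneg : 0 ≤ δ * midIndicator k 1 i := mul_nonneg δ_nonneg (midIndicator_nonneg k 1 i)
  have mid_nonneg' : 0 ≤ δ * midIndicator k 1 j := mul_nonneg δ_nonneg (midIndicator_nonneg k 1 j)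
  simp only [foldedVortexSpin, foldedVortexWeight]
  rcases stencilEnergy_foldHalf δ (fun y => unitSpin (vortexField θ m (foldHalf k i) y)) k j with
    middle | unfolded
  · have mid_eq : midIndicator k 1 j = 1 := midIndicator_eq_one (by simpa using middle)
    rw [mid_eq] at core_nonneg ⊢
    rw [foldHalf_natCast hi]
    rcases lt_or_ge (min i (k - i)) m with hx | hx
    · rw [if_pos hx]
      linarith [stencilEnergy_unitSpin_le_sixteen h.pos.le h.lt_one.le
        (vortexField θ m (min i (k - i) : ℕ) (foldHalf k (j - 1)))
        (vortexField θ m (min i (k - i) : ℕ) (foldHalf k j))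
        (vortexField θ m (min i (k - i) : ℕ) (foldHalf k (j + 1)))]
    · have x_nonneg : (0 : ℤ) ≤ (min i (k - i) : ℕ) := Nat.cast_nonneg _
      refine (h.stencilEnergy_unitSpin_le_mul
        (norm_vortexField_of_ge h.one_le (by exact_mod_cast hx) _)
        (h.norm_vortexField_near_snd_le x_nonneg (abs_foldHalf_sub_one_sub_le k j))
        (h.norm_vortexField_near_snd_le x_nonneg (abs_foldHalf_add_one_sub_le k j))).trans ?_
      linarith
  · refine unfolded.trans_le ?_
    rw [foldHalf_natCast hi, foldHalf_natCast hj]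
    linarith [h.stencilEnergy_vortexField_snd_le (min i (k - i)) (min j (k - j))]

lemma foldedVortexWeight_nonneg (h : IsHelicalScale δ θ m) (k i j : ℕ) :
    0 ≤ foldedVortexWeight δ θ m k i j := by
  have δ_pos := h.pos
  have weight_nonneg := h.vortexWeight_nonneg (min i (k - i)) (min j (k - j))
  have mid_nonneg := midIndicator_nonneg k 1 i
  have mid_nonneg' := midIndicator_nonneg k 1 j
  unfold foldedVortexWeight
  split_ifs <;> positivity

lemma two_le_sq_mul_sq (h : IsHelicalScale δ θ m) : 2 ≤ (m : ℝ) ^ 2 * θ ^ 2 := by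
  have one_le : 1 ≤ (m * √δ) ^ 2 := one_le_pow₀ h.one_le_mul_sqrt
  rw [mul_pow, h.sqrt_sq] at one_le
  linarith [mul_le_mul_of_nonneg_left h.two_mul_le_sq (sq_nonneg (m : ℝ))]

lemma sum_vortexWeight_le (h : IsHelicalScale δ θ m) {k : ℕ} (hmk : m ≤ k) :
    ∑ x ∈ range (k + 1), ∑ y ∈ range (k + 1), vortexWeight δ θ m x y ≤
      1172 ^ 2 * (1000 * (θ * k / 6 + 1)) + 87616 * δ * (k + 1) := by
  have cores := sum_coreWeight_le h.one_le hmk h.angle_pos h.two_le_sq_mul_sq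
  have kinks : ∑ x ∈ range (k + 1), ∑ _y ∈ range (k + 1), (if x = m then (1 : ℝ) else 0) =
      k + 1 := by
    simp only [sum_const, card_range, nsmul_eq_mul, ← mul_sum]
    rw [sum_ite_eq', if_pos (mem_range.2 (by omega)), mul_one, Nat.cast_succ]
  simp only [vortexWeight, sum_add_distrib, ← mul_sum]
  rw [kinks]
  linarith

lemma sum_foldedVortexWeight_le (h : IsHelicalScale δ θ m) {k : ℕ} (hmk : m ≤ k) :
    ∑ i ∈ range (k + 1), ∑ j ∈ range (k + 1), foldedVortexWeight δ θ m k i j ≤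
      1172 ^ 2 * (4000 * (θ * k / 6 + 1)) + 96 * m + 87616 * δ * (10 * (k + 1)) := by
  have vortices := sum_sum_fold_le h.vortexWeight_nonneg k
  have strip : ∑ i ∈ range (k + 1), (if min i (k - i) < m then (1 : ℝ) else 0) ≤ 2 * m := by
    refine (sum_fold_le (f := fun x => if x < m then (1 : ℝ) else 0)
      (fun x => by split_ifs <;> norm_num) k).trans ?_
    rw [sum_boole]
    have card_le : #((range (k + 1)).filter (· < m)) ≤ m := by
      refine (card_le_card fun x hx => ?_).trans_eq (card_range m)
      exact mem_range.2 (mem_filter.1 hx).2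
    gcongr
  have mid := sum_midIndicator_le k 1
  norm_num at mid
  have strip_mid : ∑ i ∈ range (k + 1), ∑ j ∈ range (k + 1),
      (if min i (k - i) < m then (1 : ℝ) else 0) * midIndicator k 1 j ≤ 2 * m * 3 := by
    rw [← sum_mul_sum]
    gcongr
    exact sum_nonneg fun j _ => midIndicator_nonneg k 1 j
  have midlines : ∑ i ∈ range (k + 1), ∑ j ∈ range (k + 1),
      (midIndicator k 1 i + midIndicator k 1 j) ≤ 6 * (k + 1) := by
    simp only [sum_add_distrib, sum_const, card_range, nsmul_eq_mul, ← mul_sum]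
    push_cast
    linarith [mul_le_mul_of_nonneg_left mid (show (0 : ℝ) ≤ k + 1 by positivity)]
  have scaled_midlines := mul_le_mul_of_nonneg_left midlines
    (show 0 ≤ 87616 * δ by linarith [h.pos])
  simp only [foldedVortexWeight, sum_add_distrib, ← mul_sum] at vortices strip_mid scaled_midlines ⊢
  linarith [h.sum_vortexWeight_le hmk]

end IsHelicalScale

lemma exists_vortex_field {ε δ : ℝ} (hε : 0 < ε) (hε' : ε < 1 / 2) (hδ : δ < 1)
    (hεδ : ε ≤ δ) (ratio_lt : ε / √δ < 1 / 100) :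
    ∃ u, InS0per ε u ∧ E ε δ u ≤ 10 ^ 11 * (ε * √δ) := by
  obtain ⟨k, hk, two_le, k_mul_lt, le_k_mul⟩ := exists_natCast_eq_Kof hε hε'
  obtain ⟨θ, m, h⟩ := exists_isHelicalScale (hε.trans_le hεδ) hδ
  have sqrt_pos := h.sqrt_pos
  have sqrt_sq := h.sqrt_sq
  have sqrt_lt_one := h.sqrt_lt_one
  have two_le_real : (2 : ℝ) ≤ k := by exact_mod_cast two_le
  have half_le : 1 / 2 ≤ k * ε := by linarith
  have hmk : 25 * m ≤ k := h.mul_le_of_ratio_lt half_le ratio_lt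
  refine ⟨foldedVortexSpin θ m k, foldedVortexSpin_inS0per hk θ m, ?_⟩
  have energy_le := E_le_sum_of_stencilEnergy_le (δ := δ) hk two_le (h.foldedVortexWeight_nonneg k)
    (fun i j _ hi hj => h.stencilEnergy_foldedVortexSpin_fst_le hmk hi.le hj)
    (fun i j hi _ hj => h.stencilEnergy_foldedVortexSpin_snd_le hi hj.le)
  have k_mul_sqrt_sq : 1 ≤ 2 * (k * √δ * √δ) := by
    calc 1 ≤ 2 * (k * ε) := by linarith
      _ ≤ 2 * (k * δ) := by gcongr
      _ = 2 * (k * √δ * √δ) := by linear_combination (-2 * k : ℝ) * sqrt_sq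
  have m_le : (m : ℝ) ≤ 4 * (k * √δ) :=
    le_of_mul_le_mul_right (by linarith [h.mul_sqrt_le_two]) sqrt_pos
  have k_mul_sqrt : 1 ≤ 2 * (k * √δ) := by
    refine k_mul_sqrt_sq.trans ?_
    gcongr
    exact mul_le_of_le_one_right (by positivity) sqrt_lt_one.le
  have δ_le : δ * (k + 1) ≤ 2 * (k * √δ) := by
    calc δ * (k + 1) = √δ * √δ * (k + 1) := by rw [mul_self_sqrt h.pos.le]
      _ ≤ √δ * 1 * (k + k) := by gcongr; linarith
      _ = 2 * (k * √δ) := by ring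
  have θ_le : θ * k ≤ 3 * (k * √δ) := by
    calc θ * k ≤ 3 * √δ * k := by gcongr; exact (le_abs_self θ).trans h.abs_angle_le
      _ = 3 * (k * √δ) := by ring
  have weight_le :
      ∑ i ∈ range (k + 1), ∑ j ∈ range (k + 1), foldedVortexWeight δ θ m k i j ≤
        10 ^ 11 * (k * √δ) := by
    linarith [h.sum_foldedVortexWeight_le (k := k) (by omega)]
  calc E ε δ (foldedVortexSpin θ m k) ≤ ε ^ 2 * (10 ^ 11 * (k * √δ)) := energy_le.trans (by gcongr)
    _ = 10 ^ 11 * (ε * √δ) * (k * ε) := by ring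
    _ ≤ 10 ^ 11 * (ε * √δ) := mul_le_of_le_one_right (by positivity) k_mul_lt.le

/-! ### The branching profile -/

/-- The largest power of two not exceeding `x` (and `1` if `x ≤ 0`). -/
def dyadicScale (x : ℤ) : ℤ := 2 ^ Nat.log 2 x.toNat

lemma dyadicScale_pos (x : ℤ) : 0 < dyadicScale x := by unfold dyadicScale; positivity

lemma dyadicScale_eq {x : ℤ} {n : ℕ} (hx : 2 ^ n ≤ x) (hx' : x < 2 * 2 ^ n) :
    dyadicScale x = 2 ^ n := by
  lift x to ℕ using le_trans (by positivity) hx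
  rw [dyadicScale, Int.toNat_natCast, Nat.log_eq_of_pow_le_of_lt_pow (m := n)]
  · exact_mod_cast hx
  · rw [pow_succ']
    exact_mod_cast hx'

lemma dyadicScale_eq_dyadicScale {x x' : ℤ} (hx : dyadicScale x ≤ x')
    (hx' : x' < 2 * dyadicScale x) : dyadicScale x' = dyadicScale x :=
  dyadicScale_eq hx hx'

lemma dyadicScale_le {x : ℤ} (hx : 0 < x) : dyadicScale x ≤ x := by
  lift x to ℕ using hx.le
  rw [dyadicScale, Int.toNat_natCast]
  exact_mod_cast Nat.pow_log_le_self 2 (by omega : x ≠ 0)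

lemma lt_two_mul_dyadicScale {x : ℤ} (hx : 0 < x) : x < 2 * dyadicScale x := by
  lift x to ℕ using hx.le
  rw [dyadicScale, ← pow_succ']
  exact_mod_cast Nat.lt_pow_succ_log_self one_lt_two x

lemma dyadicScale_add_one {x : ℤ} (hx : 0 < x) :
    dyadicScale (x + 1) = dyadicScale x ∨
      x + 1 = 2 * dyadicScale x ∧ dyadicScale (x + 1) = 2 * dyadicScale x := by
  have scale_le := dyadicScale_le hx
  rcases (Int.add_one_le_iff.2 (lt_two_mul_dyadicScale hx)).lt_or_eq with lt | eq
  · exact .inl (dyadicScale_eq_dyadicScale (by omega) lt)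
  · have two_mul_scale : 2 * dyadicScale x = 2 ^ (Nat.log 2 x.toNat + 1) := (pow_succ' _ _).symm
    refine .inr ⟨eq, ?_⟩
    rw [eq, two_mul_scale]
    exact dyadicScale_eq le_rfl (by linarith [pow_pos (two_pos (α := ℤ)) (Nat.log 2 x.toNat + 1)])

/-- The distance from `y` to the nearest multiple of `p`. -/
def distToMultiples (p y : ℤ) : ℤ := min (y % p) (p - y % p)

lemma distToMultiples_nonneg {p : ℤ} (hp : 0 < p) (y : ℤ) : 0 ≤ distToMultiples p y := by
  have := Int.emod_nonneg y hp.ne'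
  have := Int.emod_lt_of_pos y hp
  unfold distToMultiples; omega

lemma two_mul_distToMultiples_le (p y : ℤ) : 2 * distToMultiples p y ≤ p := by
  unfold distToMultiples; omega

lemma add_emod_of_lt {p y b : ℤ} (h : 0 ≤ y % p + b) (h' : y % p + b < p) :
    (y + b) % p = y % p + b := by
  rw [← Int.emod_add_emod, Int.emod_eq_of_lt h h']

lemma abs_distToMultiples_add_one_sub_le {p : ℤ} (hp : 0 < p) (y : ℤ) :
    |distToMultiples p (y + 1) - distToMultiples p y| ≤ 1 := by
  have emod_nonneg := Int.emod_nonneg y hp.ne'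
  have emod_lt := Int.emod_lt_of_pos y hp
  unfold distToMultiples
  rcases (Int.add_one_le_iff.2 emod_lt).lt_or_eq with lt | eq
  · rw [add_emod_of_lt (by omega) lt, abs_le]
    omega
  · rw [← Int.emod_add_emod, eq, Int.emod_self, abs_le]
    omega

lemma emod_two_mul {p : ℤ} (hp : 0 < p) (y : ℤ) :
    y % (2 * p) = y % p ∨ y % (2 * p) = y % p + p := by
  have emod_nonneg := Int.emod_nonneg y (by omega : 2 * p ≠ 0)
  have emod_lt := Int.emod_lt_of_pos y (by omega : 0 < 2 * p)
  have emod_emod : y % (2 * p) % p = y % p := Int.emod_emod_of_dvd y (Dvd.intro_left 2 rfl)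
  rcases lt_or_ge (y % (2 * p)) p with lt | ge
  · exact .inl (by rw [← emod_emod, Int.emod_eq_of_lt emod_nonneg lt])
  · have sub_emod : (y % (2 * p) - p) % p = y % p := by rw [Int.sub_emod_right, emod_emod]
    rw [Int.emod_eq_of_lt (by omega) (by omega)] at sub_emod
    omega

lemma abs_sub_distToMultiples_two_mul {h : ℤ} (hh : 0 < h) (y : ℤ) :
    |2 * h - distToMultiples (4 * (2 * h)) y| = 2 * h - distToMultiples (4 * h) y := by
  have emod_nonneg := Int.emod_nonneg y (by omega : 4 * h ≠ 0)
  have emod_lt := Int.emod_lt_of_pos y (by omega : 0 < 4 * h)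
  have doubling := emod_two_mul (by omega : 0 < 4 * h) y
  rw [show 2 * (4 * h) = 4 * (2 * h) by ring] at doubling
  unfold distToMultiples
  rcases doubling with emod_eq | emod_eq <;> rw [emod_eq]
  · rcases abs_cases (2 * h - min (y % (4 * h)) (4 * (2 * h) - y % (4 * h))) <;> omega
  · rcases abs_cases (2 * h - min (y % (4 * h) + 4 * h) (4 * (2 * h) - (y % (4 * h) + 4 * h))) <;>
      omega

/-- The branching profile: a zigzag in `y` whose period `4 * dyadicScale x` doubles with every
doubling of the distance `x` to the boundary, arranged so that it is continuous across the
doublings. -/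
def branchProfile (x y : ℤ) : ℤ :=
  if x ≤ 0 then 0 else |x - distToMultiples (4 * dyadicScale x) y|

lemma branchProfile_of_pos {x : ℤ} (hx : 0 < x) (y : ℤ) :
    branchProfile x y = |x - distToMultiples (4 * dyadicScale x) y| :=
  if_neg hx.not_ge

lemma abs_branchProfile_add_one_fst_sub_le (x y : ℤ) :
    |branchProfile (x + 1) y - branchProfile x y| ≤ 1 := by
  have scale_pos := dyadicScale_pos x
  have dist_nonneg := distToMultiples_nonneg (p := 4 * dyadicScale x) (by omega) y
  have two_mul_dist_le := two_mul_distToMultiples_le (4 * dyadicScale x) y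
  rcases lt_trichotomy x 0 with hx | rfl | hx
  · simp [branchProfile, hx.le, Int.add_one_le_iff.2 hx]
  · have scale_one : dyadicScale 1 = 1 := by simp [dyadicScale]
    have scale_zero : dyadicScale 0 = 1 := by simp [dyadicScale]
    rw [zero_add, branchProfile_of_pos one_pos, branchProfile, if_pos le_rfl, scale_one]
    rw [scale_zero] at dist_nonneg two_mul_dist_le
    rw [sub_zero, abs_abs, abs_le]
    omega
  · rw [branchProfile_of_pos hx, branchProfile_of_pos (by omega)]
    rcases dyadicScale_add_one hx with scale_eq | ⟨succ_eq, scale_eq⟩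
    · rw [scale_eq]
      refine (abs_abs_sub_abs_le _ _).trans (by rw [abs_le]; omega)
    · rw [scale_eq, succ_eq, abs_sub_distToMultiples_two_mul scale_pos, abs_le]
      rcases abs_cases (x - distToMultiples (4 * dyadicScale x) y) <;> omega

lemma abs_branchProfile_add_one_snd_sub_le (x y : ℤ) :
    |branchProfile x (y + 1) - branchProfile x y| ≤ 1 := by
  unfold branchProfile
  split_ifs with hx
  · norm_num
  · refine (abs_abs_sub_abs_le _ _).trans ?_
    rw [sub_sub_sub_cancel_left, abs_sub_comm]
    exact abs_distToMultiples_add_one_sub_le (by linarith [dyadicScale_pos x]) y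

/-- The branching profile, started at distance `m` from the boundary and reflected in the midlines
of the square. -/
def foldedProfile (k m i j : ℤ) : ℤ := branchProfile (foldHalf k i - m) (foldHalf k j)

lemma abs_sub_le_one_of_abs_sub_le_one {f : ℤ → ℤ} (hf : ∀ x, |f (x + 1) - f x| ≤ 1) {x x' : ℤ}
    (h : |x' - x| ≤ 1) : |f x' - f x| ≤ 1 := by
  have norm_le := norm_sub_le_of_abs_sub_le_one (f := f) (L := 1)
    (fun x => by rw [Int.norm_eq_abs]; exact_mod_cast hf x) h
  rw [Int.norm_eq_abs] at norm_le
  exact_mod_cast norm_le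

lemma abs_foldedProfile_add_one_fst_sub_le (k m i j : ℤ) :
    |foldedProfile k m (i + 1) j - foldedProfile k m i j| ≤ 1 :=
  abs_sub_le_one_of_abs_sub_le_one (f := fun x => branchProfile x (foldHalf k j))
    (fun x => abs_branchProfile_add_one_fst_sub_le x _)
    (by simpa using abs_foldHalf_add_one_sub_le k i)

lemma abs_foldedProfile_add_one_snd_sub_le (k m i j : ℤ) :
    |foldedProfile k m i (j + 1) - foldedProfile k m i j| ≤ 1 :=
  abs_sub_le_one_of_abs_sub_le_one (abs_branchProfile_add_one_snd_sub_le _)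
    (abs_foldHalf_add_one_sub_le k j)

lemma foldedProfile_sub_fst (k m i j : ℤ) :
    foldedProfile k m (k - i) j = foldedProfile k m i j := by
  rw [foldedProfile, foldHalf_sub, foldedProfile]

lemma foldedProfile_sub_snd (k m i j : ℤ) :
    foldedProfile k m i (k - j) = foldedProfile k m i j := by
  rw [foldedProfile, foldHalf_sub, foldedProfile]

lemma foldedProfile_of_le {m i : ℤ} (h : i ≤ m) (k j : ℤ) : foldedProfile k m i j = 0 :=
  if_pos (by unfold foldHalf; omega)

/-! ### Windows on which the profile is affine -/

/-- `f` is affine with slopes `±1` on the square of half-width `W` centred at `(i, j)`. -/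
def IsAffineAround (W : ℤ) (f : ℤ → ℤ → ℤ) (i j : ℤ) : Prop :=
  ∃ A s t : ℤ, IsUnit s ∧ IsUnit t ∧
    ∀ a b, |a| ≤ W → |b| ≤ W → f (i + a) (j + b) = A + s * a + t * b

lemma IsAffineAround.swap {W : ℤ} {f : ℤ → ℤ → ℤ} {i j : ℤ} (h : IsAffineAround W f i j) :
    IsAffineAround W (fun a b => f b a) j i := by
  obtain ⟨A, s, t, hs, ht, eq⟩ := h
  exact ⟨A, t, s, ht, hs, fun a b ha hb => (eq b a hb ha).trans (by ring)⟩

/-- Sites at distance more than `W` from the creases of the branching profile: the doublings in `x`,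
the extrema of the zigzag in `y`, and its zeros. -/
def IsAffineSite (W x y : ℤ) : Prop :=
  dyadicScale x + W ≤ x ∧ x + W < 2 * dyadicScale x ∧
    ((W ≤ y % (4 * dyadicScale x) ∧ y % (4 * dyadicScale x) ≤ 2 * dyadicScale x - W) ∨
      (2 * dyadicScale x + W ≤ y % (4 * dyadicScale x) ∧
        y % (4 * dyadicScale x) < 4 * dyadicScale x - W)) ∧
    2 * W ≤ |x - distToMultiples (4 * dyadicScale x) y|

lemma abs_isUnit_mul {s : ℤ} (hs : IsUnit s) (a : ℤ) : |s * a| = |a| := by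
  rw [abs_mul, Int.isUnit_iff_abs_eq.1 hs, one_mul]

lemma exists_distToMultiples_add_eq {W h y : ℤ} (hh : 0 < h)
    (hy : (W ≤ y % (4 * h) ∧ y % (4 * h) ≤ 2 * h - W) ∨
      (2 * h + W ≤ y % (4 * h) ∧ y % (4 * h) < 4 * h - W)) :
    ∃ t : ℤ, IsUnit t ∧
      ∀ b, |b| ≤ W → distToMultiples (4 * h) (y + b) = distToMultiples (4 * h) y + t * b := by
  have emod_nonneg := Int.emod_nonneg y (by omega : 4 * h ≠ 0)
  unfold distToMultiples
  rcases hy with hy | hy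
  · refine ⟨1, isUnit_one, fun b hb => ?_⟩
    rw [abs_le] at hb
    rw [add_emod_of_lt (by omega) (by omega)]
    omega
  · refine ⟨-1, isUnit_one.neg, fun b hb => ?_⟩
    rw [abs_le] at hb
    rw [add_emod_of_lt (by omega) (by omega)]
    omega

lemma IsAffineSite.isAffineAround_branchProfile {W x y : ℤ}
    (h : IsAffineSite W x y) : IsAffineAround W branchProfile x y := by
  obtain ⟨scale_le, lt_scale, zigzag, far_from_zero⟩ := h
  obtain ⟨t, ht, dist_add⟩ := exists_distToMultiples_add_eq (dyadicScale_pos x) zigzag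
  set D := distToMultiples (4 * dyadicScale x) y
  have profile_eq : ∀ a b, |a| ≤ W → |b| ≤ W →
      branchProfile (x + a) (y + b) = |x - D + (a - t * b)| := by
    intro a b ha hb
    have a_bounds := abs_le.1 ha
    rw [branchProfile_of_pos (by linarith [dyadicScale_pos x]),
      dyadicScale_eq_dyadicScale (by linarith) (by linarith), dist_add b hb]
    congr 1
    ring
  have increment_le : ∀ a b, |a| ≤ W → |b| ≤ W → |a - t * b| ≤ 2 * W := by
    intro a b ha hb
    linarith [abs_sub a (t * b), abs_isUnit_mul ht b]
  rcases abs_cases (x - D) with ⟨abs_eq, sign⟩ | ⟨abs_eq, sign⟩ <;> rw [abs_eq] at far_from_zero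
  · refine ⟨x - D, 1, -t, isUnit_one, ht.neg, fun a b ha hb => ?_⟩
    have increment := abs_le.1 (increment_le a b ha hb)
    rw [profile_eq a b ha hb, abs_of_nonneg (by linarith)]
    ring
  · refine ⟨-(x - D), -1, t, isUnit_one.neg, ht, fun a b ha hb => ?_⟩
    have increment := abs_le.1 (increment_le a b ha hb)
    rw [profile_eq a b ha hb, abs_of_nonpos (by linarith)]
    ring

lemma exists_foldHalf_add_eq {W k i : ℤ} (hi : 2 * W < |2 * i - k|) :
    ∃ s : ℤ, IsUnit s ∧ ∀ a, |a| ≤ W → foldHalf k (i + a) = foldHalf k i + s * a := by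
  unfold foldHalf
  rcases abs_cases (2 * i - k) with h | h
  · exact ⟨-1, isUnit_one.neg, fun a ha => by rw [abs_le] at ha; omega⟩
  · exact ⟨1, isUnit_one, fun a ha => by rw [abs_le] at ha; omega⟩

lemma IsAffineAround.comp_foldHalf {W k m i j : ℤ} {f : ℤ → ℤ → ℤ}
    (h : IsAffineAround W f (foldHalf k i - m) (foldHalf k j))
    (hi : 2 * W < |2 * i - k|) (hj : 2 * W < |2 * j - k|) :
    IsAffineAround W (fun i j => f (foldHalf k i - m) (foldHalf k j)) i j := by
  obtain ⟨A, s, t, hs, ht, eq⟩ := h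
  obtain ⟨s', hs', fold_fst⟩ := exists_foldHalf_add_eq hi
  obtain ⟨t', ht', fold_snd⟩ := exists_foldHalf_add_eq hj
  refine ⟨A, s * s', t * t', hs.mul hs', ht.mul ht', fun a b ha hb => ?_⟩
  change f (foldHalf k (i + a) - m) (foldHalf k (j + b)) = _
  rw [fold_fst a ha, fold_snd b hb, add_sub_right_comm,
    eq _ _ ((abs_isUnit_mul hs' a).trans_le ha) ((abs_isUnit_mul ht' b).trans_le hb)]
  ring

/-! ### Moving averages -/

/-- The mean of `g` over the window of half-width `m` around `x`. -/
noncomputable def windowMean (m : ℕ) (g : ℤ → ℝ) (x : ℤ) : ℝ :=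
  (∑ a ∈ range (2 * m + 1), g (x - m + a)) / (2 * m + 1)

section WindowMean

variable {m : ℕ} {g : ℤ → ℝ}

lemma windowMean_sub (m : ℕ) (g g' : ℤ → ℝ) (x x' : ℤ) :
    windowMean m g x - windowMean m g' x' =
      windowMean m (fun z => g (x - x' + z) - g' z) x' := by
  rw [windowMean, windowMean, windowMean, ← sub_div, ← sum_sub_distrib]
  congr! 4
  ring

lemma abs_windowMean_le {C : ℝ} {x : ℤ} (hg : ∀ y, |g y| ≤ C) : |windowMean m g x| ≤ C := by
  rw [windowMean, abs_div, abs_of_pos (by positivity : (0 : ℝ) < 2 * m + 1),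
    div_le_iff₀ (by positivity)]
  refine (abs_sum_le_sum_abs _ _).trans ((sum_le_sum fun a _ => hg _).trans_eq ?_)
  rw [sum_const, card_range, nsmul_eq_mul]
  push_cast
  ring

lemma windowMean_eq_of_forall {c : ℝ} {x : ℤ} (hg : ∀ a : ℤ, |a| ≤ m → g (x + a) = c) :
    windowMean m g x = c := by
  have values : ∀ a ∈ range (2 * m + 1), g (x - m + a) = c := fun a ha => by
    rw [mem_range] at ha
    rw [sub_add, sub_eq_add_neg]
    exact hg _ (abs_le.2 (by omega))
  rw [windowMean, sum_congr rfl values, sum_const, card_range, nsmul_eq_mul]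
  push_cast
  field_simp

lemma windowMean_add_one_sub (m : ℕ) (g : ℤ → ℝ) (x : ℤ) :
    windowMean m g (x + 1) - windowMean m g x = (g (x + m + 1) - g (x - m)) / (2 * m + 1) := by
  have telescope := sum_range_sub (fun a : ℕ => g (x - m + a)) (2 * m + 1)
  have last : x - (m : ℤ) + ((2 * m + 1 : ℕ) : ℤ) = x + m + 1 := by push_cast; ring
  rw [last, Nat.cast_zero, add_zero] at telescope
  rw [windowMean, windowMean, ← sub_div, ← sum_sub_distrib, ← telescope]
  congr! 4
  push_cast
  ring

lemma windowMean_reflect {k : ℤ} (hg : ∀ y, g (k - y) = g y) (x : ℤ) :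
    windowMean m g (k - x) = windowMean m g x := by
  rw [windowMean, windowMean, ← sum_range_reflect]
  congr 1
  refine sum_congr rfl fun a ha => ?_
  rw [mem_range] at ha
  rw [← hg]
  congr 1
  omega

lemma abs_windowMean_add_one_sub_le (hg : ∀ x, |g (x + 1) - g x| ≤ 1) (x : ℤ) :
    |windowMean m g (x + 1) - windowMean m g x| ≤ 1 := by
  rw [windowMean_sub]
  refine abs_windowMean_le fun y => ?_
  rw [add_sub_cancel_left, add_comm]
  exact hg y

lemma abs_windowMean_second_diff_le (hg : ∀ x, |g (x + 1) - g x| ≤ 1) (x : ℤ) :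
    |(windowMean m g (x + 1) - windowMean m g x) - (windowMean m g x - windowMean m g (x - 1))|
      ≤ 2 / (2 * m + 1) := by
  have backward := windowMean_add_one_sub m g (x - 1)
  rw [sub_add_cancel] at backward
  rw [windowMean_add_one_sub, backward, ← sub_div, abs_div,
    abs_of_pos (by positivity : (0 : ℝ) < 2 * m + 1)]
  have right_end := hg (x + m)
  have left_end := hg (x - 1 - m)
  rw [show x - 1 - (m : ℤ) + 1 = x - m by ring] at left_end
  rw [show x - 1 + (m : ℤ) + 1 = x + m by ring]
  gcongr
  calc |g (x + m + 1) - g (x - m) - (g (x + m) - g (x - 1 - m))|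
      = |(g (x + m + 1) - g (x + m)) - (g (x - m) - g (x - 1 - m))| := by ring_nf
    _ ≤ |g (x + m + 1) - g (x + m)| + |g (x - m) - g (x - 1 - m)| := abs_sub _ _
    _ ≤ 2 := by linarith

end WindowMean

/-- The mean of `f` over the square of half-width `m` centred at `(i, j)`. -/
noncomputable def boxAverage (m : ℕ) (f : ℤ → ℤ → ℤ) (i j : ℤ) : ℝ :=
  windowMean m (fun x => windowMean m (fun y => f x y) j) i

section BoxAverage

variable {m : ℕ} {f : ℤ → ℤ → ℤ}

lemma boxAverage_swap (m : ℕ) (f : ℤ → ℤ → ℤ) (i j : ℤ) :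
    boxAverage m (fun a b => f b a) j i = boxAverage m f i j := by
  simp only [boxAverage, windowMean, ← sum_div]
  rw [sum_comm]

lemma abs_rowMean_add_one_sub_le (hf : ∀ i j, |f (i + 1) j - f i j| ≤ 1) (j x : ℤ) :
    |windowMean m (fun y => f (x + 1) y) j - windowMean m (fun y => f x y) j| ≤ 1 := by
  rw [windowMean_sub]
  refine abs_windowMean_le fun y => ?_
  rw [sub_self, zero_add]
  exact_mod_cast hf x y

lemma abs_boxAverage_add_one_fst_sub_le (hf : ∀ i j, |f (i + 1) j - f i j| ≤ 1) (i j : ℤ) :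
    |boxAverage m f (i + 1) j - boxAverage m f i j| ≤ 1 :=
  abs_windowMean_add_one_sub_le (abs_rowMean_add_one_sub_le hf j) i

lemma abs_boxAverage_second_diff_fst_le (hf : ∀ i j, |f (i + 1) j - f i j| ≤ 1) (i j : ℤ) :
    |(boxAverage m f (i + 1) j - boxAverage m f i j) -
      (boxAverage m f i j - boxAverage m f (i - 1) j)| ≤ 2 / (2 * m + 1) :=
  abs_windowMean_second_diff_le (abs_rowMean_add_one_sub_le hf j) i

lemma IsAffineAround.boxAverage_diff_fst {i j : ℤ} (hm : 1 ≤ m)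
    (h : IsAffineAround (2 * m) f i j) :
    ∃ s : ℤ, IsUnit s ∧ boxAverage m f (i + 1) j - boxAverage m f i j = s ∧
      boxAverage m f i j - boxAverage m f (i - 1) j = s := by
  obtain ⟨A, s, t, hs, -, eq⟩ := h
  have row_diff : ∀ a : ℤ, -2 * m ≤ a → a < 2 * m →
      windowMean m (fun y => f (i + a + 1) y) j - windowMean m (fun y => f (i + a) y) j = s := by
    intro a ha ha'
    rw [windowMean_sub]
    refine windowMean_eq_of_forall fun b hb => ?_
    rw [abs_le] at hb
    rw [sub_self, zero_add, add_assoc, eq (a + 1) b (abs_le.2 (by omega)) (abs_le.2 (by omega)),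
      eq a b (abs_le.2 (by omega)) (abs_le.2 (by omega))]
    push_cast
    ring
  refine ⟨s, hs, ?_, ?_⟩ <;> rw [boxAverage, boxAverage, windowMean_sub] <;>
    refine windowMean_eq_of_forall fun a ha => ?_ <;> rw [abs_le] at ha
  · rw [show i + 1 - i + (i + a) = i + a + 1 by ring]
    exact row_diff a (by omega) (by omega)
  · rw [show i - (i - 1) + (i - 1 + a) = i + (a - 1) + 1 by ring,
      show i - 1 + a = i + (a - 1) by ring]
    exact row_diff (a - 1) (by omega) (by omega)

lemma boxAverage_reflect_fst {k : ℤ} (hf : ∀ i j, f (k - i) j = f i j) (i j : ℤ) :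
    boxAverage m f (k - i) j = boxAverage m f i j :=
  windowMean_reflect (fun x => by simp only [hf]) i

lemma boxAverage_zero_fst (hf : ∀ i j, i ≤ (m : ℤ) → f i j = 0) (j : ℤ) :
    boxAverage m f 0 j = 0 :=
  windowMean_eq_of_forall fun a ha => windowMean_eq_of_forall fun b _ => by
    rw [hf _ _ (by linarith [le_abs_self a]), Int.cast_zero]

end BoxAverage

/-! ### Fields given by angles -/

/-- The unit vector at the angle `θ * t` from `(0, 1)`. -/
noncomputable def angleSpin (θ t : ℝ) : ℝ × ℝ := (sin (θ * t), cos (θ * t))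

lemma sqnorm_angleSpin (θ t : ℝ) : sqnorm (angleSpin θ t) = 1 := sin_sq_add_cos_sq _

lemma stencilEnergy_angleSpin (δ θ a b c : ℝ) :
    stencilEnergy δ (angleSpin θ a) (angleSpin θ b) (angleSpin θ c) =
      (cos (θ * (b - a)) + cos (θ * (c - b)) - 2 * (1 - δ)) ^ 2 +
        (sin (θ * (c - b)) - sin (θ * (b - a))) ^ 2 := by
  have dotp_eq : ∀ s t, dotp (angleSpin θ s) (angleSpin θ t) = cos (θ * (t - s)) := fun s t => by
    rw [mul_sub, cos_sub, dotp, angleSpin, angleSpin]; ring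
  have crossp_eq : ∀ s t, crossp (angleSpin θ s) (angleSpin θ t) = -sin (θ * (t - s)) :=
    fun s t => by rw [mul_sub, sin_sub, crossp, angleSpin, angleSpin]; ring
  rw [stencilEnergy_eq (sqnorm_angleSpin θ b), dotp_eq, dotp_eq, crossp_eq, crossp_eq]
  ring

namespace IsHelicalScale

variable {δ θ : ℝ} {m : ℕ}

lemma stencilEnergy_angleSpin_le (h : IsHelicalScale δ θ m) {a b c : ℝ} (left : |b - a| ≤ 1)
    (right : |c - b| ≤ 1) (second : |(c - b) - (b - a)| ≤ √δ) :
    stencilEnergy δ (angleSpin θ a) (angleSpin θ b) (angleSpin θ c) ≤ 14 * δ ^ 2 := by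
  have cos_ge : ∀ d : ℝ, |d| ≤ 1 → 1 - 5 / 2 * δ ≤ cos (θ * d) := by
    intro d hd
    have angle_sq_le : (θ * d) ^ 2 ≤ 5 * δ := by
      rw [mul_pow]
      exact (mul_le_of_le_one_right (sq_nonneg _) ((sq_le_one_iff_abs_le_one d).2 hd)).trans
        h.sq_le_five_mul
    linarith [one_sub_sq_div_two_le_cos (x := θ * d)]
  have cos_sum : (cos (θ * (b - a)) + cos (θ * (c - b)) - 2 * (1 - δ)) ^ 2 ≤ (3 * δ) ^ 2 := by
    rw [sq_le_sq, abs_of_nonneg (by linarith [h.pos] : 0 ≤ 3 * δ), abs_le]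
    constructor <;> linarith [cos_ge _ left, cos_ge _ right, cos_le_one (θ * (b - a)),
      cos_le_one (θ * (c - b)), h.pos]
  have sin_diff : (sin (θ * (c - b)) - sin (θ * (b - a))) ^ 2 ≤ 5 * δ * δ := by
    calc (sin (θ * (c - b)) - sin (θ * (b - a))) ^ 2
        ≤ (θ * (c - b) - θ * (b - a)) ^ 2 := sq_le_sq.2 (abs_sin_sub_sin_le _ _)
      _ = θ ^ 2 * |(c - b) - (b - a)| ^ 2 := by rw [sq_abs]; ring
      _ ≤ 5 * δ * √δ ^ 2 :=
          mul_le_mul h.sq_le_five_mul (by gcongr) (by positivity) (by linarith [h.pos])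
      _ = 5 * δ * δ := by rw [h.sqrt_sq]
  rw [stencilEnergy_angleSpin]
  linarith

lemma stencilEnergy_angleSpin_eq_zero (h : IsHelicalScale δ θ m) {a b c : ℝ} {s : ℤ}
    (hs : IsUnit s) (left : b - a = s) (right : c - b = s) :
    stencilEnergy δ (angleSpin θ a) (angleSpin θ b) (angleSpin θ c) = 0 := by
  rw [stencilEnergy_angleSpin, left, right]
  rcases Int.isUnit_iff.1 hs with rfl | rfl <;> norm_num [h.cos_angle] <;> ring

lemma two_div_le_sqrt (h : IsHelicalScale δ θ m) : 2 / (2 * (m : ℝ) + 1) ≤ √δ := by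
  rw [div_le_iff₀ (by positivity)]
  linarith [h.one_le_mul_sqrt, h.sqrt_pos]

lemma stencilEnergy_boxAverage_fst_le (h : IsHelicalScale δ θ m) {f : ℤ → ℤ → ℤ}
    (hf : ∀ i j, |f (i + 1) j - f i j| ≤ 1) {w : ℝ} {i j : ℤ} (hw : 0 ≤ w)
    (alternative : 1 ≤ w ∨ IsAffineAround (2 * m) f i j) :
    stencilEnergy δ (angleSpin θ (boxAverage m f (i - 1) j)) (angleSpin θ (boxAverage m f i j))
      (angleSpin θ (boxAverage m f (i + 1) j)) ≤ 14 * δ ^ 2 * w := by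
  rcases alternative with one_le | affine
  · refine (h.stencilEnergy_angleSpin_le ?_ ?_ ?_).trans
      (le_mul_of_one_le_right (by positivity) one_le)
    · simpa using abs_boxAverage_add_one_fst_sub_le (m := m) hf (i - 1) j
    · exact abs_boxAverage_add_one_fst_sub_le hf i j
    · exact (abs_boxAverage_second_diff_fst_le hf i j).trans h.two_div_le_sqrt
  · obtain ⟨s, hs, right, left⟩ := affine.boxAverage_diff_fst h.one_le
    rw [h.stencilEnergy_angleSpin_eq_zero hs left right]
    positivity

lemma stencilEnergy_boxAverage_snd_le (h : IsHelicalScale δ θ m) {f : ℤ → ℤ → ℤ}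
    (hf : ∀ i j, |f i (j + 1) - f i j| ≤ 1) {w : ℝ} {i j : ℤ} (hw : 0 ≤ w)
    (alternative : 1 ≤ w ∨ IsAffineAround (2 * m) f i j) :
    stencilEnergy δ (angleSpin θ (boxAverage m f i (j - 1))) (angleSpin θ (boxAverage m f i j))
      (angleSpin θ (boxAverage m f i (j + 1))) ≤ 14 * δ ^ 2 * w := by
  simp only [← boxAverage_swap m f i]
  exact h.stencilEnergy_boxAverage_fst_le (fun a b => hf b a) hw
    (alternative.imp_right IsAffineAround.swap)

end IsHelicalScale

/-! ### Counting the defects of the branching profile -/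

lemma card_filter_emod_mem_le {p : ℕ} (S : Finset ℤ) (n : ℕ) :
    (#((range n).filter fun y : ℕ => (y : ℤ) % p ∈ S) : ℝ) ≤ ((n : ℝ) / p + 1) * #S := by
  have card_le : #((range n).filter fun y : ℕ => (y : ℤ) % p ∈ S) ≤
      #(range (n / p + 1) ×ˢ S) := by
    refine card_le_card_of_injOn (fun y : ℕ => (y / p, (y : ℤ) % p)) ?_ ?_
    · intro y hy
      simp only [coe_filter, mem_range, Set.mem_ofPred_eq] at hy
      simp only [coe_product, Set.mem_prod, mem_coe, mem_range]
      exact ⟨Nat.lt_succ_of_le (Nat.div_le_div_right hy.1.le), hy.2⟩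
    · intro y _ z _ hyz
      simp only [Prod.mk.injEq] at hyz
      have mod_eq : y % p = z % p := by exact_mod_cast hyz.2
      rw [← Nat.div_add_mod y p, ← Nat.div_add_mod z p, hyz.1, mod_eq]
  rw [card_product, card_range] at card_le
  refine (Nat.cast_le.2 card_le).trans ?_
  push_cast
  gcongr
  exact Nat.cast_div_le

open Classical in
/-- The indicator of the sites whose `W`-neighbourhood may meet a crease of the branching
profile. -/
noncomputable def defectIndicator (W x y : ℕ) : ℝ := if IsAffineSite W x y then 0 else 1

lemma defectIndicator_nonneg (W x y : ℕ) : 0 ≤ defectIndicator W x y := by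
  unfold defectIndicator; split_ifs <;> norm_num

lemma defectIndicator_le_one (W x y : ℕ) : defectIndicator W x y ≤ 1 := by
  unfold defectIndicator; split_ifs <;> norm_num

lemma isAffineSite_of_defectIndicator_lt_one {W x y : ℕ} (h : defectIndicator W x y < 1) :
    IsAffineSite W x y := by
  by_contra not_affine
  exact h.ne (if_neg not_affine)

lemma sum_defectIndicator_le (W x n : ℕ) : ∑ y ∈ range n, defectIndicator W x y ≤ n := by
  refine (sum_le_sum fun y _ => defectIndicator_le_one W x y).trans_eq ?_
  rw [sum_const, card_range, nsmul_one]

/-- The residues of `y` modulo the period of the zigzag at `x` for which `(x, y)` is within `W` of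
an extremum or a zero of the zigzag. -/
noncomputable def defectResidues (W x : ℤ) : Finset ℤ :=
  let h := dyadicScale x
  Ico 0 W ∪ Ico (2 * h - W + 1) (2 * h + W) ∪ Ico (4 * h - W) (4 * h) ∪
    Ico (x - 2 * W + 1) (x + 2 * W) ∪ Ico (4 * h - x - 2 * W + 1) (4 * h - x + 2 * W)

lemma card_defectResidues_le (W : ℕ) (x : ℤ) : #(defectResidues W x) ≤ 12 * W := by
  grw [defectResidues, card_union_le, card_union_le, card_union_le, card_union_le]
  simp only [Int.card_Ico]
  omega

lemma isAffineSite_of_emod_notMem {W x y : ℤ} (hx : dyadicScale x + W ≤ x)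
    (hx' : x + W < 2 * dyadicScale x) (h : y % (4 * dyadicScale x) ∉ defectResidues W x) :
    IsAffineSite W x y := by
  have scale_pos := dyadicScale_pos x
  have emod_nonneg := Int.emod_nonneg y (by omega : 4 * dyadicScale x ≠ 0)
  have emod_lt := Int.emod_lt_of_pos y (by omega : 0 < 4 * dyadicScale x)
  simp only [defectResidues, mem_union, mem_Ico, not_or, not_and, not_lt] at h
  unfold IsAffineSite distToMultiples
  set r := y % (4 * dyadicScale x)
  refine ⟨hx, hx', by omega, ?_⟩
  rcases abs_cases (x - min r (4 * dyadicScale x - r)) with abs_eq | abs_eq <;> omega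

lemma sum_defectIndicator_column_le {W x n : ℕ} (hx : 2 ^ n + W ≤ x) (hx' : x + W < 2 * 2 ^ n)
    (N : ℕ) :
    ∑ y ∈ range N, defectIndicator W x y ≤ ((N : ℝ) / (4 * 2 ^ n) + 1) * (12 * W) := by
  have scale_eq : dyadicScale x = 2 ^ n := by
    refine dyadicScale_eq ?_ ?_ <;> norm_cast <;> omega
  have period_eq : 4 * dyadicScale x = ((4 * 2 ^ n : ℕ) : ℤ) := by rw [scale_eq]; push_cast; rfl
  calc ∑ y ∈ range N, defectIndicator W x y
      ≤ ∑ y ∈ range N, if (y : ℤ) % (4 * 2 ^ n : ℕ) ∈ defectResidues W x then (1 : ℝ) else 0 := by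
        refine sum_le_sum fun y _ => ?_
        split_ifs with mem
        · exact defectIndicator_le_one W x y
        · refine (if_pos (isAffineSite_of_emod_notMem ?_ ?_ (period_eq ▸ mem))).le <;>
            rw [scale_eq] <;> norm_cast
    _ ≤ ((N : ℝ) / (4 * 2 ^ n : ℕ) + 1) * #(defectResidues W x) := by
        rw [sum_boole]
        exact card_filter_emod_mem_le _ N
    _ ≤ ((N : ℝ) / (4 * 2 ^ n) + 1) * (12 * W) := by
        push_cast
        gcongr
        exact_mod_cast card_defectResidues_le W x

lemma sum_defectIndicator_block_le (W n N : ℕ) :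
    ∑ x ∈ Ico (2 ^ n) (2 ^ (n + 1)), ∑ y ∈ range N, defectIndicator W x y ≤
      2 * W * N + (N / 4 + 2 ^ n) * (12 * W) := by
  set ends := Ico (2 ^ n) (2 ^ n + W) ∪ Ico (2 * 2 ^ n - W) (2 * 2 ^ n) with ends_def
  have column_le : ∀ x ∈ Ico (2 ^ n) (2 ^ (n + 1)), ∑ y ∈ range N, defectIndicator W x y ≤
      (if x ∈ ends then (N : ℝ) else 0) + ((N : ℝ) / (4 * 2 ^ n) + 1) * (12 * W) := by
    intro x hx
    rw [mem_Ico, pow_succ'] at hx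
    split_ifs with mem
    · exact (sum_defectIndicator_le W x N).trans (le_add_of_nonneg_right (by positivity))
    · simp only [ends_def, mem_union, mem_Ico, not_or, not_and, not_lt] at mem
      rw [zero_add]
      exact sum_defectIndicator_column_le (by omega) (by omega) N
  have card_ends : #ends ≤ 2 * W := by
    grw [ends_def, card_union_le]
    simp only [Nat.card_Ico]
    omega
  have card_block : #(Ico (2 ^ n) (2 ^ (n + 1))) = 2 ^ n := by
    rw [Nat.card_Ico, pow_succ']; omega
  refine (sum_le_sum column_le).trans ?_
  rw [sum_add_distrib, sum_const, card_block, nsmul_eq_mul, ← sum_filter, sum_const, nsmul_eq_mul]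
  refine add_le_add ?_ (le_of_eq (by push_cast; field_simp))
  gcongr
  exact_mod_cast (card_le_card fun x hx => (mem_filter.1 hx).2).trans card_ends

lemma sum_Ico_two_pow_le {f : ℕ → ℝ} {B : ℝ} {a b : ℕ} (hab : a ≤ b)
    (hB : ∀ n ≤ b, ∑ x ∈ Ico (2 ^ n) (2 ^ (n + 1)), f x ≤ B) :
    ∑ x ∈ Ico (2 ^ a) (2 ^ (b + 1)), f x ≤ ((b : ℝ) + 1 - a) * B := by
  induction b, hab using Nat.le_induction with
  | base => linarith [hB a le_rfl]
  | succ b hab ih =>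
    have upto := ih fun n hn => hB n (by omega)
    have last := hB (b + 1) le_rfl
    rw [← sum_Ico_consecutive f (Nat.pow_le_pow_right two_pos (by omega : a ≤ b + 1))
      (Nat.pow_le_pow_right two_pos (Nat.le_succ (b + 1)))]
    push_cast
    linarith

lemma natLog_sub_natLog_le_logb {m k : ℕ} (hm : m ≠ 0) (hk : k ≠ 0) :
    (Nat.log 2 k : ℝ) - Nat.log 2 m ≤ 1 + logb 2 (k / m) := by
  have le_logb : (Nat.log 2 k : ℝ) ≤ logb 2 k := by exact_mod_cast natLog_le_logb k 2
  have logb_lt : logb 2 m < Nat.log 2 m + 1 := by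
    rw [logb_lt_iff_lt_rpow one_lt_two (by positivity)]
    exact_mod_cast Nat.lt_pow_succ_log_self one_lt_two m
  rw [logb_div (by positivity) (by positivity)]
  linarith

lemma sum_sum_defectIndicator_le {m k : ℕ} (hm : 1 ≤ m) (hk : m ≤ k) :
    ∑ x ∈ range (k + 1), ∑ y ∈ range (k + 1), defectIndicator (2 * m) x y ≤
      m * (k + 1) * (69 + 34 * logb 2 (k / m)) := by
  set first := Nat.log 2 m
  set last := Nat.log 2 k
  have first_le_last : first ≤ last := Nat.log_mono_right hk
  have two_pow_first_le : 2 ^ first ≤ m := Nat.pow_log_le_self 2 (by omega)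
  have two_pow_last_le : 2 ^ last ≤ k := Nat.pow_log_le_self 2 (by omega)
  have lt_two_pow_last : k < 2 ^ (last + 1) := Nat.lt_pow_succ_log_self one_lt_two k
  have small_scales : ∑ x ∈ range (2 ^ first), ∑ y ∈ range (k + 1), defectIndicator (2 * m) x y ≤
      m * (k + 1) := by
    refine (sum_le_sum fun x _ => sum_defectIndicator_le _ x _).trans ?_
    rw [sum_const, card_range, nsmul_eq_mul]
    push_cast
    gcongr
    exact_mod_cast two_pow_first_le
  have dyadic_scales : ∑ x ∈ Ico (2 ^ first) (2 ^ (last + 1)), ∑ y ∈ range (k + 1),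
      defectIndicator (2 * m) x y ≤ ((last : ℝ) + 1 - first) * (34 * (m * (k + 1))) := by
    refine sum_Ico_two_pow_le first_le_last fun n hn => ?_
    have two_pow_le : (2 : ℝ) ^ n ≤ k := by
      exact_mod_cast (Nat.pow_le_pow_right two_pos hn).trans two_pow_last_le
    refine (sum_defectIndicator_block_le (2 * m) n (k + 1)).trans ?_
    push_cast
    linarith [mul_le_mul_of_nonneg_left two_pow_le (Nat.cast_nonneg (α := ℝ) m),
      Nat.cast_nonneg (α := ℝ) m]
  have scale_count : (last : ℝ) + 1 - first ≤ 2 + logb 2 (k / m) := by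
    linarith [natLog_sub_natLog_le_logb (m := m) (k := k) (by omega) (by omega)]
  calc ∑ x ∈ range (k + 1), ∑ y ∈ range (k + 1), defectIndicator (2 * m) x y
      ≤ ∑ x ∈ range (2 ^ (last + 1)), ∑ y ∈ range (k + 1), defectIndicator (2 * m) x y :=
        sum_le_sum_of_subset_of_nonneg (range_subset_range.2 lt_two_pow_last)
          fun x _ _ => sum_nonneg fun y _ => defectIndicator_nonneg _ x y
    _ ≤ m * (k + 1) + ((last : ℝ) + 1 - first) * (34 * (m * (k + 1))) := by
        rw [← sum_range_add_sum_Ico _ (Nat.pow_le_pow_right two_pos (by omega : first ≤ last + 1))]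
        exact add_le_add small_scales dyadic_scales
    _ ≤ m * (k + 1) + (2 + logb 2 (k / m)) * (34 * (m * (k + 1))) := by gcongr
    _ = m * (k + 1) * (69 + 34 * logb 2 (k / m)) := by ring

lemma sum_range_tsub_le {f : ℕ → ℝ} (hf : ∀ x, 0 ≤ f x) (m n : ℕ) :
    ∑ x ∈ range n, f (x - m) ≤ m * f 0 + ∑ x ∈ range n, f x := by
  calc ∑ x ∈ range n, f (x - m)
      ≤ ∑ x ∈ range (m + n), f (x - m) :=
        sum_le_sum_of_subset_of_nonneg (range_subset_range.2 (by omega)) fun _ _ _ => hf _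
    _ = ∑ x ∈ range m, f (x - m) + ∑ x ∈ range n, f x := by
        simp only [sum_range_add, Nat.add_sub_cancel_left]
    _ = m * f 0 + ∑ x ∈ range n, f x := by
        rw [sum_congr rfl fun x hx => by rw [Nat.sub_eq_zero_of_le (mem_range.1 hx).le], sum_const,
          card_range, nsmul_eq_mul]

/-! ### The branching construction -/

/-- An upper bound, in units of `14 δ²`, for the energy densities at `(i, j)` of the averaged folded
profile: it is at least one unless the profile is affine on the averaging windows involved. -/
noncomputable def branchWeight (k m i j : ℕ) : ℝ :=
  midIndicator k (2 * m) i + midIndicator k (2 * m) j +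
    defectIndicator (2 * m) (min i (k - i) - m) (min j (k - j))

lemma branchWeight_nonneg (k m i j : ℕ) : 0 ≤ branchWeight k m i j :=
  add_nonneg (add_nonneg (midIndicator_nonneg ..) (midIndicator_nonneg ..))
    (defectIndicator_nonneg ..)

lemma one_le_branchWeight_or_isAffineAround {k m i j : ℕ} (hi : i ≤ k) (hj : j ≤ k) :
    1 ≤ branchWeight k m i j ∨ IsAffineAround (2 * m) (foldedProfile k m) i j := by
  refine or_iff_not_imp_left.2 fun lt_one => ?_
  rw [branchWeight, not_le] at lt_one
  have mid_i_nonneg := midIndicator_nonneg k (2 * m) i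
  have mid_j_nonneg := midIndicator_nonneg k (2 * m) j
  have defect_nonneg := defectIndicator_nonneg (2 * m) (min i (k - i) - m) (min j (k - j))
  have far_i : 2 * ((2 * m : ℕ) : ℤ) < |2 * (i : ℤ) - k| := by
    by_contra! near
    linarith [midIndicator_eq_one near]
  have far_j : 2 * ((2 * m : ℕ) : ℤ) < |2 * (j : ℤ) - k| := by
    by_contra! near
    linarith [midIndicator_eq_one near]
  have site : IsAffineSite (2 * m : ℕ) (min i (k - i) - m : ℕ) (min j (k - j) : ℕ) :=
    isAffineSite_of_defectIndicator_lt_one (by linarith)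
  have fold_sub : foldHalf k i - m = (min i (k - i) - m : ℕ) := by
    have scale_pos := dyadicScale_pos (min i (k - i) - m : ℕ)
    have scale_le := site.1
    rw [foldHalf_natCast hi]
    omega
  rw [← fold_sub, ← foldHalf_natCast hj] at site
  exact_mod_cast site.isAffineAround_branchProfile.comp_foldHalf far_i far_j

lemma sum_sum_branchWeight_le {k m : ℕ} (hm : 1 ≤ m) (hk : m ≤ k) :
    ∑ i ∈ range (k + 1), ∑ j ∈ range (k + 1), branchWeight k m i j ≤
      m * (k + 1) * (290 + 136 * logb 2 (k / m)) := by
  have one_le : (1 : ℝ) ≤ m := by exact_mod_cast hm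
  have mid_le : ∑ i ∈ range (k + 1), midIndicator k (2 * m) i ≤ 5 * m := by
    have := sum_midIndicator_le k (2 * m)
    push_cast at this
    linarith
  have mid_rows : ∑ i ∈ range (k + 1), ∑ _j ∈ range (k + 1), midIndicator k (2 * m) i ≤
      (k + 1) * (5 * m) := by
    simp only [sum_const, card_range, nsmul_eq_mul]
    rw [← mul_sum]
    push_cast
    gcongr
  have defects : ∑ i ∈ range (k + 1), ∑ j ∈ range (k + 1),
      defectIndicator (2 * m) (min i (k - i) - m) (min j (k - j)) ≤
        4 * (m * (k + 1) + m * (k + 1) * (69 + 34 * logb 2 (k / m))) := by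
    refine (sum_sum_fold_le (f := fun x y => defectIndicator (2 * m) (x - m) y)
      (fun _ _ => defectIndicator_nonneg ..) k).trans ?_
    have shift := sum_range_tsub_le (f := fun x => ∑ y ∈ range (k + 1), defectIndicator (2 * m) x y)
      (fun x => sum_nonneg fun y _ => defectIndicator_nonneg ..) m (k + 1)
    have first_column := sum_defectIndicator_le (2 * m) 0 (k + 1)
    push_cast at first_column
    have first_columns := mul_le_mul_of_nonneg_left first_column (Nat.cast_nonneg (α := ℝ) m)
    linarith [sum_sum_defectIndicator_le hm hk]
  have mid_columns := mid_rows
  rw [sum_comm] at mid_columns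
  simp only [branchWeight, sum_add_distrib]
  linarith

lemma exists_inS0per_E_le_sum_branchWeight {ε δ θ : ℝ} {k m : ℕ} (h : IsHelicalScale δ θ m)
    (hk : Kof ε = k) (hk2 : 2 ≤ k) :
    ∃ u, InS0per ε u ∧ E ε δ u ≤
      ε ^ 2 * (14 * δ ^ 2 * ∑ i ∈ range (k + 1), ∑ j ∈ range (k + 1), branchWeight k m i j) := by
  set v : ℤ → ℤ → ℝ := boxAverage m (foldedProfile k m)
  have reflect_fst : ∀ i j, v (k - i) j = v i j :=
    boxAverage_reflect_fst (foldedProfile_sub_fst k m)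
  have reflect_snd : ∀ i j, v i (k - j) = v i j := fun i j => by
    simp only [v, ← boxAverage_swap m (foldedProfile k m) i]
    exact boxAverage_reflect_fst (fun a b => foldedProfile_sub_snd k m b a) j i
  have boundary : ∀ j, v 0 j = 0 := boxAverage_zero_fst fun i j hi => foldedProfile_of_le hi k j
  refine ⟨fun p => angleSpin θ (v p.1 p.2), InS0.inS0per_of_reflect ?_ ?_ ?_, ?_⟩
  · refine ⟨fun p _ => sqnorm_angleSpin _ _, fun j _ => ?_⟩
    simp only [boundary, angleSpin, mul_zero, sin_zero, cos_zero]
  · simp only [hk, reflect_fst, implies_true]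
  · simp only [hk, reflect_snd, implies_true]
  · simp only [mul_sum (_ : Finset ℕ) _ (14 * δ ^ 2)]
    refine E_le_sum_of_stencilEnergy_le hk hk2
      (fun i j => mul_nonneg (by positivity) (branchWeight_nonneg k m i j)) ?_ ?_
    · exact fun i j _ hi hj => h.stencilEnergy_boxAverage_fst_le
        (abs_foldedProfile_add_one_fst_sub_le k m) (branchWeight_nonneg k m i j)
        (one_le_branchWeight_or_isAffineAround hi.le hj)
    · exact fun i j hi _ hj => h.stencilEnergy_boxAverage_snd_le
        (abs_foldedProfile_add_one_snd_sub_le k m) (branchWeight_nonneg k m i j)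
        (one_le_branchWeight_or_isAffineAround hi hj.le)

lemma logb_two_le {x : ℝ} (hx : 0 ≤ log x) : logb 2 x ≤ 3 / 2 * log x := by
  rw [logb, div_le_iff₀ (log_pos one_lt_two)]
  linarith [mul_le_mul_of_nonneg_left log_two_gt_d9.le hx]

lemma exists_inS0per_E_le_branching {ε δ : ℝ} (hε : 0 < ε) (hε' : ε < 1 / 2) (hδ : 0 < δ)
    (hδ' : δ < 1) (ratio_lt : ε / √δ < 1 / 100) :
    ∃ u, InS0per ε u ∧ E ε δ u ≤ 12180 * (ε * (δ * √δ) * (|log (ε / √δ)| + 1)) := by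
  obtain ⟨k, hk, hk2, k_mul_lt, le_k_mul⟩ := exists_natCast_eq_Kof hε hε'
  obtain ⟨θ, m, h⟩ := exists_isHelicalScale hδ hδ'
  obtain ⟨u, hu, energy_le⟩ := exists_inS0per_E_le_sum_branchWeight h hk hk2
  have m_pos := h.natCast_pos
  have m_le_k : m ≤ k := by
    have := h.mul_le_of_ratio_lt (k := k) (by linarith) ratio_lt
    omega
  set T := |log (ε / √δ)| + 1 with T_def
  have logb_le : logb 2 ((k : ℝ) / m) ≤ 3 / 2 * (T - 1) := by
    have one_le_ratio : 1 ≤ (k : ℝ) / m := (one_le_div m_pos).2 (by exact_mod_cast m_le_k)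
    have ratio_le : (k : ℝ) / m ≤ (ε / √δ)⁻¹ := by
      rw [inv_div, div_le_div_iff₀ m_pos hε]
      linarith [h.one_le_mul_sqrt]
    have log_le : log ((k : ℝ) / m) ≤ T - 1 := by
      rw [T_def, add_sub_cancel_right, ← abs_neg, ← log_inv]
      exact (log_le_log (by linarith) ratio_le).trans (le_abs_self _)
    linarith [logb_two_le (log_nonneg one_le_ratio)]
  have weight_le : ∑ i ∈ range (k + 1), ∑ j ∈ range (k + 1), branchWeight k m i j ≤
      m * (k + 1) * (290 * T) := by
    refine (sum_sum_branchWeight_le h.one_le m_le_k).trans ?_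
    gcongr
    linarith [abs_nonneg (log (ε / √δ))]
  refine ⟨u, hu, energy_le.trans ?_⟩
  calc ε ^ 2 * (14 * δ ^ 2 * ∑ i ∈ range (k + 1), ∑ j ∈ range (k + 1), branchWeight k m i j)
      ≤ ε ^ 2 * (14 * δ ^ 2 * (m * (k + 1) * (290 * T))) := by gcongr
    _ = 4060 * (ε * (k + 1)) * (ε * (δ * √δ) * T) * (m * √δ) := by
        linear_combination (-4060 * ε ^ 2 * δ * m * (k + 1) * T) * h.sqrt_sq
    _ ≤ 4060 * (3 / 2) * (ε * (δ * √δ) * T) * 2 := by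
        gcongr
        · linarith
        · exact h.mul_sqrt_le_two
    _ = 12180 * (ε * (δ * √δ) * T) := by ring

/-! ### The upper bound -/

lemma exists_inS0per_E_le_sq {ε : ℝ} (hε : 0 < ε) (hε' : ε < 1 / 2) (δ : ℝ) :
    ∃ u, InS0per ε u ∧ E ε δ u ≤ 9 * δ ^ 2 := by
  obtain ⟨k, hk, hk2, k_mul_lt, -⟩ := exists_natCast_eq_Kof hε hε'
  have density_eq : stencilEnergy δ (0, 1) (0, 1) (0, 1) = 4 * δ ^ 2 :=
    stencilEnergy_self (by norm_num [sqnorm]) δ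
  refine ⟨fun _ => (0, 1), ⟨⟨fun p _ => by norm_num [sqnorm], fun j _ => rfl⟩,
    fun l _ => ⟨rfl, rfl⟩⟩, ?_⟩
  refine (E_le_sum_of_stencilEnergy_le hk hk2 (b := fun _ _ => 4 * δ ^ 2)
    (fun _ _ => by positivity) (fun _ _ _ _ _ => density_eq.le)
    fun _ _ _ _ _ => density_eq.le).trans ?_
  simp only [sum_const, card_range, nsmul_eq_mul]
  push_cast
  calc ε ^ 2 * ((k + 1) * ((k + 1) * (4 * δ ^ 2))) = ((k + 1) * ε) ^ 2 * (4 * δ ^ 2) := by ring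
    _ ≤ (3 / 2) ^ 2 * (4 * δ ^ 2) := by gcongr; linarith
    _ = 9 * δ ^ 2 := by ring

lemma mul_abs_log_add_one_le {σ : ℝ} (hσ : 0 < σ) (hσ' : σ ≤ 1) :
    σ * (|log σ| + 1) ≤ 2 * √σ := by
  have log_inv_le : log (√σ)⁻¹ ≤ (√σ)⁻¹ - 1 := log_le_sub_one_of_pos (by positivity)
  rw [log_inv, log_sqrt hσ.le] at log_inv_le
  rw [abs_of_nonpos (log_nonpos hσ.le hσ')]
  calc σ * (-log σ + 1) ≤ σ * (2 * (√σ)⁻¹) := by gcongr; linarith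
    _ = 2 * √σ := by field_simp; rw [sq_sqrt hσ.le]

lemma branching_scale_le {ε δ : ℝ} (hε : 0 < ε) (hδ : 0 < δ) (ratio_le : ε / √δ ≤ 1) :
    ε * (δ * √δ) * (|log (ε / √δ)| + 1) ≤ 2 * √(ε / √δ) * δ ^ 2 := by
  calc ε * (δ * √δ) * (|log (ε / √δ)| + 1)
      = ε / √δ * (|log (ε / √δ)| + 1) * δ ^ 2 := by
        field_simp
        rw [sq_sqrt hδ.le]
    _ ≤ 2 * √(ε / √δ) * δ ^ 2 :=
        mul_le_mul_of_nonneg_right (mul_abs_log_add_one_le (by positivity) ratio_le) (sq_nonneg δ)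

lemma sq_le_sfun_of_ratio_ge {ε δ : ℝ} (hε : 0 < ε) (hδ : 0 < δ) (hδ' : δ < 1)
    (ratio_ge : 1 / 100 ≤ ε / √δ) : δ ^ 2 ≤ 100 * sfun ε δ := by
  have sqrt_sq : √δ ^ 2 = δ := sq_sqrt hδ.le
  have sqrt_le : √δ ≤ 100 * ε := by linarith [(le_div_iff₀ (Real.sqrt_pos.2 hδ)).1 ratio_ge]
  have helix_scale : δ ^ 2 ≤ 100 * (ε * √δ) := by
    nlinarith [mul_le_mul_of_nonneg_right sqrt_le (Real.sqrt_nonneg δ)]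
  have branching_scale : δ ^ 2 ≤ 100 * (ε * (δ * √δ) * (|log (ε / √δ)| + 1)) := by
    calc δ ^ 2 = δ * (√δ * √δ) := by rw [← sq √δ, sqrt_sq, sq]
      _ ≤ δ * (100 * ε * √δ) := by gcongr
      _ = 100 * (ε * (δ * √δ) * 1) := by ring
      _ ≤ 100 * (ε * (δ * √δ) * (|log (ε / √δ)| + 1)) := by
          gcongr
          linarith [abs_nonneg (log (ε / √δ))]
  rw [← div_le_iff₀' (by norm_num)] at helix_scale branching_scale ⊢
  exact le_min (by linarith [sq_nonneg δ]) (le_min branching_scale helix_scale)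

lemma le_of_one_lt_abs_log_mul {ε δ : ℝ} (hδ : 0 < δ) (hδ' : δ < 1) (ratio_le : ε / √δ ≤ 1)
    (h : 1 < (|log (ε / √δ)| + 1) * δ) : ε ≤ δ := by
  by_contra! δ_lt
  have sqrt_pos : 0 < √δ := Real.sqrt_pos.2 hδ
  have sqrt_le_ratio : √δ ≤ ε / √δ := by
    rw [le_div_iff₀ sqrt_pos, mul_self_sqrt hδ.le]
    exact δ_lt.le
  have log_le : log √δ ≤ log (ε / √δ) := log_le_log sqrt_pos sqrt_le_ratio
  have log_inv_le : log δ⁻¹ ≤ δ⁻¹ - 1 := log_le_sub_one_of_pos (by positivity)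
  rw [log_sqrt hδ.le] at log_le
  rw [log_inv] at log_inv_le
  rw [abs_of_nonpos (log_nonpos (sqrt_pos.le.trans sqrt_le_ratio) ratio_le)] at h
  have : (-log (ε / √δ) + 1) * δ ≤ ((δ⁻¹ - 1) / 2 + 1) * δ := by gcongr; linarith
  have : ((δ⁻¹ - 1) / 2 + 1) * δ = (1 + δ) / 2 := by field_simp; ring
  linarith

lemma exists_inS0per_E_le {ε δ : ℝ} (hε : 0 < ε) (hε' : ε < 1 / 2) (hδ : 0 < δ) (hδ' : δ < 1) :
    ∃ u, InS0per ε u ∧ E ε δ u ≤ 10 ^ 11 * sfun ε δ := by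
  rcases le_or_gt (1 / 100) (ε / √δ) with ratio_ge | ratio_lt
  · obtain ⟨u, hu, energy_le⟩ := exists_inS0per_E_le_sq hε hε' δ
    exact ⟨u, hu, by linarith [sq_le_sfun_of_ratio_ge hε hδ hδ' ratio_ge, sq_nonneg δ]⟩
  have helix_scale_nonneg : 0 ≤ ε * √δ := by positivity
  set T := |log (ε / √δ)| + 1
  have branching_le_sq : ε * (δ * √δ) * T ≤ δ ^ 2 := by
    have sqrt_ratio_le : √(ε / √δ) ≤ 1 / 2 := sqrt_le_iff.2 ⟨by norm_num, by linarith⟩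
    nlinarith [branching_scale_le hε hδ (by linarith), sq_nonneg δ]
  have branching_eq : ε * (δ * √δ) * T = ε * √δ * (T * δ) := by ring
  have branching_nonneg : 0 ≤ ε * (δ * √δ) * T := by positivity
  rcases le_or_gt (T * δ) 1 with logarithm_small | logarithm_large
  · obtain ⟨u, hu, energy_le⟩ := exists_inS0per_E_le_branching hε hε' hδ hδ' ratio_lt
    have le_sfun : ε * (δ * √δ) * T ≤ sfun ε δ := le_min branching_le_sq <| le_min le_rfl <|
      branching_eq.trans_le (mul_le_of_le_one_right helix_scale_nonneg logarithm_small)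
    exact ⟨u, hu, by linarith⟩
  · have ε_le_δ := le_of_one_lt_abs_log_mul hδ hδ' (by linarith) logarithm_large
    obtain ⟨u, hu, energy_le⟩ := exists_vortex_field hε hε' hδ' ε_le_δ ratio_lt
    have le_branching : ε * √δ ≤ ε * (δ * √δ) * T :=
      (le_mul_of_one_le_right helix_scale_nonneg logarithm_large.le).trans_eq branching_eq.symm
    have le_sfun : ε * √δ ≤ sfun ε δ :=
      le_min (le_branching.trans branching_le_sq) (le_min le_branching le_rfl)
    exact ⟨u, hu, energy_le.trans (by gcongr)⟩

/-! ### Signed angles between consecutive spins -/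

lemma dotp_sq_add_crossp_sq {a b : ℝ × ℝ} (ha : sqnorm a = 1) (hb : sqnorm b = 1) :
    dotp a b ^ 2 + crossp a b ^ 2 = 1 := by
  calc dotp a b ^ 2 + crossp a b ^ 2 = sqnorm a * sqnorm b := by
        unfold dotp crossp sqnorm; ring
    _ = 1 := by rw [ha, hb, one_mul]

lemma dotp_le_one {a b : ℝ × ℝ} (ha : sqnorm a = 1) (hb : sqnorm b = 1) : dotp a b ≤ 1 := by
  nlinarith [dotp_sq_add_crossp_sq ha hb, sq_nonneg (crossp a b)]

/-- The oriented angle from the unit vector `a` to the unit vector `b`, provided that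
`0 ≤ dotp a b`. -/
noncomputable def signedAngle (a b : ℝ × ℝ) : ℝ := arcsin (crossp a b)

/-- Two unit vectors enclosing an angle so small (less than `π / 4`) that signed angles add up
around a lattice square without winding. -/
structure IsAligned (a b : ℝ × ℝ) : Prop where
  left : sqnorm a = 1
  right : sqnorm b = 1
  dotp_ge : 9 / 10 ≤ dotp a b

lemma isAligned_of_stencilEnergy_le {δ : ℝ} (hδ : δ ≤ 1 / 100) {a b c : ℝ × ℝ}
    (ha : sqnorm a = 1) (hb : sqnorm b = 1) (hc : sqnorm c = 1)
    (h : stencilEnergy δ a b c ≤ 1 / 400) : IsAligned a b ∧ IsAligned b c := by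
  rw [stencilEnergy_eq hb] at h
  have dotp_sq_le : (dotp a b + dotp b c - 2 * (1 - δ)) ^ 2 ≤ (1 / 20) ^ 2 := by
    linarith [sq_nonneg (crossp b c - crossp a b)]
  have dotp_ge := (abs_le.1 (abs_le_of_sq_le_sq dotp_sq_le (by norm_num))).1
  exact ⟨⟨ha, hb, by linarith [dotp_le_one hb hc]⟩, ⟨hb, hc, by linarith [dotp_le_one ha hb]⟩⟩

namespace IsAligned

variable {a b c d : ℝ × ℝ}

lemma sin_signedAngle (h : IsAligned a b) : sin (signedAngle a b) = crossp a b := by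
  have crossp_sq_le : crossp a b ^ 2 ≤ 1 ^ 2 := by
    linarith [dotp_sq_add_crossp_sq h.left h.right, sq_nonneg (dotp a b)]
  have crossp_le := abs_le.1 (abs_le_of_sq_le_sq crossp_sq_le one_pos.le)
  exact sin_arcsin crossp_le.1 crossp_le.2

lemma cos_signedAngle (h : IsAligned a b) : cos (signedAngle a b) = dotp a b := by
  have one_sub_eq : 1 - crossp a b ^ 2 = dotp a b ^ 2 := by
    linarith [dotp_sq_add_crossp_sq h.left h.right]
  rw [signedAngle, cos_arcsin, one_sub_eq, sqrt_sq (by linarith [h.dotp_ge])]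

lemma abs_signedAngle_lt (h : IsAligned a b) : |signedAngle a b| < π / 4 := by
  by_contra! angle_ge
  have angle_le : |signedAngle a b| ≤ π := by
    have := arcsin_mem_Icc (crossp a b)
    exact abs_le.2 ⟨by unfold signedAngle; linarith [this.1, pi_pos],
      by unfold signedAngle; linarith [this.2, pi_pos]⟩
  have cos_le := cos_le_cos_of_nonneg_of_le_pi (by positivity) angle_le angle_ge
  rw [cos_abs, h.cos_signedAngle, cos_pi_div_four] at cos_le
  have sqrt_two_lt : √2 < 3 / 2 := (Real.sqrt_lt' (by norm_num)).2 (by norm_num)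
  linarith [h.dotp_ge]

lemma signedAngle_sq_le (h : IsAligned a b) : signedAngle a b ^ 2 ≤ 5 * (1 - dotp a b) := by
  have cos_le := cos_le_one_sub_mul_cos_sq (x := signedAngle a b)
    (by linarith [h.abs_signedAngle_lt, pi_pos])
  rw [h.cos_signedAngle] at cos_le
  linarith [mul_le_mul_of_nonneg_right two_div_pi_sq_ge (sq_nonneg (signedAngle a b))]

lemma one_sub_dotp_le (h : IsAligned a b) : 1 - dotp a b ≤ crossp a b ^ 2 := by
  nlinarith [dotp_sq_add_crossp_sq h.left h.right, dotp_le_one h.left h.right, h.dotp_ge]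

lemma crossp_le_signedAngle (h : IsAligned a b) (nonneg : 0 ≤ crossp a b) :
    crossp a b ≤ signedAngle a b := by
  rw [← h.sin_signedAngle]
  exact sin_le (arcsin_nonneg.2 nonneg)

lemma neg_crossp_le_neg_signedAngle (h : IsAligned a b) (nonpos : crossp a b ≤ 0) :
    -crossp a b ≤ -signedAngle a b := by
  have angle_nonpos : signedAngle a b ≤ 0 := arcsin_nonpos.2 nonpos
  rw [← h.sin_signedAngle, ← sin_neg]
  exact sin_le (by linarith)

lemma crossp_trans (hb : sqnorm b = 1) :
    crossp a b * dotp b c + dotp a b * crossp b c = crossp a c := by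
  unfold sqnorm at hb
  unfold dotp crossp
  linear_combination (a.1 * c.2 - a.2 * c.1) * hb

lemma signedAngle_add_signedAngle_eq (hab : IsAligned a b) (hbd : IsAligned b d)
    (hac : IsAligned a c) (hcd : IsAligned c d) :
    signedAngle a b + signedAngle b d = signedAngle a c + signedAngle c d := by
  have angle_ab := abs_lt.1 hab.abs_signedAngle_lt
  have angle_bd := abs_lt.1 hbd.abs_signedAngle_lt
  have angle_ac := abs_lt.1 hac.abs_signedAngle_lt
  have angle_cd := abs_lt.1 hcd.abs_signedAngle_lt
  refine injOn_sin ⟨by linarith, by linarith⟩ ⟨by linarith, by linarith⟩ ?_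
  rw [sin_add, sin_add, hab.sin_signedAngle, hab.cos_signedAngle, hbd.sin_signedAngle,
    hbd.cos_signedAngle, hac.sin_signedAngle, hac.cos_signedAngle, hcd.sin_signedAngle,
    hcd.cos_signedAngle, crossp_trans hab.right, crossp_trans hac.right]

end IsAligned

/-! ### One-dimensional estimates -/

section Sequence

variable {δ : ℝ} {s p : ℕ → ℝ} {N : ℕ}

lemma sq_sub_le_mul_sum_Ico_sq (s : ℕ → ℝ) {a w l l' : ℕ} (hl : a ≤ l) (hl' : l ≤ a + w)
    (hm : a ≤ l') (hm' : l' ≤ a + w) :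
    (s l' - s l) ^ 2 ≤ w * ∑ n ∈ Ico a (a + w), (s (n + 1) - s n) ^ 2 := by
  wlog hll : l ≤ l' generalizing l l'
  · rw [← neg_sub, neg_sq]
    exact this hm hm' hl hl' (le_of_not_ge hll)
  calc (s l' - s l) ^ 2 = (∑ n ∈ Ico l l', (s (n + 1) - s n)) ^ 2 := by rw [sum_Ico_sub s hll]
    _ ≤ #(Ico l l') * ∑ n ∈ Ico l l', (s (n + 1) - s n) ^ 2 := sq_sum_le_card_mul_sum_sq
    _ ≤ w * ∑ n ∈ Ico a (a + w), (s (n + 1) - s n) ^ 2 := by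
        rw [Nat.card_Ico]
        gcongr
        exact_mod_cast (by omega : l' - l ≤ w)

/-- The energy of a column whose consecutive spins have cross products `s` and scalar products
`1 - p`. -/
noncomputable def columnEnergy (δ : ℝ) (s p : ℕ → ℝ) (N : ℕ) : ℝ :=
  ∑ l ∈ range N, ((2 * δ - p l - p (l + 1)) ^ 2 + (s (l + 1) - s l) ^ 2)

lemma exists_window {N : ℕ} {δ : ℝ} (hδ : 0 < δ) (hδ' : δ < 1) {l₀ : ℕ} (hl₀ : l₀ ≤ N) :
    ∃ a w : ℕ, a ≤ l₀ ∧ l₀ ≤ a + w ∧ a + w ≤ N ∧ w * √δ ≤ 2 ∧ (w = N ∨ 1 ≤ w * √δ) := by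
  obtain ⟨θ, m, h⟩ := exists_isHelicalScale hδ hδ'
  have min_mul_le : ((min N m : ℕ) : ℝ) * √δ ≤ 2 :=
    (mul_le_mul_of_nonneg_right (by exact_mod_cast min_le_right N m) h.sqrt_pos.le).trans
      h.mul_sqrt_le_two
  refine ⟨min l₀ (N - min N m), min N m, by omega, by omega, by omega, min_mul_le, ?_⟩
  rcases min_choice N m with eq | eq
  · exact .inl eq
  · exact .inr (by rw [eq]; exact h.one_le_mul_sqrt)

lemma sum_Ico_sq_sub_le_columnEnergy {a b : ℕ} (hb : b ≤ N) :
    ∑ l ∈ Ico a b, (s (l + 1) - s l) ^ 2 ≤ columnEnergy δ s p N := by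
  refine (sum_le_sum_of_subset_of_nonneg ?_ fun _ _ _ => sq_nonneg _).trans
    (sum_le_sum fun l _ => le_add_of_nonneg_left (sq_nonneg _))
  rw [range_eq_Ico]
  exact Ico_subset_Ico a.zero_le hb

lemma mul_le_columnEnergy {a w : ℕ} (haw : a + w ≤ N) {e : ℝ}
    (he : ∀ l ∈ Ico a (a + w), e ≤ (2 * δ - p l - p (l + 1)) ^ 2) :
    w * e ≤ columnEnergy δ s p N := by
  calc w * e = #(Ico a (a + w)) • e := by rw [Nat.card_Ico, Nat.add_sub_cancel_left, nsmul_eq_mul]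
    _ ≤ ∑ l ∈ Ico a (a + w), (2 * δ - p l - p (l + 1)) ^ 2 := card_nsmul_le_sum _ _ _ he
    _ ≤ ∑ l ∈ range N, (2 * δ - p l - p (l + 1)) ^ 2 := by
        refine sum_le_sum_of_subset_of_nonneg ?_ fun _ _ _ => sq_nonneg _
        rw [range_eq_Ico]
        exact Ico_subset_Ico a.zero_le haw
    _ ≤ columnEnergy δ s p N := sum_le_sum fun l _ => le_add_of_nonneg_right (sq_nonneg _)

lemma window_le_columnEnergy (hδ : 0 < δ) (hp : ∀ l ≤ N, p l ≤ s l ^ 2) {a w l₀ : ℕ}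
    (hl₀ : a ≤ l₀) (hl₀' : l₀ ≤ a + w) (haw : a + w ≤ N) (w_le : w * √δ ≤ 2)
    (small : columnEnergy δ s p N ≤ 1 / 32 * (δ * √δ)) (center_lt : |s l₀| < √δ / 2) :
    w * (δ ^ 2 / 2) ≤ columnEnergy δ s p N := by
  have sqrt_sq : √δ ^ 2 = δ := sq_sqrt hδ.le
  have oscillation_le (l : ℕ) (hl : a ≤ l) (hl' : l ≤ a + w) : |s l - s l₀| ≤ √δ / 4 := by
    refine abs_le_of_sq_le_sq ?_ (by positivity)
    calc (s l - s l₀) ^ 2 ≤ w * ∑ n ∈ Ico a (a + w), (s (n + 1) - s n) ^ 2 :=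
          sq_sub_le_mul_sum_Ico_sq s hl₀ hl₀' hl hl'
      _ ≤ w * (1 / 32 * (δ * √δ)) := by
          gcongr
          exact (sum_Ico_sq_sub_le_columnEnergy haw).trans small
      _ = w * √δ * (δ / 32) := by ring
      _ ≤ 2 * (δ / 32) := by gcongr
      _ = (√δ / 4) ^ 2 := by rw [div_pow, sqrt_sq]; ring
  have p_le (l : ℕ) (hl : a ≤ l) (hl' : l ≤ a + w) : p l ≤ 9 / 16 * δ := by
    have abs_le : |s l| ≤ 3 / 4 * √δ := by
      linarith [abs_sub_abs_le_abs_sub (s l) (s l₀), oscillation_le l hl hl']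
    calc p l ≤ s l ^ 2 := hp l (hl'.trans haw)
      _ ≤ (3 / 4 * √δ) ^ 2 := sq_le_sq' (neg_le_of_abs_le abs_le) (le_of_abs_le abs_le)
      _ = 9 / 16 * δ := by rw [mul_pow, sqrt_sq]; ring
  refine mul_le_columnEnergy haw fun l hl => ?_
  obtain ⟨hl, hl'⟩ := mem_Ico.1 hl
  nlinarith [p_le l hl hl'.le, p_le (l + 1) (by omega) hl']

lemma sqrt_div_two_le_abs (hδ : 0 < δ) (hδ' : δ < 1) (hN : 1 ≤ N) (hp : ∀ l ≤ N, p l ≤ s l ^ 2)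
    (small : columnEnergy δ s p N < 1 / 32 * min (N * δ ^ 2) (δ * √δ)) {l₀ : ℕ} (hl₀ : l₀ ≤ N) :
    √δ / 2 ≤ |s l₀| := by
  obtain ⟨a, w, ha, hl₀', haw, w_le, w_ge⟩ := exists_window hδ hδ' hl₀
  have small_left : columnEnergy δ s p N < 1 / 32 * (N * δ ^ 2) :=
    small.trans_le (by gcongr; exact min_le_left _ _)
  have small_right : columnEnergy δ s p N < 1 / 32 * (δ * √δ) :=
    small.trans_le (by gcongr; exact min_le_right _ _)
  by_contra! center_lt
  have energy_ge := window_le_columnEnergy hδ hp ha hl₀' haw w_le small_right.le center_lt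
  rcases w_ge with rfl | w_ge
  · have : 0 < (w : ℝ) * δ ^ 2 := mul_pos (by exact_mod_cast hN) (by positivity)
    linarith
  · have : δ * √δ * 1 ≤ δ * √δ * (w * √δ) := by gcongr
    have : δ * √δ * (w * √δ) = w * δ ^ 2 := by linear_combination (w * δ) * mul_self_sqrt hδ.le
    have : 0 < δ * √δ := by positivity
    linarith

lemma sqrt_div_two_le_or_le_neg (hδ : 0 < δ) (hδ' : δ < 1) (hN : 1 ≤ N)
    (hp : ∀ l ≤ N, p l ≤ s l ^ 2)
    (small : columnEnergy δ s p N < 1 / 32 * min (N * δ ^ 2) (δ * √δ)) :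
    (∀ l ≤ N, √δ / 2 ≤ s l) ∨ ∀ l ≤ N, √δ / 2 ≤ -s l := by
  have sqrt_pos : 0 < √δ := Real.sqrt_pos.2 hδ
  have modulus_ge (l : ℕ) (hl : l ≤ N) : √δ / 2 ≤ |s l| := sqrt_div_two_le_abs hδ hδ' hN hp small hl
  have step_lt (l : ℕ) (hl : l < N) : |s (l + 1) - s l| < √δ := by
    refine abs_lt_of_sq_lt_sq ?_ sqrt_pos.le
    calc (s (l + 1) - s l) ^ 2 = ∑ n ∈ Ico l (l + 1), (s (n + 1) - s n) ^ 2 := by simp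
      _ ≤ columnEnergy δ s p N := sum_Ico_sq_sub_le_columnEnergy hl
      _ < 1 / 32 * min (N * δ ^ 2) (δ * √δ) := small
      _ ≤ 1 / 32 * (δ * √δ) := by gcongr; exact min_le_right _ _
      _ ≤ √δ ^ 2 := by nlinarith [sq_sqrt hδ.le, sqrt_le_one.2 hδ'.le]
  refine (le_abs.1 (modulus_ge 0 N.zero_le)).imp (fun start l => ?_) (fun start l => ?_)
  all_goals
    induction l with
    | zero => exact fun _ => start
    | succ l previous =>
      intro hl
      rcases le_abs.1 (modulus_ge (l + 1) hl) with here | here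
      all_goals linarith [previous (by omega), abs_lt.1 (step_lt l hl)]

lemma sum_le_of_sum_sq_le {i : ℕ} (hδ : 0 < δ) (hi : 2 ≤ i) (hp : ∀ l < i, 0 ≤ p l)
    (h : ∑ l ∈ range (i - 1), (2 * δ - p l - p (l + 1)) ^ 2 ≤ i * δ ^ 2) :
    ∑ l ∈ range i, p l ≤ 4 * δ * i := by
  obtain ⟨n, rfl⟩ := Nat.exists_eq_add_of_le' (by omega : 1 ≤ i)
  rw [Nat.add_sub_cancel] at h
  have pair_le (l : ℕ) : p l + p (l + 1) ≤ 3 * δ + (2 * δ - p l - p (l + 1)) ^ 2 / (4 * δ) := by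
    rw [← sub_le_iff_le_add', le_div_iff₀ (by positivity)]
    nlinarith [sq_nonneg (4 * δ - p l - p (l + 1))]
  have pairs_le : ∑ l ∈ range n, (p l + p (l + 1)) ≤ n * (3 * δ) + (n + 1) * (δ / 4) := by
    calc ∑ l ∈ range n, (p l + p (l + 1))
        ≤ ∑ l ∈ range n, (3 * δ + (2 * δ - p l - p (l + 1)) ^ 2 / (4 * δ)) :=
          sum_le_sum fun l _ => pair_le l
      _ = n * (3 * δ) + (∑ l ∈ range n, (2 * δ - p l - p (l + 1)) ^ 2) / (4 * δ) := by
          rw [sum_add_distrib, sum_const, card_range, nsmul_eq_mul, sum_div]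
      _ ≤ n * (3 * δ) + (n + 1) * δ ^ 2 / (4 * δ) := by
          gcongr
          exact_mod_cast h
      _ = n * (3 * δ) + (n + 1) * (δ / 4) := by field_simp
  rw [sum_add_distrib] at pairs_le
  have head_le : p 0 ≤ ∑ l ∈ range n, p l :=
    single_le_sum (fun l hl => hp l (by have := mem_range.1 hl; omega))
      (mem_range.2 (by omega : 0 < n))
  rw [sum_range_succ']
  push_cast
  linarith [mul_nonneg hδ.le n.cast_nonneg]

end Sequence

/-! ### Rotation along a line of spins -/

section Line

variable {δ : ℝ} {w : ℕ → ℝ × ℝ} {N i : ℕ}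

lemma abs_sum_signedAngle_le (hδ : 0 < δ) (hi : 2 ≤ i)
    (aligned : ∀ l < i, IsAligned (w l) (w (l + 1))) (small : lineEnergy δ (i - 1) w ≤ i * δ ^ 2) :
    |∑ l ∈ range i, signedAngle (w l) (w (l + 1))| ≤ 5 * i * √δ := by
  have defect_sum_le : ∑ l ∈ range i, (1 - dotp (w l) (w (l + 1))) ≤ 4 * δ * i := by
    refine sum_le_of_sum_sq_le hδ hi (fun l hl => ?_) (le_trans (sum_le_sum fun l hl => ?_) small)
    · exact sub_nonneg.2 (dotp_le_one (aligned l hl).left (aligned l hl).right)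
    · have hl := mem_range.1 hl
      rw [stencilEnergy_eq (aligned l (by omega)).right]
      refine le_add_of_le_of_nonneg (le_of_eq ?_) (sq_nonneg _)
      ring
  refine abs_le_of_sq_le_sq ?_ (by positivity)
  calc (∑ l ∈ range i, signedAngle (w l) (w (l + 1))) ^ 2
      ≤ i * ∑ l ∈ range i, signedAngle (w l) (w (l + 1)) ^ 2 := by
        simpa using sq_sum_le_card_mul_sum_sq (s := range i)
          (f := fun l => signedAngle (w l) (w (l + 1)))
    _ ≤ i * ∑ l ∈ range i, 5 * (1 - dotp (w l) (w (l + 1))) := by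
        gcongr with l hl
        exact (aligned l (mem_range.1 hl)).signedAngle_sq_le
    _ ≤ i * (5 * (4 * δ * i)) := by rw [← mul_sum]; gcongr
    _ ≤ i * (5 * (5 * δ * i)) := by gcongr; norm_num
    _ = (5 * i * √δ) ^ 2 := by rw [mul_pow, sq_sqrt hδ.le]; ring

lemma columnEnergy_eq_lineEnergy (unit : ∀ l < N, sqnorm (w (l + 1)) = 1) :
    columnEnergy δ (fun l => crossp (w l) (w (l + 1))) (fun l => 1 - dotp (w l) (w (l + 1))) N =
      lineEnergy δ N w := by
  refine sum_congr rfl fun l hl => ?_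
  rw [stencilEnergy_eq (unit l (mem_range.1 hl))]
  ring

lemma le_abs_sum_signedAngle (hδ : 0 < δ) (hδ' : δ < 1) (hN : 1 ≤ N)
    (aligned : ∀ l ≤ N, IsAligned (w l) (w (l + 1)))
    (small : lineEnergy δ N w < 1 / 32 * min (N * δ ^ 2) (δ * √δ)) :
    (N + 1) * (√δ / 2) ≤ |∑ l ∈ range (N + 1), signedAngle (w l) (w (l + 1))| := by
  have le_sum (t : ℕ → ℝ) (ht : ∀ l ≤ N, √δ / 2 ≤ t l) :
      (N + 1) * (√δ / 2) ≤ ∑ l ∈ range (N + 1), t l := by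
    have card_mul_le := card_nsmul_le_sum (range (N + 1)) t _ fun l hl =>
      ht l (mem_range_succ_iff.1 hl)
    simpa [nsmul_eq_mul] using card_mul_le
  rw [← columnEnergy_eq_lineEnergy fun l hl => (aligned l hl.le).right] at small
  have sqrt_nonneg := Real.sqrt_nonneg δ
  rcases sqrt_div_two_le_or_le_neg hδ hδ' hN (fun l hl => (aligned l hl).one_sub_dotp_le) small
    with positive | negative
  · refine (le_sum _ fun l hl => (positive l hl).trans ?_).trans (le_abs_self _)
    exact (aligned l hl).crossp_le_signedAngle (by linarith [positive l hl])
  · refine (le_sum (fun l => -signedAngle (w l) (w (l + 1))) fun l hl =>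
      (negative l hl).trans ?_).trans ?_
    · exact (aligned l hl).neg_crossp_le_neg_signedAngle (by linarith [negative l hl])
    · rw [sum_neg_distrib]
      exact neg_le_abs _

end Line

/-! ### Rows and columns of an aligned field -/

/-- A field on `{0, …, k}²` with the boundary values of `InS0` in which all neighbouring spins are
aligned. -/
structure IsAlignedField (k : ℕ) (v : ℕ → ℕ → ℝ × ℝ) : Prop where
  boundary : ∀ j ≤ k, v 0 j = (0, 1)
  horizontal : ∀ i < k, ∀ j ≤ k, IsAligned (v i j) (v (i + 1) j)
  vertical : ∀ i ≤ k, ∀ j < k, IsAligned (v i j) (v i (j + 1))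

/-- The total rotation of the spins from `v 0 j` to `v i j` along the row `j`. -/
noncomputable def rowAngle (v : ℕ → ℕ → ℝ × ℝ) (i j : ℕ) : ℝ :=
  ∑ a ∈ range i, signedAngle (v a j) (v (a + 1) j)

namespace IsAlignedField

variable {δ : ℝ} {k : ℕ} {v : ℕ → ℕ → ℝ × ℝ}

lemma signedAngle_eq_sub (h : IsAlignedField k v) {i j : ℕ} (hi : i ≤ k) (hj : j < k) :
    signedAngle (v i j) (v i (j + 1)) = rowAngle v i (j + 1) - rowAngle v i j := by
  induction i with
  | zero => simp [rowAngle, signedAngle, crossp, h.boundary j hj.le, h.boundary (j + 1) hj]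
  | succ i previous =>
    have square := (h.horizontal i hi j hj.le).signedAngle_add_signedAngle_eq
      (h.vertical (i + 1) hi j hj) (h.vertical i (by omega) j hj) (h.horizontal i hi (j + 1) hj)
    unfold rowAngle at previous ⊢
    rw [sum_range_succ, sum_range_succ]
    linarith [previous (by omega)]

lemma sum_signedAngle_eq_sub (h : IsAlignedField k v) {i j n : ℕ} (hi : i ≤ k) (hj : j + n ≤ k) :
    ∑ l ∈ range n, signedAngle (v i (j + l)) (v i (j + l + 1)) =
      rowAngle v i (j + n) - rowAngle v i j := by
  refine Eq.trans ?_ (sum_range_sub (fun l => rowAngle v i (j + l)) n)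
  refine sum_congr rfl fun l hl => h.signedAngle_eq_sub hi ?_
  have := mem_range.1 hl
  omega

lemma abs_rowAngle_le (h : IsAlignedField k v) (hδ : 0 < δ) {i j : ℕ} (hi : 2 ≤ i) (hik : i ≤ k)
    (hj : j ≤ k) (small : lineEnergy δ (k - 1) (fun a => v a j) ≤ i * δ ^ 2) :
    |rowAngle v i j| ≤ 5 * i * √δ := by
  refine abs_sum_signedAngle_le hδ hi (fun l hl => h.horizontal l (by omega) j hj)
    (le_trans ?_ small)
  refine sum_le_sum_of_subset_of_nonneg (range_mono (by omega)) fun _ _ _ => ?_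
  exact stencilEnergy_nonneg ..

-- Between two rows that have rotated little, the column `i` cannot rotate at the helical rate.
lemma le_lineEnergy_window (h : IsAlignedField k v) (hδ : 0 < δ) (hδ' : δ < 1) {i j : ℕ}
    (hi : 2 ≤ i) (hj : j + (21 * i + 1) ≤ k)
    (bottom : lineEnergy δ (k - 1) (fun a => v a j) ≤ i * δ ^ 2)
    (top : lineEnergy δ (k - 1) (fun a => v a (j + (21 * i + 1))) ≤ i * δ ^ 2) :
    1 / 32 * min ((21 * i : ℕ) * δ ^ 2) (δ * √δ) ≤
      lineEnergy δ (21 * i) (fun l => v i (j + l)) := by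
  by_contra! small
  have angle_ge := le_abs_sum_signedAngle hδ hδ' (by omega : 1 ≤ 21 * i)
    (fun l hl => h.vertical i (by omega) (j + l) (by omega)) small
  simp only [← add_assoc] at angle_ge
  rw [h.sum_signedAngle_eq_sub (by omega) hj] at angle_ge
  have angle_le := (abs_sub (rowAngle v i (j + (21 * i + 1))) (rowAngle v i j)).trans
    (add_le_add (h.abs_rowAngle_le hδ hi (by omega) hj top)
      (h.abs_rowAngle_le hδ hi (by omega) (by omega) bottom))
  push_cast at angle_ge
  have : 0 < i * √δ := mul_pos (by exact_mod_cast (by omega : 0 < i)) (Real.sqrt_pos.2 hδ)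
  linarith [Real.sqrt_pos.2 hδ]

end IsAlignedField

/-! ### Counting good windows -/

lemma sum_range_add_le {f : ℕ → ℝ} (hf : ∀ l, 0 ≤ f l) {n N M : ℕ} (h : n + N ≤ M + 1) :
    ∑ j ∈ range n, ∑ l ∈ range N, f (j + l) ≤ N * ∑ j ∈ range M, f j := by
  rw [sum_comm, ← nsmul_eq_mul]
  refine (sum_le_card_nsmul _ _ (∑ j ∈ range M, f j) fun l hl => ?_).trans_eq (by rw [card_range])
  have hl := mem_range.1 hl
  calc ∑ j ∈ range n, f (j + l) = ∑ j ∈ Ico l (n + l), f j := by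
        rw [range_eq_Ico, sum_Ico_add', zero_add]
    _ ≤ ∑ j ∈ range M, f j := by
        refine sum_le_sum_of_subset_of_nonneg (fun j hj => ?_) fun j _ _ => hf j
        simp only [mem_Ico, mem_range] at hj ⊢
        omega

lemma card_le_card_filter_and_shift (p : ℕ → Prop) [DecidablePred p] (n d : ℕ) :
    n ≤ #{j ∈ range n | p j ∧ p (j + d)} + 2 * #{j ∈ range (n + d) | ¬p j} := by
  have cover : range n ⊆ {j ∈ range n | p j ∧ p (j + d)} ∪ ({j ∈ range (n + d) | ¬p j} ∪
      image (fun j => j - d) {j ∈ range (n + d) | ¬p j}) := by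
    intro j hj
    have hj' := mem_range.1 hj
    simp only [mem_union, mem_image, mem_filter, mem_range]
    by_cases hp : p j
    · by_cases hp' : p (j + d)
      · exact .inl ⟨hj', hp, hp'⟩
      · exact .inr (.inr ⟨j + d, ⟨by omega, hp'⟩, by omega⟩)
    · exact .inr (.inl ⟨by omega, hp⟩)
  have card_le := card_le_card cover
  rw [card_range] at card_le
  have := card_union_le {j ∈ range n | p j ∧ p (j + d)} ({j ∈ range (n + d) | ¬p j} ∪
      image (fun j => j - d) {j ∈ range (n + d) | ¬p j})
  have := card_union_le {j ∈ range (n + d) | ¬p j}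
    (image (fun j => j - d) {j ∈ range (n + d) | ¬p j})
  have : #(image (fun j => j - d) {j ∈ range (n + d) | ¬p j}) ≤ #{j ∈ range (n + d) | ¬p j} :=
    card_image_le
  omega

lemma card_filter_not_le_mul_le {s : Finset ℕ} {R : ℕ → ℝ} (hR : ∀ j, 0 ≤ R j) (τ : ℝ) :
    #{j ∈ s | ¬R j ≤ τ} * τ ≤ ∑ j ∈ s, R j := by
  rw [← nsmul_eq_mul]
  calc #{j ∈ s | ¬R j ≤ τ} • τ ≤ ∑ j ∈ s with ¬R j ≤ τ, R j :=
        card_nsmul_le_sum _ _ _ fun j hj => (not_le.1 (mem_filter.1 hj).2).le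
    _ ≤ ∑ j ∈ s, R j := sum_le_sum_of_subset_of_nonneg (filter_subset _ _) fun j _ _ => hR j

lemma mul_le_mul_sum_of_windows {R f : ℕ → ℝ} (hR : ∀ j, 0 ≤ R j) (hf : ∀ j, 0 ≤ f j)
    {k N : ℕ} {τ μ : ℝ} (hτ : 0 < τ) (hμ : 0 ≤ μ) (hN : 4 * N ≤ k)
    (rows_le : ∑ j ∈ range (k + 1), R j ≤ k / 8 * τ)
    (window : ∀ j, j + (N + 1) ≤ k → R j ≤ τ → R (j + (N + 1)) ≤ τ →
      μ ≤ ∑ l ∈ range N, f (j + l)) :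
    k / 2 * μ ≤ N * ∑ j ∈ range (k - 1), f j := by
  set good : Finset ℕ := {j ∈ range (k - N) | R j ≤ τ ∧ R (j + (N + 1)) ≤ τ}
  have bad_le : (#{j ∈ range (k + 1) | ¬R j ≤ τ} : ℝ) ≤ k / 8 :=
    le_of_mul_le_mul_right ((card_filter_not_le_mul_le hR τ).trans rows_le) hτ
  have good_ge : (k : ℝ) / 2 ≤ #good := by
    have count : k - N ≤ #good + 2 * #{j ∈ range (k - N + (N + 1)) | ¬R j ≤ τ} :=
      card_le_card_filter_and_shift (fun j => R j ≤ τ) (k - N) (N + 1)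
    rw [show k - N + (N + 1) = k + 1 by omega] at count
    have count_real : (k : ℝ) ≤ N + (#good + 2 * #{j ∈ range (k + 1) | ¬R j ≤ τ}) := by
      exact_mod_cast (by omega : k ≤ N + _)
    have : (4 : ℝ) * N ≤ k := by exact_mod_cast hN
    linarith
  calc k / 2 * μ ≤ #good * μ := by gcongr
    _ = #good • μ := (nsmul_eq_mul _ _).symm
    _ ≤ ∑ j ∈ good, ∑ l ∈ range N, f (j + l) := card_nsmul_le_sum _ _ _ fun j hj => by
        simp only [good, mem_filter, mem_range] at hj
        exact window j (by omega) hj.2.1 hj.2.2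
    _ ≤ ∑ j ∈ range (k - N), ∑ l ∈ range N, f (j + l) :=
        sum_le_sum_of_subset_of_nonneg (filter_subset _ _)
          fun _ _ _ => sum_nonneg fun _ _ => hf _
    _ ≤ N * ∑ j ∈ range (k - 1), f j := sum_range_add_le hf (by omega)

lemma IsAlignedField.le_lineEnergy_column {δ : ℝ} {k : ℕ} {v : ℕ → ℕ → ℝ × ℝ}
    (h : IsAlignedField k v) (hδ : 0 < δ) (hδ' : δ < 1) {i : ℕ} (hi : 2 ≤ i) (hik : 84 * i ≤ k)
    (rows_le : ∑ j ∈ range (k + 1), lineEnergy δ (k - 1) (fun a => v a j) ≤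
      k / 8 * (i * δ ^ 2)) :
    k / 64 * min (δ ^ 2) (δ * √δ / (21 * i)) ≤ lineEnergy δ (k - 1) (v i) := by
  have averaged := mul_le_mul_sum_of_windows (N := 21 * i)
    (f := fun j => stencilEnergy δ (v i j) (v i (j + 1)) (v i (j + 2)))
    (fun j => lineEnergy_nonneg δ (k - 1) (fun a => v a j)) (fun j => stencilEnergy_nonneg ..)
    (by positivity) (by positivity) (by omega) rows_le
    (fun j => h.le_lineEnergy_window hδ hδ' hi)
  have min_eq : min ((21 * i : ℕ) * δ ^ 2) (δ * √δ) =
      21 * i * min (δ ^ 2) (δ * √δ / (21 * i)) := by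
    rw [mul_min_of_nonneg _ _ (by positivity)]
    push_cast
    rw [mul_div_cancel₀ _ (by positivity)]
  rw [min_eq] at averaged
  push_cast at averaged
  refine le_of_mul_le_mul_left (Eq.trans_le ?_ averaged) (by positivity : (0 : ℝ) < 21 * i)
  ring

/-! ### From the energy to its columns -/

section Columns

variable {ε δ : ℝ} {k : ℕ} {u : ℤ × ℤ → ℝ × ℝ}

lemma sum_rows_le_E (hk : Kof ε = k) (hk2 : 2 ≤ k) (δ : ℝ) (u : ℤ × ℤ → ℝ × ℝ) :
    ε ^ 2 / 2 * ∑ j ∈ range (k + 1), lineEnergy δ (k - 1) (fun i => u (i, j)) ≤ E ε δ u := by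
  rw [E, Ehor_eq_sum_lineEnergy hk hk2, Ever_eq_sum_lineEnergy hk hk2]
  exact le_add_of_nonneg_right
    (mul_nonneg (by positivity) (sum_nonneg fun _ _ => lineEnergy_nonneg ..))

lemma sum_columns_le_E (hk : Kof ε = k) (hk2 : 2 ≤ k) (δ : ℝ) (u : ℤ × ℤ → ℝ × ℝ) {s : Finset ℕ}
    (hs : s ⊆ range (k + 1)) :
    ε ^ 2 / 2 * ∑ i ∈ s, lineEnergy δ (k - 1) (fun j => u (i, j)) ≤ E ε δ u := by
  rw [E, Ehor_eq_sum_lineEnergy hk hk2, Ever_eq_sum_lineEnergy hk hk2]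
  refine (mul_le_mul_of_nonneg_left (sum_le_sum_of_subset_of_nonneg hs
    fun _ _ _ => lineEnergy_nonneg ..) (by positivity)).trans (le_add_of_nonneg_left ?_)
  exact mul_nonneg (by positivity) (sum_nonneg fun _ _ => lineEnergy_nonneg ..)

lemma isAligned_of_lineEnergy_le {w : ℕ → ℝ × ℝ} (hδ : δ ≤ 1 / 100) (hk2 : 2 ≤ k)
    (unit : ∀ l ≤ k, sqnorm (w l) = 1) (small : lineEnergy δ (k - 1) w ≤ 1 / 400) {l : ℕ}
    (hl : l < k) : IsAligned (w l) (w (l + 1)) := by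
  have stencil_small (n : ℕ) (hn : n < k - 1) :
      stencilEnergy δ (w n) (w (n + 1)) (w (n + 2)) ≤ 1 / 400 :=
    (single_le_sum (f := fun n => stencilEnergy δ (w n) (w (n + 1)) (w (n + 2)))
      (fun _ _ => stencilEnergy_nonneg ..) (mem_range.2 hn)).trans small
  have aligned_pairs (n : ℕ) (hn : n < k - 1) :=
    isAligned_of_stencilEnergy_le hδ (unit n (by omega)) (unit (n + 1) (by omega))
      (unit (n + 2) (by omega)) (stencil_small n hn)
  by_cases hl' : l < k - 1
  · exact (aligned_pairs l hl').1
  · obtain ⟨n, rfl⟩ := Nat.exists_eq_add_of_le' (by omega : 1 ≤ l)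
    exact (aligned_pairs n (by omega)).2

lemma isAlignedField_of_E_le (hε : 0 < ε) (hδ : δ ≤ 1 / 100) (hk : Kof ε = k) (hk2 : 2 ≤ k)
    (hu : InS0 ε u) (small : E ε δ u ≤ ε ^ 2 / 800) :
    IsAlignedField k (fun i j => u (i, j)) := by
  have unit (i j : ℕ) (hi : i ≤ k) (hj : j ≤ k) : sqnorm (u (i, j)) = 1 :=
    hu.1 _ (by simp only [Idx, hk, mem_product, mem_Icc]; omega)
  have le_of_mul_le {x : ℝ} (h : ε ^ 2 / 2 * x ≤ E ε δ u) : x ≤ 1 / 400 :=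
    le_of_mul_le_mul_left (by linarith) (by positivity : 0 < ε ^ 2 / 2)
  have row_small (j : ℕ) (hj : j ≤ k) : lineEnergy δ (k - 1) (fun i => u (i, j)) ≤ 1 / 400 :=
    (single_le_sum (f := fun j : ℕ => lineEnergy δ (k - 1) (fun i => u (i, j)))
      (fun _ _ => lineEnergy_nonneg ..) (mem_range.2 (by omega : j < k + 1))).trans
      (le_of_mul_le (sum_rows_le_E hk hk2 δ u))
  have column_small (i : ℕ) (hi : i ≤ k) : lineEnergy δ (k - 1) (fun j => u (i, j)) ≤ 1 / 400 := by
    have column_le := sum_columns_le_E hk hk2 δ u (s := {i})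
      (singleton_subset_iff.2 (mem_range.2 (by omega)))
    rw [sum_singleton] at column_le
    exact le_of_mul_le column_le
  refine ⟨fun j hj => ?_, fun i hi j hj => ?_, fun i hi j hj => ?_⟩
  · exact_mod_cast hu.2 j (by rw [hk, mem_Icc]; omega)
  · exact isAligned_of_lineEnergy_le hδ hk2 (fun i hi => unit i j hi hj) (row_small j hj) hi
  · exact isAligned_of_lineEnergy_le hδ hk2 (fun j hj => unit i j hi hj) (column_small i hi) hj

lemma le_lineEnergy_column_of_E_le (hε : 0 < ε) (hδ : 0 < δ) (hδ' : δ ≤ 1 / 100) (hk : Kof ε = k)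
    (hk2 : 2 ≤ k) (hkε : 1 / 2 ≤ k * ε) (hu : InS0 ε u) (small : E ε δ u ≤ ε ^ 2 / 800) {i : ℕ}
    (hi : 2 ≤ i) (hik : 84 * i ≤ k) (E_le : E ε δ u ≤ ε * i * δ ^ 2 / 32) :
    k / 64 * min (δ ^ 2) (δ * √δ / (21 * i)) ≤ lineEnergy δ (k - 1) (fun j => u (i, j)) := by
  have aligned := isAlignedField_of_E_le hε hδ' hk hk2 hu small
  refine aligned.le_lineEnergy_column hδ (by linarith) hi hik
    (le_of_mul_le_mul_left ?_ (by positivity : 0 < ε ^ 2 / 2))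
  calc ε ^ 2 / 2 * ∑ j ∈ range (k + 1), lineEnergy δ (k - 1) (fun i => u (i, j))
      ≤ 1 / 2 * (ε * i * δ ^ 2 / 16) := by linarith [sum_rows_le_E hk hk2 δ u]
    _ ≤ k * ε * (ε * i * δ ^ 2 / 16) := by gcongr
    _ = ε ^ 2 / 2 * (k / 8 * (i * δ ^ 2)) := by ring

end Columns

/-! ### The lower bound -/

-- The spins of the column `i = 0` are all equal, which is far from helical.
lemma half_mul_sq_le_E {ε : ℝ} (hε : 0 < ε) (hε' : ε < 1 / 2) (δ : ℝ) {u : ℤ × ℤ → ℝ × ℝ}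
    (hu : InS0 ε u) : ε * δ ^ 2 / 2 ≤ E ε δ u := by
  obtain ⟨k, hk, hk2, -, le_k_mul⟩ := exists_natCast_eq_Kof hε hε'
  have column_zero : lineEnergy δ (k - 1) (fun j => u ((0 : ℕ), j)) = (k - 1) * (4 * δ ^ 2) := by
    have spin_eq (j : ℕ) (hj : j ≤ k) : u ((0 : ℕ), j) = (0, 1) := by
      exact_mod_cast hu.2 j (by rw [hk, mem_Icc]; omega)
    have stencil_eq (l : ℕ) (hl : l ∈ range (k - 1)) : stencilEnergy δ (u ((0 : ℕ), l))
        (u ((0 : ℕ), (l + 1 : ℕ))) (u ((0 : ℕ), (l + 2 : ℕ))) = 4 * δ ^ 2 := by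
      have hl := mem_range.1 hl
      rw [spin_eq l (by omega), spin_eq (l + 1) (by omega), spin_eq (l + 2) (by omega),
        stencilEnergy_self (by norm_num [sqnorm])]
    rw [lineEnergy, sum_congr rfl stencil_eq, sum_const, card_range, nsmul_eq_mul,
      Nat.cast_pred (by omega)]
  have column_le := sum_columns_le_E hk hk2 δ u (s := {0})
    (singleton_subset_iff.2 (mem_range.2 (by omega)))
  rw [sum_singleton, column_zero] at column_le
  have width_ge : 1 / 4 ≤ ε * (k - 1) := by
    have : ε * 2 ≤ ε * k := by gcongr; exact_mod_cast hk2
    linarith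
  calc ε * δ ^ 2 / 2 = 2 * ε * (1 / 4) * δ ^ 2 := by ring
    _ ≤ 2 * ε * (ε * (k - 1)) * δ ^ 2 := by gcongr
    _ = ε ^ 2 / 2 * ((k - 1) * (4 * δ ^ 2)) := by ring
    _ ≤ E ε δ u := column_le

lemma mul_sqrt_le_E {ε δ : ℝ} (hε : 0 < ε) (hε' : ε < 1 / 2) (hδ : 1 / 100 ≤ δ) (hδ' : δ < 1)
    {u : ℤ × ℤ → ℝ × ℝ} (hu : InS0 ε u) : ε * √δ / 20000 ≤ E ε δ u := by
  calc ε * √δ / 20000 ≤ ε * 1 / 20000 := by gcongr; exact sqrt_le_one.2 hδ'.le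
    _ = ε * (1 / 100) ^ 2 / 2 := by ring
    _ ≤ ε * δ ^ 2 / 2 := by gcongr
    _ ≤ E ε δ u := half_mul_sq_le_E hε hε' δ hu

lemma four_mul_sq_le_min {ε δ σ₀ i : ℝ} (hδ : 0 < δ) (hσ₀ : σ₀ ≤ 1 / 4) (ratio_ge : σ₀ ≤ ε / √δ)
    (hi : 0 < i) (i_mul_le : 84 * i * ε ≤ 1) :
    4 * σ₀ * δ ^ 2 ≤ min (δ ^ 2) (δ * √δ / (21 * i)) := by
  have sqrt_pos : 0 < √δ := Real.sqrt_pos.2 hδ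
  refine le_min (mul_le_of_le_one_left (sq_nonneg δ) (by linarith)) ?_
  rw [le_div_iff₀ (by positivity)]
  calc 4 * σ₀ * δ ^ 2 * (21 * i) = 84 * i * (σ₀ * √δ) * (δ * √δ) := by
        linear_combination (-84 * i * σ₀ * δ) * mul_self_sqrt hδ.le
    _ ≤ 84 * i * ε * (δ * √δ) := by
        gcongr
        exact (le_div_iff₀ sqrt_pos).1 ratio_ge
    _ ≤ δ * √δ := mul_le_of_le_one_left (by positivity) i_mul_le

lemma div_le_E_of_le_column {ε δ x : ℝ} {k : ℕ} {u : ℤ × ℤ → ℝ × ℝ} (hk : Kof ε = k)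
    (hk168 : 168 ≤ k) (hkε : 1 / 2 ≤ k * ε) (hx : 0 ≤ x)
    (column_ge : ∀ i : ℕ, k ≤ 168 * i → 84 * i ≤ k →
      k * x ≤ lineEnergy δ (k - 1) (fun j => u (i, j))) :
    x / 2688 ≤ E ε δ u := by
  obtain ⟨q, hq⟩ : ∃ q, q = k / 168 := ⟨_, rfl⟩
  have k_le : (k : ℝ) ≤ 336 * q := by exact_mod_cast (by omega : k ≤ 336 * q)
  have columns_ge := card_nsmul_le_sum (Ico (q + 1) (2 * q + 1)) _ _ fun i hi => by
    rw [mem_Ico] at hi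
    exact column_ge i (by omega) (by omega)
  rw [Nat.card_Ico, show 2 * q + 1 - (q + 1) = q by omega, nsmul_eq_mul] at columns_ge
  calc x / 2688 = (1 / 2) ^ 2 * x / 672 := by ring
    _ ≤ (k * ε) ^ 2 * x / 672 := by gcongr
    _ = ε ^ 2 / 2 * (k / 336 * (k * x)) := by ring
    _ ≤ ε ^ 2 / 2 * (q * (k * x)) := by gcongr; linarith
    _ ≤ ε ^ 2 / 2 * ∑ i ∈ Ico (q + 1) (2 * q + 1), lineEnergy δ (k - 1) (fun j => u (i, j)) := by
        gcongr
    _ ≤ E ε δ u := sum_columns_le_E hk (by omega) δ u fun i hi => by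
        rw [mem_Ico] at hi
        exact mem_range.2 (by omega)

lemma mul_sq_le_E {ε δ σ₀ : ℝ} (hδ : 0 < δ) (hδ' : δ ≤ 1 / 100) (δ_le : δ ≤ ε)
    (hε' : ε < 1 / 2) (hσ₀ : 0 < σ₀) (hσ₀' : σ₀ ≤ 1 / 4) (ratio_ge : σ₀ ≤ ε / √δ)
    {u : ℤ × ℤ → ℝ × ℝ} (hu : InS0 ε u) : σ₀ * δ ^ 2 / 10 ^ 6 ≤ E ε δ u := by
  have hε := hδ.trans_le δ_le
  have bound_le : σ₀ * δ ^ 2 / 10 ^ 6 ≤ δ ^ 2 / 10 ^ 6 := by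
    gcongr
    exact mul_le_of_le_one_left (sq_nonneg δ) (by linarith)
  obtain ⟨k, hk, hk2, k_mul_lt, le_k_mul⟩ := exists_natCast_eq_Kof hε hε'
  by_contra! small
  have k_gt : 336 < k := by
    by_contra! k_le
    have k_le : (k : ℝ) ≤ 336 := by exact_mod_cast k_le
    have ε_ge : 1 / 337 ≤ ε := by
      have : (k + 1) * ε ≤ (336 + 1) * ε := by gcongr
      linarith
    have : 1 / 337 * δ ^ 2 ≤ ε * δ ^ 2 := by gcongr
    linarith [half_mul_sq_le_E hε hε' δ hu, sq_nonneg δ]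
  have hkε : 1 / 2 ≤ k * ε := by linarith
  have column_ge (i : ℕ) (le_i : k ≤ 168 * i) (i_le : 84 * i ≤ k) :
      k * (σ₀ * δ ^ 2 / 16) ≤ lineEnergy δ (k - 1) (fun j => u (i, j)) := by
    have i_pos : (0 : ℝ) < i := by exact_mod_cast (by omega : 0 < i)
    have k_mul_le : k * ε ≤ 168 * i * ε := by gcongr; exact_mod_cast le_i
    have i_mul_le : 84 * i * ε ≤ k * ε := by gcongr; exact_mod_cast i_le
    have E_le : E ε δ u ≤ ε * i * δ ^ 2 / 32 := by
      have : 1 / 336 * δ ^ 2 ≤ ε * i * δ ^ 2 := by gcongr; linarith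
      linarith [sq_nonneg δ]
    have E_small : E ε δ u ≤ ε ^ 2 / 800 := by
      have : δ ^ 2 ≤ ε ^ 2 := by gcongr
      linarith [sq_nonneg δ]
    calc k * (σ₀ * δ ^ 2 / 16) = k / 64 * (4 * σ₀ * δ ^ 2) := by ring
      _ ≤ k / 64 * min (δ ^ 2) (δ * √δ / (21 * i)) := by
          gcongr
          exact four_mul_sq_le_min hδ hσ₀' ratio_ge i_pos (by linarith)
      _ ≤ lineEnergy δ (k - 1) (fun j => u (i, j)) :=
          le_lineEnergy_column_of_E_le hε hδ hδ' hk hk2 hkε hu E_small (by omega) i_le E_le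
  linarith [div_le_E_of_le_column hk (by omega) hkε (by positivity) column_ge,
    mul_pos hσ₀ (pow_pos hδ 2)]

lemma log_le_sum_inv {a b : ℕ} (ha : 1 ≤ a) (hab : a ≤ b) :
    log (b / a) ≤ ∑ i ∈ Ico a b, (i : ℝ)⁻¹ := by
  have a_pos : (0 : ℝ) < a := by exact_mod_cast ha
  induction b, hab using Nat.le_induction with
  | base => simp [a_pos.ne']
  | succ b hab previous =>
    have b_pos : (0 : ℝ) < b := by exact_mod_cast (by omega : 0 < b)
    have ratio_eq : ((b + 1 : ℕ) : ℝ) / a = b / a * (1 + (b : ℝ)⁻¹) := by push_cast; field_simp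
    rw [sum_Ico_succ_top hab, ratio_eq, log_mul (by positivity) (by positivity)]
    linarith [log_le_sub_one_of_pos (by positivity : 0 < 1 + (b : ℝ)⁻¹)]

lemma abs_log_add_one_div_eight_le_log {σ x : ℝ} (hσ : 0 < σ) (hσ' : σ ≤ 1 / 336 ^ 4)
    (hx : 1 / (336 * √σ) ≤ x) : (|log σ| + 1) / 8 ≤ log x := by
  have sqrt_pos : 0 < √σ := Real.sqrt_pos.2 hσ
  have one_le_log : 1 ≤ log 336 := by
    rw [le_log_iff_exp_le (by norm_num)]
    linarith [exp_one_lt_three]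
  have log_le : log σ ≤ -(4 * log 336) := by
    calc log σ ≤ log (1 / 336 ^ 4) := log_le_log hσ hσ'
      _ = -(4 * log 336) := by rw [one_div, log_inv, log_pow]; norm_num
  calc (|log σ| + 1) / 8 = (-log σ + 1) / 8 := by rw [abs_of_nonpos (by linarith)]
    _ ≤ -(log 336 + log σ / 2) := by linarith
    _ = log (1 / (336 * √σ)) := by
        rw [one_div, log_inv, log_mul (by norm_num) sqrt_pos.ne', log_sqrt hσ.le]
    _ ≤ log x := log_le_log (by positivity) hx

lemma exists_column_range {ε σ : ℝ} {k : ℕ} (hε : 0 < ε) (hkε : 1 / 2 ≤ k * ε) (hσ : 0 < σ)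
    (hσ' : σ ≤ 1 / 336 ^ 4) (ε_le : 2 * ε ≤ √σ) :
    ∃ a b : ℕ, 2 ≤ a ∧ a ≤ b ∧ 84 * b ≤ k + 84 ∧ √σ ≤ ε * a ∧ (|log σ| + 1) / 8 ≤ log (b / a) := by
  have sqrt_le : √σ ≤ 1 / 336 ^ 2 := by
    rw [sqrt_le_iff]
    exact ⟨by norm_num, hσ'.trans_eq (by norm_num)⟩
  have two_le : 2 ≤ √σ / ε := (le_div_iff₀ hε).2 ε_le
  have le_ceil : √σ / ε ≤ ⌈√σ / ε⌉₊ := Nat.le_ceil _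
  have ceil_le : (⌈√σ / ε⌉₊ : ℝ) ≤ 2 * (√σ / ε) := by
    linarith [Nat.ceil_lt_add_one (by positivity : 0 ≤ √σ / ε)]
  have ceil_pos : (0 : ℝ) < ⌈√σ / ε⌉₊ := by linarith
  have last_ge : 1 / (168 * ε) ≤ ((k / 84 + 1 : ℕ) : ℝ) := by
    have k_le : (k : ℝ) ≤ 84 * ((k / 84 + 1 : ℕ) : ℝ) := by
      exact_mod_cast (by omega : k ≤ 84 * (k / 84 + 1))
    rw [div_le_iff₀ (by positivity)]
    have : k * ε ≤ 84 * ((k / 84 + 1 : ℕ) : ℝ) * ε := by gcongr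
    linarith
  have ratio_ge : 1 / (336 * √σ) ≤ ((k / 84 + 1 : ℕ) : ℝ) / ⌈√σ / ε⌉₊ := by
    rw [le_div_iff₀ ceil_pos]
    calc 1 / (336 * √σ) * ⌈√σ / ε⌉₊ ≤ 1 / (336 * √σ) * (2 * (√σ / ε)) := by gcongr
      _ = 1 / (168 * ε) := by field_simp; norm_num
      _ ≤ ((k / 84 + 1 : ℕ) : ℝ) := last_ge
  have one_le_ratio : 1 ≤ ((k / 84 + 1 : ℕ) : ℝ) / ⌈√σ / ε⌉₊ := by
    refine le_trans ?_ ratio_ge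
    rw [le_div_iff₀ (by positivity)]
    linarith
  refine ⟨⌈√σ / ε⌉₊, k / 84 + 1, by exact_mod_cast two_le.trans le_ceil, ?_, by omega, ?_,
    abs_log_add_one_div_eight_le_log hσ hσ' ratio_ge⟩
  · exact_mod_cast (one_le_div₀ ceil_pos).1 one_le_ratio
  · exact (div_le_iff₀' hε).1 le_ceil

lemma min_sq_eq_of_one_le_mul_sqrt {δ i : ℝ} (hδ : 0 < δ) (hi : 1 ≤ i * √δ) :
    min (δ ^ 2) (δ * √δ / (21 * i)) = δ * √δ / (21 * i) := by
  have sqrt_pos : 0 < √δ := Real.sqrt_pos.2 hδ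
  have i_pos : 0 < i := pos_of_mul_pos_left (one_pos.trans_le hi) sqrt_pos.le
  refine min_eq_right ((div_le_iff₀ (by positivity)).2 ?_)
  calc δ * √δ ≤ δ * √δ * (i * √δ) := le_mul_of_one_le_right (by positivity) hi
    _ = δ ^ 2 * i := by linear_combination (δ * i) * mul_self_sqrt hδ.le
    _ ≤ δ ^ 2 * (21 * i) := by gcongr; linarith

lemma mul_log_div_le_E_of_le_column {ε δ x : ℝ} {k a b : ℕ} {u : ℤ × ℤ → ℝ × ℝ} (hk : Kof ε = k)
    (hk2 : 2 ≤ k) (hkε : 1 / 2 ≤ k * ε) (hε : 0 < ε) (hx : 0 ≤ x) (ha : 1 ≤ a) (hab : a ≤ b)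
    (hbk : b ≤ k + 1)
    (column_ge : ∀ i ∈ Ico a b, k * x / i ≤ lineEnergy δ (k - 1) (fun j => u (i, j))) :
    ε * x * log (b / a) / 4 ≤ E ε δ u := by
  have log_nonneg : 0 ≤ log ((b : ℝ) / a) := by
    refine Real.log_nonneg ((one_le_div₀ ?_).2 ?_)
    · exact_mod_cast ha
    · exact_mod_cast hab
  calc ε * x * log (b / a) / 4 = 1 / 2 * (ε / 2 * x * log (b / a)) := by ring
    _ ≤ k * ε * (ε / 2 * x * log (b / a)) := by gcongr
    _ = ε ^ 2 / 2 * (k * x * log (b / a)) := by ring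
    _ ≤ ε ^ 2 / 2 * (k * x * ∑ i ∈ Ico a b, (i : ℝ)⁻¹) := by
        gcongr
        exact log_le_sum_inv ha hab
    _ ≤ ε ^ 2 / 2 * ∑ i ∈ Ico a b, lineEnergy δ (k - 1) (fun j => u (i, j)) := by
        rw [mul_sum]
        gcongr with i hi
        exact column_ge i hi
    _ ≤ E ε δ u := sum_columns_le_E hk hk2 δ u fun i hi => by
        rw [mem_Ico] at hi
        exact mem_range.2 (by omega)

lemma le_lineEnergy_column_of_sqrt_le {ε δ : ℝ} {k : ℕ} {u : ℤ × ℤ → ℝ × ℝ} (hδ : 0 < δ)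
    (hδ' : δ ≤ 1 / 100) (δ_le : δ ≤ ε) (hk : Kof ε = k) (hk2 : 2 ≤ k) (hkε : 1 / 2 ≤ k * ε)
    (hu : InS0 ε u) (ratio_le : ε / √δ ≤ 1) (small : E ε δ u ≤ √(ε / √δ) * δ ^ 2 / 800) {i : ℕ}
    (hi : 2 ≤ i) (hik : 84 * i ≤ k) (le_i : √(ε / √δ) ≤ ε * i) :
    k * (δ * √δ / 1344) / i ≤ lineEnergy δ (k - 1) (fun j => u (i, j)) := by
  have hε := hδ.trans_le δ_le
  have sqrt_pos : 0 < √δ := Real.sqrt_pos.2 hδ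
  have ratio_sqrt_pos : 0 < √(ε / √δ) := Real.sqrt_pos.2 (by positivity)
  have ratio_sqrt_le : √(ε / √δ) ≤ 1 := sqrt_le_one.2 ratio_le
  have one_le : 1 ≤ i * √δ := by
    refine le_of_mul_le_mul_left ?_ ratio_sqrt_pos
    calc √(ε / √δ) * 1 ≤ ε * i := by rwa [mul_one]
      _ = √(ε / √δ) * √(ε / √δ) * √δ * i := by
          rw [mul_self_sqrt (by positivity), div_mul_cancel₀ ε sqrt_pos.ne']
      _ ≤ √(ε / √δ) * 1 * √δ * i := by gcongr
      _ = √(ε / √δ) * (i * √δ) := by ring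
  have small_ε : E ε δ u ≤ ε ^ 2 / 800 := by
    calc E ε δ u ≤ √(ε / √δ) * δ ^ 2 / 800 := small
      _ ≤ 1 * ε ^ 2 / 800 := by gcongr
      _ = ε ^ 2 / 800 := by ring
  have small_i : E ε δ u ≤ ε * i * δ ^ 2 / 32 := by
    calc E ε δ u ≤ √(ε / √δ) * δ ^ 2 / 800 := small
      _ ≤ ε * i * δ ^ 2 / 32 := by gcongr; norm_num
  calc k * (δ * √δ / 1344) / i = k / 64 * (δ * √δ / (21 * i)) := by ring
    _ = k / 64 * min (δ ^ 2) (δ * √δ / (21 * i)) := by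
        rw [min_sq_eq_of_one_le_mul_sqrt hδ one_le]
    _ ≤ lineEnergy δ (k - 1) (fun j => u (i, j)) :=
        le_lineEnergy_column_of_E_le hε hδ hδ' hk hk2 hkε hu small_ε hi hik small_i

lemma two_mul_le_sqrt_ratio {ε δ : ℝ} (hε : 0 < ε) (hδ : 0 < δ) (hδ' : δ ≤ 1)
    (ratio_le : ε / √δ ≤ 1 / 4) : 2 * ε ≤ √(ε / √δ) := by
  have sqrt_pos : 0 < √δ := Real.sqrt_pos.2 hδ
  have ratio_sqrt_le : √(ε / √δ) ≤ 1 / 2 :=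
    sqrt_le_iff.2 ⟨by norm_num, ratio_le.trans_eq (by norm_num)⟩
  calc 2 * ε = 2 * (√(ε / √δ) * √(ε / √δ) * √δ) := by
        rw [mul_self_sqrt (by positivity), div_mul_cancel₀ ε sqrt_pos.ne']
    _ ≤ 2 * (√(ε / √δ) * (1 / 2) * 1) := by gcongr; exact sqrt_le_one.2 hδ'
    _ = √(ε / √δ) := by ring

lemma mul_log_le_E {ε δ : ℝ} (hδ : 0 < δ) (hδ' : δ ≤ 1 / 100) (δ_le : δ ≤ ε) (hε' : ε < 1 / 2)
    (ratio_le : ε / √δ ≤ 1 / 336 ^ 4) {u : ℤ × ℤ → ℝ × ℝ} (hu : InS0 ε u) :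
    ε * (δ * √δ) * (|log (ε / √δ)| + 1) / 10 ^ 5 ≤ E ε δ u := by
  have hε := hδ.trans_le δ_le
  obtain ⟨k, hk, hk2, -, le_k_mul⟩ := exists_natCast_eq_Kof hε hε'
  have hkε : 1 / 2 ≤ k * ε := by linarith
  have ratio_le_one : ε / √δ ≤ 1 := ratio_le.trans (by norm_num)
  obtain ⟨a, b, ha, hab, hb, le_a, log_ge⟩ := exists_column_range hε hkε (by positivity) ratio_le
    (two_mul_le_sqrt_ratio hε hδ (by linarith) (ratio_le.trans (by norm_num)))
  by_contra! E_lt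
  have small : E ε δ u ≤ √(ε / √δ) * δ ^ 2 / 800 := by
    have : 0 ≤ √(ε / √δ) * δ ^ 2 := by positivity
    linarith [branching_scale_le hε hδ ratio_le_one]
  have column_ge (i : ℕ) (hi : i ∈ Ico a b) :
      k * (δ * √δ / 1344) / i ≤ lineEnergy δ (k - 1) (fun j => u (i, j)) := by
    rw [mem_Ico] at hi
    exact le_lineEnergy_column_of_sqrt_le hδ hδ' δ_le hk hk2 hkε hu ratio_le_one small (by omega)
      (by omega) (le_a.trans (by gcongr; exact hi.1))
  have bound_nonneg : 0 ≤ ε * (δ * √δ) * (|log (ε / √δ)| + 1) := by positivity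
  refine E_lt.not_ge ?_
  calc ε * (δ * √δ) * (|log (ε / √δ)| + 1) / 10 ^ 5
      ≤ ε * (δ * √δ / 1344) * ((|log (ε / √δ)| + 1) / 8) / 4 := by linarith
    _ ≤ ε * (δ * √δ / 1344) * log (b / a) / 4 := by gcongr
    _ ≤ E ε δ u := mul_log_div_le_E_of_le_column hk hk2 hkε hε (by positivity) (by omega) hab
        (by omega) column_ge

lemma mul_min_le_E {ε δ : ℝ} (hδ : 0 < δ) (hδ' : δ ≤ 1 / 100) (δ_le : δ ≤ ε) (hε' : ε < 1 / 2)
    {u : ℤ × ℤ → ℝ × ℝ} (hu : InS0 ε u) :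
    1 / 10 ^ 17 * min (δ ^ 2) (ε * (δ * √δ) * (|log (ε / √δ)| + 1)) ≤ E ε δ u := by
  have hε := hδ.trans_le δ_le
  rcases le_total (ε / √δ) (1 / 336 ^ 4) with ratio_le | ratio_ge
  · calc 1 / 10 ^ 17 * min (δ ^ 2) (ε * (δ * √δ) * (|log (ε / √δ)| + 1))
        ≤ 1 / 10 ^ 5 * (ε * (δ * √δ) * (|log (ε / √δ)| + 1)) :=
          mul_le_mul (by norm_num) (min_le_right _ _) (by positivity) (by norm_num)
      _ = ε * (δ * √δ) * (|log (ε / √δ)| + 1) / 10 ^ 5 := by ring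
      _ ≤ E ε δ u := mul_log_le_E hδ hδ' δ_le hε' ratio_le hu
  · calc 1 / 10 ^ 17 * min (δ ^ 2) (ε * (δ * √δ) * (|log (ε / √δ)| + 1))
        ≤ 1 / 336 ^ 4 / 10 ^ 6 * δ ^ 2 :=
          mul_le_mul (by norm_num) (min_le_left _ _) (by positivity) (by norm_num)
      _ = 1 / 336 ^ 4 * δ ^ 2 / 10 ^ 6 := by ring
      _ ≤ E ε δ u :=
          mul_sq_le_E hδ hδ' δ_le hε' (by norm_num) (by norm_num) ratio_ge hu

theorem scaling_law_periodic_general :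
    (∃ C : ℝ, 0 < C ∧ ∀ ε δ : ℝ, ε ∈ Set.Ioo (0 : ℝ) (1 / 2) → δ ∈ Set.Ioo (0 : ℝ) 1 →
      ∃ u : ℤ × ℤ → ℝ × ℝ, InS0per ε u ∧ E ε δ u ≤ C * sfun ε δ) ∧
    (∃ δbar ∈ Set.Ioo (0 : ℝ) 1, ∃ c : ℝ, 0 < c ∧
      (∀ ε ∈ Set.Ioo (0 : ℝ) (1 / 2), ∀ δ ∈ Set.Ico δbar 1,
        ∀ u : ℤ × ℤ → ℝ × ℝ, InS0 ε u → c * (ε * √δ) ≤ E ε δ u) ∧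
      (∀ δ ∈ Set.Ioo (0 : ℝ) δbar, ∀ ε ∈ Set.Ico δ (1 / 2),
        ∀ u : ℤ × ℤ → ℝ × ℝ, InS0 ε u →
          c * min (δ ^ 2) (ε * (δ * √δ) * (|log (ε / √δ)| + 1))
            ≤ E ε δ u)) := by
  refine ⟨⟨10 ^ 11, by norm_num, fun ε δ hε hδ => exists_inS0per_E_le hε.1 hε.2 hδ.1 hδ.2⟩,
    1 / 100, by norm_num, 1 / 10 ^ 17, by norm_num, fun ε hε δ hδ u hu => ?_,
    fun δ hδ ε hε u hu => mul_min_le_E hδ.1 hδ.2.le hε.1 hε.2 hu⟩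
  have scale_nonneg : 0 ≤ ε * √δ := mul_nonneg hε.1.le δ.sqrt_nonneg
  linarith [mul_sqrt_le_E hε.1 hε.2 hδ.1 hδ.2 hu]

/-- Theorem 6.1: scaling law with periodic boundary conditions. -/
theorem scaling_law_periodic :
    (∃ C : ℝ, 0 < C ∧ ∀ ε δ : ℝ, ε ∈ Set.Ioo (0 : ℝ) (1 / 2) → δ ∈ Set.Ioo (0 : ℝ) 1 →
      ∃ u : ℤ × ℤ → ℝ × ℝ, InS0per ε u ∧ E ε δ u ≤ C * sfun ε δ) ∧
    (∃ δbar ∈ Set.Ioo (0 : ℝ) 1, ∃ c : ℝ, 0 < c ∧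
      (∀ ε ∈ Set.Ioo (0 : ℝ) (1 / 2), ∀ δ ∈ Set.Ico δbar 1,
        ∀ u : ℤ × ℤ → ℝ × ℝ, InS0per ε u → c * (ε * Real.sqrt δ) ≤ E ε δ u) ∧
      (∀ δ ∈ Set.Ioo (0 : ℝ) δbar, ∀ ε ∈ Set.Ico δ (1 / 2),
        ∀ u : ℤ × ℤ → ℝ × ℝ, InS0per ε u →
          c * min (δ ^ 2) (ε * (δ * Real.sqrt δ) * (|Real.log (ε / Real.sqrt δ)| + 1))
            ≤ E ε δ u)) := by
  obtain ⟨upper, δbar, hδbar, c, c_pos, lower_large, lower_small⟩ := scaling_law_periodic_general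
  exact ⟨upper, δbar, hδbar, c, c_pos, fun ε hε δ hδ u hu => lower_large ε hε δ hδ u hu.1,
    fun δ hδ ε hε u hu => lower_small δ hδ ε hε u hu.1⟩
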